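/- For every integer u with -18 ≤ u ≤ -2 and every integer n ≥ 1, the generalised Laguerre polynomial L_n^{(u+1/2)}(x) is irreducible over ℚ. -/

import Mathlib

open Polynomial Finset

/-- The generalised Laguerre polynomial `L_n^{(α)}(x)` with `α = u + 1/2`, as a polynomial
over `ℚ`:  `L_n^{(α)}(x) = (-1)^n ∑_{j=0}^n C(n+α, n-j) (-x)^j / j!`, where
`C(n+α, n-j) = (∏_{i=j+1}^n (α+i))/(n-j)!`. -/
noncomputable def laguerre (n : ℕ) (u : ℤ) : Polynomial ℚ :=
  (-1 : ℚ) ^ n •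
    ∑ j ∈ Finset.range (n + 1),
      Polynomial.C ((∏ i ∈ Finset.Icc (j + 1) n, ((u : ℚ) + 1 / 2 + (i : ℚ))) /
          ((Nat.factorial (n - j) : ℚ) * (Nat.factorial j : ℚ))) * (-Polynomial.X) ^ j

/-- The odd integers `2 (u + 1/2 + i)`. -/
def cc (u : ℤ) (i : ℕ) : ℤ := 2 * (i : ℤ) + 2 * u + 1

/-- Coefficients of the monic integral model. -/
def co (u : ℤ) (n j : ℕ) : ℤ := (n.choose j : ℤ) * ∏ i ∈ Finset.Icc (j + 1) n, cc u i

/-- The monic integral model of the Laguerre polynomial. -/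
noncomputable def GG (u : ℤ) (n : ℕ) : ℤ[X] :=
  ∑ j ∈ Finset.range (n + 1), C (co u n j) * X ^ j

theorem co_zero_of_lt {u : ℤ} {n j : ℕ} (h : n < j) : co u n j = 0 := by
  simp [co, Nat.choose_eq_zero_of_lt h]

theorem coeff_GG (u : ℤ) (n j : ℕ) : (GG u n).coeff j = co u n j := by
  simp only [GG, finsetSum_coeff, coeff_C_mul, coeff_X_pow, mul_ite, mul_one, mul_zero]
  rw [Finset.sum_ite_eq]
  split_ifs with h
  · rfl
  · rw [co_zero_of_lt]; simpa [Nat.lt_succ_iff] using h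

theorem co_self (u : ℤ) (n : ℕ) : co u n n = 1 := by simp [co]

theorem GG_natDegree (u : ℤ) (n : ℕ) : (GG u n).natDegree = n := by
  apply natDegree_eq_of_le_of_coeff_ne_zero
  · rw [natDegree_le_iff_coeff_eq_zero]
    intro j hj
    rw [coeff_GG, co_zero_of_lt hj]
  · rw [coeff_GG, co_self]; norm_num

theorem GG_monic (u : ℤ) (n : ℕ) : (GG u n).Monic := by
  rw [Monic, leadingCoeff, GG_natDegree, coeff_GG, co_self]

theorem cc_ne_zero (u : ℤ) (i : ℕ) : cc u i ≠ 0 := by unfold cc; omega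

theorem cc_odd (u : ℤ) (i : ℕ) : ¬ (2:ℤ) ∣ cc u i := by unfold cc; omega

theorem co_ne_zero {u : ℤ} {n j : ℕ} (h : j ≤ n) : co u n j ≠ 0 := by
  unfold co
  apply mul_ne_zero
  · exact_mod_cast (Nat.choose_pos h).ne'
  · exact Finset.prod_ne_zero_iff.2 fun i _ => cc_ne_zero u i

/-- product split -/
theorem co_prod_split (u : ℤ) {n j : ℕ} (h : j ≤ n) :
    (∏ i ∈ Finset.Icc 1 j, cc u i) * (∏ i ∈ Finset.Icc (j + 1) n, cc u i)
      = ∏ i ∈ Finset.Icc 1 n, cc u i := by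
  have := Finset.prod_Ioc_consecutive (fun i => cc u i) (Nat.zero_le j) h
  have e1 : Finset.Ioc 0 j = Finset.Icc 1 j := by ext; simp [Nat.succ_le_iff]
  have e2 : Finset.Ioc j n = Finset.Icc (j+1) n := by ext; simp [Nat.succ_le_iff]
  have e3 : Finset.Ioc 0 n = Finset.Icc 1 n := by ext; simp [Nat.succ_le_iff]
  rw [e1, e2, e3] at this
  exact this

theorem prod_Icc_top (u : ℤ) {n j : ℕ} (h : j ≤ n) :
    ∏ i ∈ Finset.Icc (j + 1) (n + 1), cc u i = (∏ i ∈ Finset.Icc (j + 1) n, cc u i) * cc u (n + 1) := by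
  rw [Finset.prod_Icc_succ_top (by omega)]

theorem prod_Icc_bot (u : ℤ) {n j : ℕ} (h : j < n) :
    ∏ i ∈ Finset.Icc (j + 1) n, cc u i = cc u (j + 1) * ∏ i ∈ Finset.Icc (j + 1 + 1) n, cc u i := by
  rw [← Finset.prod_erase_mul (Finset.Icc (j+1) n) _ (a := j+1) (by simp only [Finset.mem_Icc]; omega), mul_comm]
  congr 1
  apply Finset.prod_congr _ (fun _ _ => rfl)
  ext x; simp only [Finset.mem_erase, Finset.mem_Icc]; omega

theorem co_rec_succ (u : ℤ) (n j : ℕ) :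
    co u (n + 2) (j + 1) = (4 * ((n : ℤ) + 2) - 1 + 2 * u) * co u (n + 1) (j + 1) + co u (n + 1) j
      - 2 * ((n : ℤ) + 1) * cc u (n + 1) * co u n (j + 1) := by
  rcases lt_trichotomy j n with h | h | h
  · unfold co
    rw [prod_Icc_top u (n := n+1) (j := j+1) (by omega), prod_Icc_top u (n := n) (j := j+1) (by omega),
      prod_Icc_bot u (n := n+1) (j := j) (by omega), prod_Icc_top u (n := n) (j := j+1) (by omega)]
    generalize ∏ i ∈ Finset.Icc (j + 1 + 1) n, cc u i = P
    have h1 : ((n+2).choose (j+1) : ℤ) = (n+1).choose j + (n+1).choose (j+1) := by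
      exact_mod_cast Nat.choose_succ_succ (n+1) j
    have h2 : ((n+1).choose (j+1) : ℤ) = n.choose j + n.choose (j+1) := by
      exact_mod_cast Nat.choose_succ_succ n j
    have h3 : ((n:ℤ)+1) * n.choose j = (n+1).choose j * ((n:ℤ) + 1 - j) := by
      have := Nat.add_one_mul_choose_eq n j
      have h4 := Nat.choose_succ_right_eq (n+1) j
      have : (n+1) * n.choose j = (n+1).choose j * (n+1-j) := by
        rw [← h4, this]
      zify [show j ≤ n+1 by omega] at this
      linarith
    rw [h1]
    unfold cc
    push_cast
    linear_combination (2 * (2 * ((n:ℤ)+1) + 2 * u + 1) * P) * (-h3) + 2 * ((n:ℤ)+1) * (2 * ((n:ℤ)+1) + 2 * u + 1) * P * (-h2)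
  · subst h
    rw [co_zero_of_lt (show j < j+1 by omega), co_self]
    unfold co cc
    simp
    ring
  · rcases Nat.lt_or_ge (n+1) j with h' | h'
    · rw [co_zero_of_lt, co_zero_of_lt, co_zero_of_lt, co_zero_of_lt] <;> first | omega | ring
    · have : j = n+1 := by omega
      subst this
      rw [co_zero_of_lt (show n < n+1+1 by omega), co_self, co_zero_of_lt (show n+1 < n+1+1 by omega),
        co_self]
      ring

theorem co_rec_zero (u : ℤ) (n : ℕ) :
    co u (n + 2) 0 = (4 * ((n : ℤ) + 2) - 1 + 2 * u) * co u (n + 1) 0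
      - 2 * ((n : ℤ) + 1) * cc u (n + 1) * co u n 0 := by
  unfold co
  rw [prod_Icc_top u (n := n+1) (j := 0) (by omega), prod_Icc_top u (n := n) (j := 0) (by omega)]
  simp only [Nat.choose_zero_right]
  unfold cc
  push_cast
  ring

theorem GG_rec (u : ℤ) (n : ℕ) :
    GG u (n + 2) = (C (4 * ((n : ℤ) + 2) - 1 + 2 * u) + X) * GG u (n + 1)
      - C (2 * ((n : ℤ) + 1) * cc u (n + 1)) * GG u n := by
  ext j
  rcases j with _ | j
  · rw [coeff_sub, add_mul, coeff_add, coeff_C_mul, coeff_C_mul, coeff_X_mul_zero]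
    simp only [coeff_GG]
    rw [co_rec_zero]; ring
  · rw [coeff_sub, add_mul, coeff_add, coeff_C_mul, coeff_C_mul, coeff_X_mul]
    simp only [coeff_GG]
    rw [co_rec_succ]

theorem GG_zero (u : ℤ) : GG u 0 = 1 := by simp [GG, co]
theorem GG_one (u : ℤ) : GG u 1 = C (cc u 1) + X := by
  simp [GG, co, Finset.sum_range_succ]

theorem laguerre_eq (n : ℕ) (u : ℤ) :
    laguerre n u = C ((-1 : ℚ) ^ n / (n.factorial * 2 ^ n)) *
      ((GG u n).map (algebraMap ℤ ℚ)).comp (C (-2) * X + C 0) := by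
  unfold laguerre GG
  rw [Polynomial.map_sum, Polynomial.sum_comp, smul_eq_C_mul, Finset.mul_sum, Finset.mul_sum]
  apply Finset.sum_congr rfl
  intro j hj
  have hjn : j ≤ n := by simpa [Nat.lt_succ_iff] using hj
  simp only [Polynomial.map_mul, Polynomial.map_pow, map_X, map_C, mul_comp, C_comp, pow_comp, X_comp,
    C_0, add_zero]
  have e1 : (-X : ℚ[X]) ^ j = C ((-1)^j) * X ^ j := by
    rw [show (-X : ℚ[X]) = C (-1) * X by simp, mul_pow, ← C_pow]
  rw [e1, mul_pow, ← C_pow]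
  have key : (-1 : ℚ) ^ n * ((∏ i ∈ Finset.Icc (j + 1) n, ((u : ℚ) + 1 / 2 + (i : ℚ))) /
          ((Nat.factorial (n - j) : ℚ) * (Nat.factorial j : ℚ)) * (-1) ^ j)
      = (-1 : ℚ) ^ n / (n.factorial * 2 ^ n) * ((algebraMap ℤ ℚ) (co u n j) * (-2) ^ j) := by
    have e2 : (algebraMap ℤ ℚ) (co u n j) = (n.choose j : ℚ) *
        (2 ^ (n - j) * ∏ i ∈ Finset.Icc (j + 1) n, ((u : ℚ) + 1 / 2 + (i : ℚ))) := by
      have : ∏ i ∈ Finset.Icc (j + 1) n, ((cc u i : ℤ) : ℚ) =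
          2 ^ (n - j) * ∏ i ∈ Finset.Icc (j + 1) n, ((u : ℚ) + 1 / 2 + (i : ℚ)) := by
        have hc : (Finset.Icc (j+1) n).card = n - j := by simp
        rw [← hc, ← Finset.prod_const, ← Finset.prod_mul_distrib]
        apply Finset.prod_congr rfl
        intro i _
        unfold cc; push_cast; ring
      unfold co
      simp only [eq_intCast, Int.cast_mul, Int.cast_natCast, Int.cast_prod]
      rw [this]
    rw [e2]
    have h3 : (n.choose j : ℚ) = n.factorial / (j.factorial * (n-j).factorial) := Nat.cast_choose ℚ hjn
    have h4 : (2:ℚ)^n = 2^(n-j) * 2^j := by rw [← pow_add]; congr 1; omega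
    have h5 : (-2:ℚ)^j = (-1)^j * 2^j := by rw [← mul_pow]; norm_num
    rw [h3, h4, h5]
    have := n.factorial_ne_zero
    have := j.factorial_ne_zero
    have := (n-j).factorial_ne_zero
    field_simp
  have e := congrArg C key
  simp only [C_mul] at e ⊢
  linear_combination (X^j) * e

theorem laguerre_irreducible_of (n : ℕ) (u : ℤ) (h : Irreducible (GG u n)) :
    Irreducible (laguerre n u) := by
  rw [laguerre_eq]
  have h1 : Irreducible ((GG u n).map (algebraMap ℤ ℚ)) :=
    ((GG_monic u n).irreducible_iff_irreducible_map_fraction_map (K := ℚ)).1 h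
  have h2 : IsUnit (C ((-1 : ℚ) ^ n / (n.factorial * 2 ^ n))) := by
    rw [isUnit_C, isUnit_iff_ne_zero]
    have := n.factorial_ne_zero
    positivity
  rw [irreducible_isUnit_mul h2]
  haveI : Invertible (-2 : ℚ) := invertibleOfNonzero (by norm_num)
  have := (MulEquiv.irreducible_iff (algEquivCMulXAddC (-2 : ℚ) 0).toMulEquiv
    (x := (GG u n).map (algebraMap ℤ ℚ))).2 h1
  simpa [algEquivCMulXAddC, comp, aeval_def, eval₂_eq_eval_map] using this

/-- A factorisation of the model with a factor of degree `k`. -/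
structure Fac (u : ℤ) (n k : ℕ) (g h : ℤ[X]) : Prop where
  mg : g.Monic
  mh : h.Monic
  eq : g * h = GG u n
  deg : g.natDegree = k

theorem GG_irreducible_of (n : ℕ) (hn : 1 ≤ n) (u : ℤ)
    (H : ∀ k g h, 1 ≤ k → 2 * k ≤ n → ¬ Fac u n k g h) : Irreducible (GG u n) := by
  rw [(GG_monic u n).irreducible_iff_natDegree']
  refine ⟨?_, ?_⟩
  · intro h
    have := GG_natDegree u n
    rw [h] at this
    simp at this; omega
  · intro f g hf hg hfg hmem
    rw [Finset.mem_Ioc, GG_natDegree] at hmem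
    exact H g.natDegree g f (by omega) (by omega) ⟨hg, hf, by rw [mul_comm, hfg], rfl⟩

theorem Fac.degh {u : ℤ} {n k : ℕ} {g h : ℤ[X]} (F : Fac u n k g h) : h.natDegree + k = n := by
  have := F.mg.natDegree_mul F.mh
  rw [F.eq, GG_natDegree, F.deg] at this
  omega

/-- weight of a coefficient -/
def wt (p a b : ℕ) (f : ℤ[X]) (j : ℕ) : ℕ := b * padicValInt p (f.coeff j) + a * j

structure Pt (p a b : ℕ) (f : ℤ[X]) (w i l : ℕ) : Prop where
  lb : ∀ j, f.coeff j ≠ 0 → w ≤ wt p a b f j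
  ni : f.coeff i ≠ 0
  ei : wt p a b f i = w
  nl : f.coeff l ≠ 0
  el : wt p a b f l = w
  lo : ∀ j, f.coeff j ≠ 0 → j < i → w < wt p a b f j
  hi : ∀ j, f.coeff j ≠ 0 → l < j → w < wt p a b f j

theorem Pt.exists (p a b : ℕ) {f : ℤ[X]} (hf : f ≠ 0) : ∃ w i l, Pt p a b f w i l := by
  obtain ⟨j0, hj0, hmin⟩ := f.support.exists_min_image (wt p a b f) (by simpa using hf)
  set w := wt p a b f j0 with hw
  set S := f.support.filter (fun j => wt p a b f j = w) with hS
  have hne : S.Nonempty := ⟨j0, by simp only [hS, Finset.mem_filter]; exact ⟨hj0, hw.symm⟩⟩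
  have hi := S.min'_mem hne
  have hl := S.max'_mem hne
  have hi2 := (Finset.mem_filter.1 hi)
  have hl2 := (Finset.mem_filter.1 hl)
  refine ⟨w, S.min' hne, S.max' hne, ?_, by simpa using hi2.1, hi2.2, by simpa using hl2.1, hl2.2, ?_, ?_⟩
  · intro j hj; exact hmin j (by simpa using hj)
  · intro j hj hlt
    refine lt_of_le_of_ne (hmin j (by simpa using hj)) fun he => ?_
    have : j ∈ S := by simp only [hS, Finset.mem_filter]; exact ⟨by simpa using hj, he.symm⟩
    exact absurd (S.min'_le j this) (by omega)
  · intro j hj hlt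
    refine lt_of_le_of_ne (hmin j (by simpa using hj)) fun he => ?_
    have : j ∈ S := by simp only [hS, Finset.mem_filter]; exact ⟨by simpa using hj, he.symm⟩
    exact absurd (S.le_max' j this) (by omega)

theorem Pt.unique {p a b : ℕ} {f : ℤ[X]} {w i l w' i' l' : ℕ} (h : Pt p a b f w i l)
    (h' : Pt p a b f w' i' l') : w = w' ∧ i = i' ∧ l = l' := by
  have hw : w = w' := by
    have h1 := h.lb i' h'.ni
    have h2 := h'.lb i h.ni
    rw [h'.ei] at h1; rw [h.ei] at h2; omega
  subst hw
  refine ⟨rfl, ?_, ?_⟩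
  · rcases lt_trichotomy i i' with hh | hh | hh
    · have := h'.lo i h.ni hh; rw [h.ei] at this; omega
    · exact hh
    · have := h.lo i' h'.ni hh; rw [h'.ei] at this; omega
  · rcases lt_trichotomy l l' with hh | hh | hh
    · have := h.hi l' h'.nl hh; rw [h'.el] at this; omega
    · exact hh
    · have := h'.hi l h.nl hh; rw [h.el] at this; omega

section
variable {p : ℕ} [hp : Fact p.Prime]

theorem wt_mul_lb {a b : ℕ} {g h : ℤ[X]} {m T : ℕ}
    (H : ∀ x y, x + y = m → g.coeff x ≠ 0 → h.coeff y ≠ 0 → T ≤ wt p a b g x + wt p a b h y)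
    (hm : (g * h).coeff m ≠ 0) : T ≤ wt p a b (g * h) m := by
  by_contra hlt
  push Not at hlt
  unfold wt at hlt
  have hd : (p : ℤ) ^ (padicValInt p ((g * h).coeff m) + 1) ∣ (g * h).coeff m := by
    conv_rhs => rw [coeff_mul]
    apply Finset.dvd_sum
    rintro ⟨x, y⟩ hxy
    rw [Finset.HasAntidiagonal.mem_antidiagonal] at hxy
    simp only at hxy ⊢
    by_cases hgx : g.coeff x = 0
    · simp [hgx]
    by_cases hhy : h.coeff y = 0
    · simp [hhy]
    rw [padicValInt_dvd_iff]
    right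
    rw [padicValInt.mul hgx hhy]
    have := H x y hxy hgx hhy
    unfold wt at this
    by_contra hcon
    push Not at hcon
    have h1 : b * (padicValInt p (g.coeff x) + padicValInt p (h.coeff y))
        ≤ b * padicValInt p ((g*h).coeff m) := Nat.mul_le_mul_left b (by omega)
    have h2 : a * m = a * x + a * y := by rw [← hxy]; ring
    rw [mul_add] at h1
    omega
  rw [padicValInt_dvd_iff] at hd
  rcases hd with hd | hd
  · exact hm hd
  · omega

theorem wt_mul_eq {a b : ℕ} {g h : ℤ[X]} {x0 y0 : ℕ} (hg : g.coeff x0 ≠ 0) (hh : h.coeff y0 ≠ 0)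
    (H : ∀ x y, x + y = x0 + y0 → x ≠ x0 → g.coeff x ≠ 0 → h.coeff y ≠ 0 →
      wt p a b g x0 + wt p a b h y0 < wt p a b g x + wt p a b h y) :
    (g * h).coeff (x0 + y0) ≠ 0 ∧ wt p a b (g * h) (x0 + y0) = wt p a b g x0 + wt p a b h y0 := by
  set V := padicValInt p (g.coeff x0) + padicValInt p (h.coeff y0) with hV
  have hnd : ¬ (p : ℤ) ^ (V + 1) ∣ (g * h).coeff (x0 + y0) := by
    have hmem : (x0, y0) ∈ Finset.HasAntidiagonal.antidiagonal (x0 + y0) := by simp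
    rw [coeff_mul, ← Finset.add_sum_erase _ _ hmem]
    have hrest : (p : ℤ) ^ (V + 1) ∣ ∑ x ∈ (Finset.HasAntidiagonal.antidiagonal (x0 + y0)).erase (x0, y0),
        g.coeff x.1 * h.coeff x.2 := by
      apply Finset.dvd_sum
      rintro ⟨x, y⟩ hxy
      rw [Finset.mem_erase, Finset.HasAntidiagonal.mem_antidiagonal] at hxy
      obtain ⟨hne, hxy⟩ := hxy
      simp only at hxy ⊢
      have hx : x ≠ x0 := by
        rintro rfl
        apply hne
        simp; omega
      by_cases hgx : g.coeff x = 0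
      · simp [hgx]
      by_cases hhy : h.coeff y = 0
      · simp [hhy]
      rw [padicValInt_dvd_iff]
      right
      rw [padicValInt.mul hgx hhy]
      have := H x y hxy hx hgx hhy
      unfold wt at this
      by_contra hcon
      push Not at hcon
      have h1 : b * (padicValInt p (g.coeff x) + padicValInt p (h.coeff y)) ≤ b * V :=
        Nat.mul_le_mul_left b (by omega)
      have h2 : a * x0 + a * y0 = a * x + a * y := by rw [← mul_add, ← mul_add, hxy]
      rw [mul_add, hV, mul_add] at h1
      omega
    intro hcon
    have := (dvd_add_left hrest).1 hcon
    simp only at this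
    rw [padicValInt_dvd_iff, padicValInt.mul hg hh] at this
    rcases this with h1 | h1
    · exact (mul_ne_zero hg hh) h1
    · omega
  have hne : (g * h).coeff (x0 + y0) ≠ 0 := by
    intro h0; apply hnd; rw [h0]; simp
  refine ⟨hne, le_antisymm ?_ ?_⟩
  · rw [padicValInt_dvd_iff] at hnd
    push Not at hnd
    have h1 : b * padicValInt p ((g*h).coeff (x0+y0)) ≤ b * V := Nat.mul_le_mul_left b (by omega)
    unfold wt
    rw [hV, mul_add] at h1
    rw [mul_add]; omega
  · apply wt_mul_lb _ hne
    intro x y hxy hgx hhy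
    by_cases hx : x = x0
    · have : y = y0 := by omega
      rw [hx, this]
    · exact (H x y hxy hx hgx hhy).le

theorem Pt.mul {a b : ℕ} {g h : ℤ[X]} {w1 i1 l1 w2 i2 l2 : ℕ}
    (Pg : Pt p a b g w1 i1 l1) (Ph : Pt p a b h w2 i2 l2) :
    Pt p a b (g * h) (w1 + w2) (i1 + i2) (l1 + l2) := by
  have hi := wt_mul_eq (p := p) (a := a) (b := b) Pg.ni Ph.ni (by
    intro x y hxy hx hgx hhy
    rw [Pg.ei, Ph.ei]
    have h1 := Pg.lb x hgx
    have h2 := Ph.lb y hhy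
    rcases Nat.lt_or_ge x i1 with h | h
    · have := Pg.lo x hgx h; omega
    · have := Ph.lo y hhy (by omega); omega)
  have hl := wt_mul_eq (p := p) (a := a) (b := b) Pg.nl Ph.nl (by
    intro x y hxy hx hgx hhy
    rw [Pg.el, Ph.el]
    have h1 := Pg.lb x hgx
    have h2 := Ph.lb y hhy
    rcases Nat.lt_or_ge l1 x with h | h
    · have := Pg.hi x hgx h; omega
    · have := Ph.hi y hhy (by omega); omega)
  rw [Pg.ei, Ph.ei] at hi
  rw [Pg.el, Ph.el] at hl
  refine ⟨?_, hi.1, hi.2, hl.1, hl.2, ?_, ?_⟩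
  · intro j hj
    exact wt_mul_lb (fun x y _ hx hy => add_le_add (Pg.lb x hx) (Ph.lb y hy)) hj
  · intro j hj hlt
    refine wt_mul_lb (T := w1 + w2 + 1) (fun x y hxy hx hy => ?_) hj
    have h1 := Pg.lb x hx
    have h2 := Ph.lb y hy
    rcases Nat.lt_or_ge x i1 with h | h
    · have := Pg.lo x hx h; omega
    · have := Ph.lo y hy (by omega); omega
  · intro j hj hlt
    refine wt_mul_lb (T := w1 + w2 + 1) (fun x y hxy hx hy => ?_) hj
    have h1 := Pg.lb x hx
    have h2 := Ph.lb y hy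
    rcases Nat.lt_or_ge l1 x with h | h
    · have := Pg.hi x hx h; omega
    · have := Ph.hi y hy (by omega); omega

variable {u : ℤ} {n k : ℕ} {g h : ℤ[X]}

theorem Fac.coeff0 (F : Fac u n k g h) : g.coeff 0 * h.coeff 0 = co u n 0 := by
  rw [← coeff_GG, ← F.eq, mul_coeff_zero]

theorem Fac.g0 (F : Fac u n k g h) : g.coeff 0 ≠ 0 := by
  intro h0
  have := F.coeff0
  rw [h0, zero_mul] at this
  exact co_ne_zero (Nat.zero_le n) this.symm

theorem Fac.h0 (F : Fac u n k g h) : h.coeff 0 ≠ 0 := by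
  intro h0
  have := F.coeff0
  rw [h0, mul_zero] at this
  exact co_ne_zero (Nat.zero_le n) this.symm

/-- Bound on the valuation of the constant coefficient of a factor. -/
theorem Fac.val_bound (F : Fac u n k g h) (a b A : ℕ)
    (H : ∀ j ≤ n, b * padicValInt p (co u n 0) ≤ A + a * j + b * padicValInt p (co u n j)) :
    b * padicValInt p (g.coeff 0) ≤ A + a * k := by
  obtain ⟨w1, i1, l1, P1⟩ := Pt.exists p a b F.mg.ne_zero
  obtain ⟨w2, i2, l2, P2⟩ := Pt.exists p a b F.mh.ne_zero
  have P := P1.mul P2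
  have e := P.ei
  have hne := P.ni
  rw [F.eq, coeff_GG] at hne
  have hle : i1 + i2 ≤ n := by
    by_contra hcon
    exact hne (co_zero_of_lt (by omega))
  rw [F.eq] at e
  unfold wt at e
  rw [coeff_GG] at e
  have h1 := H _ hle
  have h2 := P1.lb k (by rw [← F.deg, F.mg.coeff_natDegree]; norm_num)
  have h3 := P2.lb 0 F.h0
  unfold wt at h2 h3
  rw [← F.deg, F.mg.coeff_natDegree, F.deg, padicValInt.one] at h2
  rw [← F.coeff0, padicValInt.mul F.g0 F.h0, mul_add] at h1
  omega

/-- Strict pointwise version. -/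
theorem Fac.not_dvd (F : Fac u n k g h) (hk : 1 ≤ k)
    (H : ∀ j, 1 ≤ j → j ≤ n →
      k * padicValInt p (co u n 0) < j + k * padicValInt p (co u n j)) :
    ¬ (p : ℤ) ∣ g.coeff 0 := by
  rcases Nat.eq_zero_or_pos n with hn | hn
  · have := F.degh; omega
  have hb := F.val_bound (p := p) (n - 1) (k * n) 0 (by
    intro j hj
    rcases Nat.eq_zero_or_pos j with h0 | h0
    · subst h0; omega
    have h1 := H j h0 hj
    obtain ⟨m, rfl⟩ : ∃ m, n = m + 1 := ⟨n - 1, by omega⟩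
    simp only [Nat.add_sub_cancel]
    generalize padicValInt p (co u (m+1) 0) = A at *
    generalize padicValInt p (co u (m+1) j) = B at *
    nlinarith [Nat.mul_le_mul_left (m+1) (Nat.succ_le_of_lt h1)])
  intro hd
  have h1 : 1 ≤ padicValInt p (g.coeff 0) := by
    have := (padicValInt_dvd_iff (p := p) 1 (g.coeff 0)).1 (by simpa using hd)
    rcases this with h | h
    · exact absurd h F.g0
    · exact h
  have h2 : k * n * 1 ≤ k * n * padicValInt p (g.coeff 0) := Nat.mul_le_mul_left _ h1
  obtain ⟨m, rfl⟩ : ∃ m, n = m + 1 := ⟨n - 1, by omega⟩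
  simp only [Nat.add_sub_cancel] at hb
  nlinarith

/-- If `p` divides all low coefficients but not `g(0)`, contradiction. -/
theorem Fac.good_contra (F : Fac u n k g h) (hg : ¬ (p : ℤ) ∣ g.coeff 0)
    (H : ∀ j, j + k ≤ n → (p : ℤ) ∣ co u n j) : False := by
  obtain ⟨w1, i1, l1, P1⟩ := Pt.exists p 0 1 F.mg.ne_zero
  obtain ⟨w2, i2, l2, P2⟩ := Pt.exists p 0 1 F.mh.ne_zero
  have P := P1.mul P2
  have hv0 : padicValInt p (g.coeff 0) = 0 := padicValInt.eq_zero_of_not_dvd hg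
  have hw1 : w1 = 0 := by
    have := P1.lb 0 F.g0
    unfold wt at this; omega
  have hi1 : i1 = 0 := by
    by_contra hcon
    have := P1.lo 0 F.g0 (by omega)
    unfold wt at this; omega
  have hdh := F.degh
  have hlead : h.coeff h.natDegree = 1 := F.mh.coeff_natDegree
  have hw2 : w2 = 0 := by
    have := P2.lb h.natDegree (by rw [hlead]; norm_num)
    unfold wt at this
    rw [hlead, padicValInt.one] at this; omega
  have hi2 : i2 ≤ h.natDegree := by
    by_contra hcon
    exact P2.ni (coeff_eq_zero_of_natDegree_lt (by omega))
  have e := P.ei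
  have hne := P.ni
  rw [F.eq] at e hne
  unfold wt at e
  rw [coeff_GG] at e hne
  have hd := H (i1 + i2) (by omega)
  have := (padicValInt_dvd_iff (p := p) 1 (co u n (i1+i2))).1 (by simpa using hd)
  rcases this with h | h
  · exact hne h
  · omega

/-- Single edge criterion. -/
theorem Fac.edge (F : Fac u n k g h) {a b w i l : ℕ} (hab : Nat.Coprime a b)
    (P : Pt p a b (GG u n) w i l) :
    ∃ x t z, x ≤ i ∧ b * t ≤ l - i ∧ z ≤ n - l ∧ k = x + b * t + z := by
  obtain ⟨w1, i1, l1, P1⟩ := Pt.exists p a b F.mg.ne_zero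
  obtain ⟨w2, i2, l2, P2⟩ := Pt.exists p a b F.mh.ne_zero
  have P' := P1.mul P2
  rw [F.eq] at P'
  obtain ⟨-, hi, hl⟩ := P.unique P'
  have aux : ∀ {f : ℤ[X]} {w i l : ℕ}, Pt p a b f w i l → i ≤ l := by
    intro f w i l P
    by_contra hcon
    have := P.hi i P.ni (by omega)
    rw [P.ei] at this; omega
  have h1 := aux P1
  have h2 := aux P2
  have hdvd : b ∣ l1 - i1 := by
    have e1 := P1.ei
    have e2 := P1.el
    unfold wt at e1 e2
    have : b ∣ a * (l1 - i1) := by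
      have e3 : a * (l1 - i1) = a * l1 - a * i1 := Nat.mul_sub a l1 i1
      have e4 : a * l1 - a * i1 = b * padicValInt p (g.coeff i1) - b * padicValInt p (g.coeff l1) := by
        have : a * i1 ≤ a * l1 := Nat.mul_le_mul_left a h1
        omega
      rw [e3, e4, ← Nat.mul_sub]
      exact dvd_mul_right _ _
    exact (Nat.Coprime.symm hab).dvd_of_dvd_mul_left this
  obtain ⟨t, ht⟩ := hdvd
  have hk1 : l1 ≤ k := by
    by_contra hcon
    exact P1.nl (coeff_eq_zero_of_natDegree_lt (by rw [F.deg]; omega))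
  have hk2 : l2 ≤ h.natDegree := by
    by_contra hcon
    exact P2.nl (coeff_eq_zero_of_natDegree_lt (by omega))
  have := F.degh
  exact ⟨i1, t, k - l1, by omega, by omega, by omega, by omega⟩

end

/-- valuation of the product of the first `m` odd numbers -/
def vd (p m : ℕ) : ℕ := ∑ i ∈ Finset.range m, padicValNat p (2 * i + 1)

/-- valuation of `c_1 ⋯ c_j` -/
def vS (u : ℤ) (p j : ℕ) : ℕ := ∑ i ∈ Finset.range j, padicValInt p (cc u (i + 1))

section
variable {p : ℕ} [hp : Fact p.Prime]

theorem vd_succ (m : ℕ) : vd p (m + 1) = vd p m + padicValNat p (2 * m + 1) := by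
  unfold vd; rw [Finset.sum_range_succ]

theorem vd_rec (hodd : p % 2 = 1) (m : ℕ) :
    vd p m = (2 * m + p - 1) / (2 * p) + vd p ((2 * m + p - 1) / (2 * p)) := by
  have hp0 : 0 < p := hp.out.pos
  induction m with
  | zero =>
    have : (2 * 0 + p - 1) / (2 * p) = 0 := Nat.div_eq_of_lt (by omega)
    rw [this]; simp [vd]
  | succ m ih =>
    rw [vd_succ]
    by_cases hd : p ∣ 2 * m + 1
    · obtain ⟨s, hs⟩ := hd
      have hs2 : s % 2 = 1 := by
        rcases Nat.mod_two_eq_zero_or_one s with h | h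
        · exfalso
          obtain ⟨r, rfl⟩ : ∃ r, s = 2 * r := ⟨s / 2, by omega⟩
          have : p * (2 * r) = 2 * (p * r) := by ring
          omega
        · exact h
      obtain ⟨t, rfl⟩ : ∃ t, s = 2 * t + 1 := ⟨s / 2, by omega⟩
      have e1 : (2 * m + p - 1) / (2 * p) = t := by
        rw [Nat.div_eq_iff (by omega)]
        have : p * (2 * t + 1) = t * (2 * p) + p := by ring
        omega
      have e2 : (2 * (m + 1) + p - 1) / (2 * p) = t + 1 := by
        rw [Nat.div_eq_iff (by omega)]
        have : p * (2 * t + 1) = t * (2 * p) + p := by ring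
        have h3 : (t + 1) * (2 * p) = t * (2 * p) + 2 * p := by ring
        omega
      rw [e1] at ih
      rw [e2, vd_succ, ih, hs, padicValNat.mul hp0.ne' (by omega), padicValNat_self]
      omega
    · have e : (2 * (m + 1) + p - 1) / (2 * p) = (2 * m + p - 1) / (2 * p) := by
        set q := (2 * m + p - 1) / (2 * p) with hq
        have h1 : q * (2 * p) ≤ 2 * m + p - 1 := Nat.div_mul_le_self _ _
        have h2 : 2 * m + p - 1 < (q + 1) * (2 * p) := by
          rw [add_mul, one_mul]
          have := Nat.div_add_mod (2 * m + p - 1) (2 * p)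
          have h3 := Nat.mod_lt (2 * m + p - 1) (show 0 < 2 * p by omega)
          rw [← hq, mul_comm] at this
          omega
        rw [Nat.div_eq_iff (by omega)]
        have h4 : (q + 1) * (2 * p) = 2 * ((q + 1) * p) := by ring
        have h5 : q * (2 * p) = 2 * (q * p) := by ring
        have h6 : (q + 1) * p = q * p + p := by ring
        refine ⟨by omega, ?_⟩
        by_contra hcon
        apply hd
        refine ⟨2 * q + 1, ?_⟩
        have : p * (2 * q + 1) = 2 * (q * p) + p := by ring
        omega
      rw [e, padicValNat.eq_zero_of_not_dvd hd, ← ih]; omega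

theorem vd_le (hodd : p % 2 = 1) (m : ℕ) (hm : 1 ≤ m) : (p - 1) * vd p m + 1 ≤ 2 * m := by
  have hp3 : 3 ≤ p := by
    have := hp.out.two_le
    omega
  induction m using Nat.strong_induction_on with
  | _ m ih =>
    rw [vd_rec hodd]
    set N := (2 * m + p - 1) / (2 * p) with hN
    have h1 : N * (2 * p) ≤ 2 * m + p - 1 := Nat.div_mul_le_self _ _
    rcases Nat.eq_zero_or_pos N with h0 | h0
    · rw [h0]; simp [vd]; omega
    · have hlt : N < m := by
        by_contra hcon
        have : m * (2 * p) ≤ N * (2 * p) := Nat.mul_le_mul_right _ (by omega)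
        have h2 : m * (2 * p) = 2 * m + 2 * m * (p - 1) := by
          obtain ⟨r, rfl⟩ : ∃ r, p = r + 1 := ⟨p - 1, by omega⟩
          simp; ring
        have h3 : 1 * (p - 1) ≤ m * (p-1) := Nat.mul_le_mul_right _ (by omega)
        have h4 : 2 * m * (p - 1) = 2 * (m * (p-1)) := by ring
        omega
      have := ih N hlt h0
      obtain ⟨r, rfl⟩ : ∃ r, p = r + 1 := ⟨p - 1, by omega⟩
      simp only [Nat.add_sub_cancel] at *
      clear_value N
      obtain ⟨M, rfl⟩ : ∃ M, N = M + 1 := ⟨N - 1, by omega⟩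
      rw [mul_add]
      have h5 : (M + 1) * (2 * (r + 1)) = 2 * M * r + 2 * M + 2 * r + 2 := by ring
      have h6 : r * (M + 1) = M * r + r := by ring
      have h7 : 2 * m + (r + 1) - 1 = 2 * m + r := by omega
      have h8 : M ≤ M * r := Nat.le_mul_of_pos_right M (by omega)
      have h9 : 2 * M * r = M * r + M * r := by ring
      omega

theorem vd_le2 (hodd : p % 2 = 1) (m : ℕ) :
    2 * p ^ 2 * (p - 1) * vd p m + p ^ 2 + 1 ≤ 2 * (p ^ 2 + 1) * m + 2 * p ^ 3 := by
  have hp3 : 3 ≤ p := by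
    have := hp.out.two_le
    omega
  rw [vd_rec hodd, vd_rec hodd ((2 * m + p - 1) / (2 * p))]
  set N := (2 * m + p - 1) / (2 * p) with hN
  set N2 := (2 * N + p - 1) / (2 * p) with hN2
  have h1 : N * (2 * p) ≤ 2 * m + p - 1 := Nat.div_mul_le_self _ _
  have h2 : N2 * (2 * p) ≤ 2 * N + p - 1 := Nat.div_mul_le_self _ _
  have h3 : (p - 1) * vd p N2 ≤ 2 * N2 := by
    rcases Nat.eq_zero_or_pos N2 with h0 | h0
    · rw [h0]; simp [vd]
    · have := vd_le hodd N2 h0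
      omega
  obtain ⟨r, rfl⟩ : ∃ r, p = r + 1 := ⟨p - 1, by omega⟩
  simp only [Nat.add_sub_cancel] at *
  have h1' : N * (2 * (r + 1)) ≤ 2 * m + r := by omega
  have h2' : N2 * (2 * (r + 1)) ≤ 2 * N + r := by omega
  generalize vd (r+1) N2 = v at *
  clear_value N N2
  zify at *
  have e : (2:ℤ) * (r + 1) ^ 2 * r * (N + (N2 + v)) ≤
      (r+1) * r * (2 * m + r) + (r + 1) ^ 2 * 2 * r * N2 + 2 * (r+1)^2 * (2 * N2) := by
    have a1 : (r + 1 : ℤ) * r * (N * (2 * (r + 1))) ≤ (r+1) * r * (2 * m + r) :=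
      mul_le_mul_of_nonneg_left h1' (by positivity)
    have a2 : 2 * (r + 1 : ℤ)^2 * (r * v) ≤ 2 * (r+1)^2 * (2 * N2) :=
      mul_le_mul_of_nonneg_left h3 (by positivity)
    nlinarith
  have b1 : (2:ℤ) * (r+1)^2 * N2 ≤ 2 * m + r + (r + 1) * r := by nlinarith
  have b2 : ((r:ℤ) + 2) * (2 * (r+1)^2 * N2) ≤ (r + 2) * (2 * m + r + (r + 1) * r) :=
    mul_le_mul_of_nonneg_left b1 (by positivity)
  nlinarith

theorem vS_succ (u : ℤ) (j : ℕ) : vS u p (j + 1) = vS u p j + padicValInt p (cc u (j + 1)) := by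
  unfold vS; rw [Finset.sum_range_succ]

theorem vS_eq_small (U j : ℕ) (hU : 1 ≤ U) (hj : j ≤ U - 1) :
    vS (-(U : ℤ)) p j + vd p (U - 1 - j) = vd p (U - 1) := by
  induction j with
  | zero => simp [vS]
  | succ j ih =>
    have h1 := ih (by omega)
    rw [vS_succ]
    obtain ⟨t, ht⟩ : ∃ t, U - 1 - j = t + 1 := ⟨U - 1 - j - 1, by omega⟩
    have e : U - 1 - (j + 1) = t := by omega
    rw [ht, vd_succ] at h1
    rw [e]
    have : padicValInt p (cc (-(U:ℤ)) (j + 1)) = padicValNat p (2 * t + 1) := by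
      unfold padicValInt cc
      congr 1
      push_cast
      omega
    omega

theorem vS_eq_large (U m : ℕ) (hU : 1 ≤ U) :
    vS (-(U : ℤ)) p (U - 1 + m) = vd p (U - 1) + vd p m := by
  induction m with
  | zero =>
    have := vS_eq_small (p := p) U (U - 1) hU le_rfl
    simpa [vd] using this
  | succ m ih =>
    rw [← add_assoc, vS_succ, vd_succ, ih]
    have : padicValInt p (cc (-(U:ℤ)) (U - 1 + m + 1)) = padicValNat p (2 * m + 1) := by
      unfold padicValInt cc
      congr 1
      push_cast
      omega
    omega

theorem co_val (u : ℤ) {n j : ℕ} (hj : j ≤ n) :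
    padicValInt p (co u n 0) + padicValNat p (n.choose j) = vS u p j + padicValInt p (co u n j) := by
  have hprod : ∀ j, padicValInt p (∏ i ∈ Finset.Icc 1 j, cc u i) = vS u p j := by
    intro j
    induction j with
    | zero => simp [vS]
    | succ j ih =>
      rw [Finset.prod_Icc_succ_top (by omega), padicValInt.mul _ (cc_ne_zero _ _), ih, vS_succ]
      exact Finset.prod_ne_zero_iff.2 fun i _ => cc_ne_zero u i
  have e0 : co u n 0 = (∏ i ∈ Finset.Icc 1 j, cc u i) * (∏ i ∈ Finset.Icc (j + 1) n, cc u i) := by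
    rw [co_prod_split u hj]; simp [co]
  have hn1 : (∏ i ∈ Finset.Icc 1 j, cc u i) ≠ 0 :=
    Finset.prod_ne_zero_iff.2 fun i _ => cc_ne_zero u i
  have hn2 : (∏ i ∈ Finset.Icc (j+1) n, cc u i) ≠ 0 :=
    Finset.prod_ne_zero_iff.2 fun i _ => cc_ne_zero u i
  rw [e0, padicValInt.mul hn1 hn2, hprod]
  unfold co
  rw [padicValInt.mul (by exact_mod_cast (Nat.choose_pos hj).ne') hn2, padicValInt.of_nat]
  omega

theorem Fac.val_bound' {u : ℤ} {n k : ℕ} {g h : ℤ[X]} (F : Fac u n k g h) (a b A : ℕ)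
    (H : ∀ j, 1 ≤ j → b * vS u p j ≤ A + a * j) :
    b * padicValInt p (g.coeff 0) ≤ A + a * k := by
  apply F.val_bound a b A
  intro j hj
  rcases Nat.eq_zero_or_pos j with h0 | h0
  · subst h0; omega
  have h1 := H j h0
  have h2 := co_val (p := p) u hj
  have h3 : b * padicValInt p (co u n 0) ≤ b * (vS u p j + padicValInt p (co u n j)) :=
    Nat.mul_le_mul_left b (by omega)
  rw [mul_add] at h3
  omega

theorem Fac.not_dvd' {u : ℤ} {n k : ℕ} {g h : ℤ[X]} (F : Fac u n k g h) (hk : 1 ≤ k)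
    (H : ∀ j, 1 ≤ j → j ≤ n → k * vS u p j < j + k * padicValNat p (n.choose j)) :
    ¬ (p : ℤ) ∣ g.coeff 0 := by
  apply F.not_dvd hk
  intro j h0 hj
  have h1 := H j h0 hj
  have h2 := co_val (p := p) u hj
  have h3 : k * (padicValInt p (co u n 0) + padicValNat p (n.choose j)) =
    k * (vS u p j + padicValInt p (co u n j)) := by rw [h2]
  rw [mul_add, mul_add] at h3
  omega

/-- Divisibility of the low coefficients. -/
theorem dvd_co_of_dvd_cc {u : ℤ} {n k l : ℕ} (hl : l < k) (hd : (p : ℤ) ∣ cc u (n - l))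
    {j : ℕ} (hj : j + k ≤ n) : (p : ℤ) ∣ co u n j := by
  unfold co
  apply Dvd.dvd.mul_left
  exact hd.trans (Finset.dvd_prod_of_mem _ (by simp only [Finset.mem_Icc]; omega))

theorem dvd_prod_cc (hodd : p % 2 = 1) {u : ℤ} {n j : ℕ} (h : j + p ≤ n) :
    (p : ℤ) ∣ ∏ i ∈ Finset.Icc (j + 1) n, cc u i := by
  -- find i in (j, j+p] with p | cc u i
  have hp0 : 0 < p := hp.out.pos
  set s : ℤ := (((p:ℤ) + 1) / 2) * (-(2 * u + 1)) - (j + 1) with hs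
  have hi0 : 0 ≤ s % p := Int.emod_nonneg _ (by omega)
  have hi1 : s % p < p := Int.emod_lt_of_pos _ (by omega)
  obtain ⟨t, ht⟩ : ∃ t : ℕ, (t : ℤ) = s % p := ⟨(s % p).toNat, by omega⟩
  have hd : (p : ℤ) ∣ cc u (j + 1 + t) := by
    have h1 : (p : ℤ) ∣ s - s % p := Int.dvd_self_sub_emod
    obtain ⟨w, hw⟩ := h1
    obtain ⟨r, hr⟩ : ∃ r : ℕ, p = 2 * r + 1 := ⟨p / 2, by omega⟩
    have h2 : ((p:ℤ) + 1) / 2 = r + 1 := by omega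
    rw [h2] at hs
    unfold cc
    refine ⟨-2 * w - (2 * u + 1), ?_⟩
    have h3 : ((j + 1 + t : ℕ) : ℤ) = (r + 1) * (-(2 * u + 1)) - p * w := by
      push_cast; linarith
    rw [h3]
    have : (p : ℤ) = 2 * r + 1 := by exact_mod_cast hr
    rw [this]
    ring
  exact hd.trans (Finset.dvd_prod_of_mem _ (by simp only [Finset.mem_Icc]; omega))

theorem dvd_co_of_dvd_n (hodd : p % 2 = 1) {u : ℤ} {n k l : ℕ} (hl : l < k) (hd : p ∣ n - l)
    {j : ℕ} (hj : j + k ≤ n) : (p : ℤ) ∣ co u n j := by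
  unfold co
  rcases Nat.lt_or_ge n (j + p) with h | h
  · apply Dvd.dvd.mul_right
    have h1 : p ∣ n.descFactorial (n - j) := by
      rw [Nat.descFactorial_eq_prod_range]
      exact hd.trans (Finset.dvd_prod_of_mem _ (by simp only [Finset.mem_range]; omega))
    rw [Nat.descFactorial_eq_factorial_mul_choose, Nat.choose_symm (by omega)] at h1
    rcases (Nat.Prime.dvd_mul hp.out).1 h1 with h2 | h2
    · rw [Nat.Prime.dvd_factorial hp.out] at h2; omega
    · exact_mod_cast h2
  · exact (dvd_prod_cc hodd h).mul_left _

/-- If `p` divides one of the `2 * k` terms then `p` divides `g(0)`. -/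
theorem Fac.dvd_g0 (hodd : p % 2 = 1) {u : ℤ} {n k l : ℕ} {g h : ℤ[X]} (F : Fac u n k g h) (hl : l < k)
    (hd : p ∣ n - l ∨ (p : ℤ) ∣ cc u (n - l)) : (p : ℤ) ∣ g.coeff 0 := by
  by_contra hg
  apply F.good_contra hg
  intro j hj
  rcases hd with hd | hd
  · exact dvd_co_of_dvd_n hodd hl hd hj
  · exact dvd_co_of_dvd_cc hl hd hj

theorem Fac.not_two_dvd {u : ℤ} {n k : ℕ} {g h : ℤ[X]} (F : Fac u n k g h) :
    ¬ (2 : ℤ) ∣ g.coeff 0 := by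
  intro hd
  have h1 : (2:ℤ) ∣ co u n 0 := by rw [← F.coeff0]; exact hd.mul_right _
  unfold co at h1
  simp only [Nat.choose_zero_right, Nat.cast_one, one_mul, zero_add] at h1
  obtain ⟨i, -, hi⟩ := (Prime.dvd_finsetProd_iff Int.prime_two _).1 h1
  exact cc_odd u i hi

/-- Large primes do not divide `g(0)`. -/
theorem Fac.large_prime (hodd : p % 2 = 1) {U n k : ℕ} {g h : ℤ[X]} (F : Fac (-(U:ℤ)) n k g h)
    (hU : 1 ≤ U) (hk : 1 ≤ k) (h1 : 2 * U - 1 ≤ p + 1) (h2 : 2 * k + 1 ≤ p) : ¬ (p : ℤ) ∣ g.coeff 0 := by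
  have hz : vd p (U - 1) = 0 := by
    unfold vd
    apply Finset.sum_eq_zero
    intro i hi
    rw [Finset.mem_range] at hi
    apply padicValNat.eq_zero_of_not_dvd
    intro hd
    have := Nat.le_of_dvd (by omega) hd
    omega
  apply F.not_dvd' hk
  intro j h0 hj
  suffices k * vS (-(U:ℤ)) p j < j by omega
  rcases Nat.lt_or_ge j (U - 1) with h | h
  · have := vS_eq_small (p := p) U j hU h.le
    have e : vS (-(U:ℤ)) p j = 0 := by omega
    rw [e]; omega
  · obtain ⟨m, rfl⟩ : ∃ m, j = U - 1 + m := ⟨j - (U - 1), by omega⟩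
    rw [vS_eq_large U m hU, hz, zero_add]
    rcases Nat.eq_zero_or_pos m with hm | hm
    · subst hm; simp [vd]; omega
    · have := vd_le hodd m hm
      have h3 : (2 * k) * vd p m ≤ (p - 1) * vd p m := Nat.mul_le_mul_right _ (by omega)
      rw [mul_assoc] at h3
      omega

end

/-- valuation computed with fuel -/
def vf : ℕ → ℕ → ℕ → ℕ
  | 0, _, _ => 0
  | f + 1, p, x => bif Nat.beq (x % p) 0 then vf f p (x / p) + 1 else 0

theorem vf_eq {p : ℕ} [hp : Fact p.Prime] (f x : ℕ) (hx : x ≠ 0) (hf : x < 2 ^ f) :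
    vf f p x = padicValNat p x := by
  induction f generalizing x with
  | zero => simp at hf; omega
  | succ f ih =>
    unfold vf
    by_cases h : x % p = 0
    · obtain ⟨y, rfl⟩ := Nat.dvd_of_mod_eq_zero h
      have hp0 := hp.out.two_le
      have hy : y ≠ 0 := by rintro rfl; simp at hx
      have hy2 : y < 2 ^ f := by
        have : 2 * y ≤ p * y := Nat.mul_le_mul_right _ hp0
        rw [pow_succ] at hf; omega
      rw [Nat.mul_div_cancel_left _ (by omega), ih y hy hy2, padicValNat.mul (by omega) hy, padicValNat_self]
      simp [add_comm]
    · have h2 : Nat.beq (x % p) 0 = false := by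
        rw [← Bool.not_eq_true, Nat.beq_eq]; exact h
      rw [h2, cond_false]
      exact (padicValNat.eq_zero_of_not_dvd (fun hd => h (Nat.mod_eq_zero_of_dvd hd))).symm

/-- `|cc (-U) i|` -/
def ca (U i : ℕ) : ℕ := (2 * i + 1 - 2 * U) + (2 * U - (2 * i + 1))

theorem ca_eq (U i : ℕ) : (cc (-(U:ℤ)) i).natAbs = ca U i := by
  unfold cc ca; omega

theorem ca_ne (U i : ℕ) : ca U i ≠ 0 := by unfold ca; omega

/-- computed `vS` -/
def vSc (U p : ℕ) : ℕ → ℕ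
  | 0 => 0
  | j + 1 => vSc U p j + vf 12 p (ca U (j + 1))

theorem vSc_eq {p : ℕ} [hp : Fact p.Prime] (U j : ℕ) (hU : U ≤ 100) (hj : j ≤ 1000) :
    vSc U p j = vS (-(U:ℤ)) p j := by
  induction j with
  | zero => simp [vSc, vS]
  | succ j ih =>
    rw [vS_succ, vSc, ih (by omega), padicValInt, ca_eq, vf_eq _ _ (ca_ne _ _)]
    unfold ca; norm_num; omega

/-- check `b * vS j + D < X + a * j` for the next `fuel` values of `j`. -/
def linLoop (U p a b X D : ℕ) : ℕ → ℕ → ℕ → Bool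
  | 0, _, _ => true
  | f + 1, j, v =>
    (fun v' => Nat.blt (b * v' + D) (X + a * (j + 1)) && linLoop U p a b X D f (j + 1) v')
      (v + vf 12 p (ca U (j + 1)))

theorem linLoop_spec {p : ℕ} [hp : Fact p.Prime] (U a b X D : ℕ) (hU : U ≤ 100) (f : ℕ) : ∀ j v,
    linLoop U p a b X D f j v = true → v = vS (-(U:ℤ)) p j → j + f ≤ 1000 →
    ∀ i, j < i → i ≤ j + f → b * vS (-(U:ℤ)) p i + D < X + a * i := by
  induction f with
  | zero => intros; omega
  | succ f ih =>
    intro j v h hv hj i h1 h2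
    simp only [linLoop, Bool.and_eq_true, Nat.blt_eq] at h
    have hv' : v + vf 12 p (ca U (j + 1)) = vS (-(U:ℤ)) p (j + 1) := by
      rw [vS_succ, hv, padicValInt, ca_eq, vf_eq _ _ (ca_ne _ _)]
      unfold ca; norm_num; omega
    rcases Nat.lt_or_ge (j + 1) i with h3 | h3
    · exact ih (j + 1) _ h.2 hv' (by omega) i h3 (by omega)
    · have : i = j + 1 := by omega
      subst this
      rw [hv'] at h
      exact h.1

def linOK (U p a b X D : ℕ) : Bool :=
  linLoop U p a b X D 100 0 0 && Nat.ble (b * (p * p + 1) * 2) (2 * p * p * (p - 1) * a) &&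
  Nat.blt (b * (2 * p * p * (p - 1) * vSc U p (U - 1) + 2 * (p * p + 1) * (101 - (U - 1)) + 2 * p * p * p)
      + 2 * p * p * (p - 1) * D)
    (2 * p * p * (p - 1) * (X + a * 101) + b * (p * p + 1))

theorem linOK_spec {p : ℕ} [hp : Fact p.Prime] (hodd : p % 2 = 1) (U a b X D : ℕ) (hU1 : 1 ≤ U) (hU : U ≤ 50)
    (h : linOK U p a b X D = true) (j : ℕ) (hj : 1 ≤ j) : b * vS (-(U:ℤ)) p j + D < X + a * j := by
  simp only [linOK, Bool.and_eq_true, Nat.blt_eq, Nat.ble_eq] at h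
  obtain ⟨⟨h1, h2⟩, h3⟩ := h
  rcases Nat.lt_or_ge 100 j with h4 | h4
  · obtain ⟨m, rfl⟩ : ∃ m, j = U - 1 + m := ⟨j - (U - 1), by omega⟩
    rw [vSc_eq U _ (by omega) (by omega)] at h3
    have hV : vS (-(U:ℤ)) p (U - 1) = vd p (U - 1) := by
      simpa [vd] using vS_eq_large (p := p) U 0 hU1
    rw [hV] at h3
    rw [vS_eq_large _ _ hU1]
    have h5 := vd_le2 (p := p) hodd m
    obtain ⟨d, rfl⟩ : ∃ d, m = (101 - (U - 1)) + d := ⟨m - (101 - (U - 1)), by omega⟩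
    generalize hm0 : 101 - (U - 1) = m0 at *
    have e101 : 101 = U - 1 + m0 := by omega
    rw [e101] at h3
    generalize U - 1 = U1 at *
    generalize vd p (m0 + d) = W at *
    generalize vd p U1 = V at *
    have hp2 := hp.out.two_le
    obtain ⟨q, hq⟩ : ∃ q, p = q + 2 := ⟨p - 2, by omega⟩
    have hq1 : p - 1 = q + 1 := by omega
    rw [hq1] at h2 h3 h5
    generalize hQ : 2 * p * p * (q + 1) = Q at h2 h3
    have hQ' : 2 * p ^ 2 * (q + 1) = Q := by rw [← hQ]; ring
    rw [hQ'] at h5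
    by_contra hcon
    push Not at hcon
    have h6 : Q * (X + a * (U1 + (m0 + d))) ≤ Q * (b * (V + W) + D) := Nat.mul_le_mul_left _ hcon
    have h7 : b * (Q * W + p ^ 2 + 1) ≤ b * (2 * (p ^ 2 + 1) * (m0 + d) + 2 * p ^ 3) := Nat.mul_le_mul_left _ h5
    have h8 : b * (p * p + 1) * 2 * d ≤ Q * a * d := Nat.mul_le_mul_right _ h2
    nlinarith
  · exact linLoop_spec U a b X D (by omega) 100 0 0 h1 (by simp [vS]) (by omega) j (by omega) (by omega)

/-- exponent bound for the constant coefficient -/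
theorem Fac.exp_le {p : ℕ} [hp : Fact p.Prime] (hodd : p % 2 = 1) {U n k : ℕ} {g h : ℤ[X]}
    (F : Fac (-(U:ℤ)) n k g h) (hU1 : 1 ≤ U) (hU : U ≤ 50) (a b e : ℕ) (hb : a * k < b * (e + 1))
    (H : linOK U p a b (b * (e + 1)) (a * k) = true) : padicValInt p (g.coeff 0) ≤ e := by
  have h1 := F.val_bound' (p := p) a b (b * (e + 1) - a * k - 1) (by
    intro j hj
    have := linOK_spec hodd U a b _ _ hU1 hU H j hj
    omega)
  have h2 : b * padicValInt p (g.coeff 0) < b * (e + 1) := by omega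
  have := Nat.lt_of_mul_lt_mul_left h2
  omega

theorem Fac.good_prime {p : ℕ} [hp : Fact p.Prime] (hodd : p % 2 = 1) {U n k K : ℕ} {g h : ℤ[X]}
    (F : Fac (-(U:ℤ)) n k g h) (hU1 : 1 ≤ U) (hU : U ≤ 50) (hk : 1 ≤ k) (hK : k ≤ K)
    (H : linOK U p 1 K 0 0 = true) : ¬ (p:ℤ) ∣ g.coeff 0 := by
  apply F.not_dvd' hk
  intro j hj _
  have := linOK_spec hodd U 1 K 0 0 hU1 hU H j hj
  have h2 : k * vS (-(U:ℤ)) p j ≤ K * vS (-(U:ℤ)) p j := Nat.mul_le_mul_right _ hK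
  omega

def prs : List ℕ := [3, 5, 7, 11, 13, 17, 19, 23, 29, 31]

/-- largest `k ≤ 16` for which the prime is good, per `U` -/
def kmTab : List (List ℕ) := [
  [1, 3, 4, 6, 7, 9, 10, 12, 15, 16],
  [0, 3, 5, 7, 8, 10, 11, 13, 16, 16],
  [1, 0, 5, 8, 9, 11, 12, 14, 16, 16],
  [1, 1, 0, 9, 10, 12, 13, 15, 16, 16],
  [0, 2, 1, 9, 11, 13, 14, 16, 16, 16],
  [0, 3, 2, 0, 11, 14, 15, 16, 16, 16],
  [1, 3, 3, 1, 0, 14, 16, 16, 16, 16],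
  [0, 0, 4, 2, 1, 14, 16, 16, 16, 16],
  [1, 1, 5, 3, 2, 0, 16, 16, 16, 16],
  [1, 2, 5, 4, 3, 1, 0, 16, 16, 16],
  [0, 3, 0, 5, 4, 2, 1, 16, 16, 16],
  [1, 3, 1, 6, 5, 3, 2, 0, 16, 16],
  [1, 0, 2, 7, 6, 4, 3, 1, 16, 16],
  [0, 0, 3, 8, 7, 5, 4, 2, 16, 16],
  [0, 1, 4, 9, 8, 6, 5, 3, 0, 16],
  [0, 1, 5, 9, 9, 7, 6, 4, 1, 0],
  [0, 2, 5, 0, 10, 8, 7, 5, 2, 1]]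

def km (U i : ℕ) : ℕ := (kmTab.getD (U - 2) []).getD i 0

theorem km_ok : ((List.range 17).all fun u => (List.range 10).all fun i =>
    Nat.beq (km (u + 2) i) 0 || linOK (u + 2) (prs.getD i 0) 1 (km (u + 2) i) 0 0) = true := by
  decide +kernel

/-- the bad primes -/
def Bof (U k : ℕ) : List ℕ :=
  ((List.range 10).filter fun i => Nat.blt (km U i) k).map fun i => prs.getD i 0

theorem Fac.mem_Bof {p : ℕ} [hp : Fact p.Prime] {U n k : ℕ} {g h : ℤ[X]}
    (F : Fac (-(U:ℤ)) n k g h) (hU1 : 2 ≤ U) (hU : U ≤ 18) (hk : 1 ≤ k) (hk2 : k ≤ 16)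
    (hd : (p:ℤ) ∣ g.coeff 0) : p ∈ Bof U k := by
  have hodd : p % 2 = 1 := by
    rcases hp.out.eq_two_or_odd with h2 | h2
    · subst h2; exact absurd hd F.not_two_dvd
    · exact h2
  have hlt : p < 33 := by
    by_contra hcon
    push Not at hcon
    have h37 : 34 ≤ p := by
      rcases Nat.lt_or_ge p 34 with h | h
      · have : p = 33 := by omega
        exact absurd hp.out (by rw [this]; norm_num)
      · exact h
    exact F.large_prime hodd (by omega) hk (by omega) (by omega) hd
  have hmem : p ∈ prs := by
    have hpr := hp.out
    clear hd hp
    interval_cases p <;> first | (exfalso; revert hpr; norm_num; done) | (exfalso; omega) | decide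
  obtain ⟨i, hi, rfl⟩ := List.mem_iff_getElem.1 hmem
  have hi' : i < 10 := hi
  have e1 : prs.getD i 0 = prs[i] := by
    simp only [List.getD, List.getElem?_eq_getElem hi, Option.getD_some]
    rfl
  unfold Bof
  rw [List.mem_map]
  refine ⟨i, ?_, e1⟩
  rw [List.mem_filter]
  refine ⟨by simpa using hi', ?_⟩
  rw [Nat.blt_eq]
  by_contra hcon
  push Not at hcon
  have h1 := List.all_eq_true.1 (List.all_eq_true.1 km_ok (U - 2) (by simp; omega)) i (by simpa using hi')
  rw [show U - 2 + 2 = U by omega, Bool.or_eq_true, Nat.beq_eq, e1] at h1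
  rcases h1 with h1 | h1
  · omega
  · exact F.good_prime hodd (by omega) (by omega) hk hcon h1 hd

/-- valuation of the coefficient, computed -/
def wv (U n p j : ℕ) : ℕ :=
  vSc U p n + vf 40 p (n.factorial / (j.factorial * (n - j).factorial)) - vSc U p j

theorem choose_lt_pow (n j : ℕ) (hn : n ≤ 39) : n.choose j < 2 ^ 40 := by
  have h1 : n.choose j ≤ 2 ^ n := by
    rcases Nat.lt_or_ge n j with h | h
    · rw [Nat.choose_eq_zero_of_lt h]; positivity
    · rw [← Nat.sum_range_choose n]
      exact Finset.single_le_sum (f := fun m => n.choose m) (fun _ _ => Nat.zero_le _) (by simp; omega)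
  calc n.choose j ≤ 2 ^ n := h1
    _ ≤ 2 ^ 39 := Nat.pow_le_pow_right (by norm_num) hn
    _ < 2 ^ 40 := by norm_num

theorem wv_eq {p : ℕ} [hp : Fact p.Prime] {U n j : ℕ} (hU : U ≤ 100) (hn : n ≤ 39) (hj : j ≤ n) :
    wv U n p j = padicValInt p (co (-(U:ℤ)) n j) := by
  have h1 := co_val (p := p) (-(U:ℤ)) hj
  have h2 := co_val (p := p) (-(U:ℤ)) (le_refl n)
  rw [co_self, Nat.choose_self] at h2
  simp only [padicValNat.one, padicValInt.one] at h2
  unfold wv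
  rw [← Nat.choose_eq_factorial_div_factorial hj, vf_eq _ _ (Nat.choose_pos hj).ne' (choose_lt_pow n j hn),
    vSc_eq U n hU (by omega), vSc_eq U j hU (by omega)]
  omega

def eb (U n p i l : ℕ) : ℕ := (l - i) / Nat.gcd (wv U n p i - wv U n p l) (l - i)
def ea (U n p i l : ℕ) : ℕ :=
  (wv U n p i - wv U n p l) / Nat.gcd (wv U n p i - wv U n p l) (l - i)

def ptLoop (U n p i l a b w : ℕ) : Bool :=
  (List.range (n + 1)).all fun j =>
    bif Nat.blt j i || Nat.blt l j then Nat.blt w (b * wv U n p j + a * j)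
    else Nat.ble w (b * wv U n p j + a * j)

def isP (p : ℕ) : Bool := Nat.beq p 2 || Nat.beq p 3 || Nat.beq p 5 || Nat.beq p 7 || Nat.beq p 11 || Nat.beq p 13 ||
  Nat.beq p 17 || Nat.beq p 19 || Nat.beq p 23 || Nat.beq p 29 || Nat.beq p 31

theorem isP_prime {p : ℕ} (h : isP p = true) : p.Prime := by
  simp only [isP, Bool.or_eq_true, Nat.beq_eq] at h
  rcases h with (((((((((h | h) | h) | h) | h) | h) | h) | h) | h) | h) | h <;> subst h <;> norm_num

/-- an edge certificate is `(U, n, p, i, l)` -/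
def ptOK (t : ℕ × ℕ × ℕ × ℕ × ℕ) : Bool :=
  match t with
  | (U, n, p, i, l) =>
    isP p && Nat.ble U 100 && Nat.ble n 39 && Nat.blt i l && Nat.ble l n &&
    (fun a b => Nat.beq (b * wv U n p i + a * i) (b * wv U n p l + a * l) &&
      (fun w => ptLoop U n p i l a b w) (b * wv U n p i + a * i)) (ea U n p i l) (eb U n p i l)

def repOK (t : ℕ × ℕ × ℕ × ℕ × ℕ) (k : ℕ) : Bool :=
  match t with
  | (U, n, p, i, l) =>
    (fun b => (List.range (l - i + 1)).all fun t =>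
      Nat.blt (l - i) (b * t) || Nat.blt k (b * t) || Nat.blt (i + (n - l) + b * t) k) (eb U n p i l)

theorem Fac.edge_contra {U n k p i l : ℕ} {g h : ℤ[X]} (F : Fac (-(U:ℤ)) n k g h)
    (h1 : ptOK (U, n, p, i, l) = true) (h2 : repOK (U, n, p, i, l) k = true) : False := by
  simp only [ptOK, Bool.and_eq_true, Nat.ble_eq, Nat.blt_eq, Nat.beq_eq] at h1
  obtain ⟨⟨⟨⟨⟨hp, hU⟩, hn⟩, hil⟩, hln⟩, he, hw⟩ := h1
  haveI : Fact p.Prime := ⟨isP_prime hp⟩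
  have hpos : 0 < Nat.gcd (wv U n p i - wv U n p l) (l - i) := Nat.gcd_pos_of_pos_right _ (by omega)
  have hab : Nat.Coprime (ea U n p i l) (eb U n p i l) := Nat.coprime_div_gcd_div_gcd hpos
  have hb1 : 1 ≤ eb U n p i l :=
    Nat.div_pos (Nat.le_of_dvd (by omega) (Nat.gcd_dvd_right _ _)) hpos
  simp only [repOK] at h2
  generalize ea U n p i l = a at *
  generalize eb U n p i l = b at *
  have key : ∀ j ≤ n, wt p a b (GG (-(U:ℤ)) n) j = b * wv U n p j + a * j := by
    intro j hj
    unfold wt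
    rw [coeff_GG, wv_eq hU hn hj]
  have hall : ∀ j ≤ n, ((j < i ∨ l < j) → b * wv U n p i + a * i < b * wv U n p j + a * j) ∧
      b * wv U n p i + a * i ≤ b * wv U n p j + a * j := by
    intro j hj
    have h3 := List.all_eq_true.1 hw j (by simp; omega)
    by_cases hc : j < i ∨ l < j
    · have : (Nat.blt j i || Nat.blt l j) = true := by simpa [Nat.blt_eq] using hc
      rw [this, cond_true, Nat.blt_eq] at h3
      exact ⟨fun _ => h3, h3.le⟩
    · have : (Nat.blt j i || Nat.blt l j) = false := by
        rw [← Bool.not_eq_true]; simpa [Nat.blt_eq] using hc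
      rw [this, cond_false, Nat.ble_eq] at h3
      exact ⟨fun h => absurd h hc, h3⟩
  have hle : ∀ j, (GG (-(U:ℤ)) n).coeff j ≠ 0 → j ≤ n := by
    intro j hj
    by_contra hcon
    rw [coeff_GG, co_zero_of_lt (by omega)] at hj
    exact hj rfl
  have P : Pt p a b (GG (-(U:ℤ)) n) (b * wv U n p i + a * i) i l := by
    constructor
    · intro j hj
      rw [key j (hle j hj)]; exact (hall j (hle j hj)).2
    · rw [coeff_GG]; exact co_ne_zero (by omega)
    · rw [key i (by omega)]
    · rw [coeff_GG]; exact co_ne_zero (by omega)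
    · rw [key l hln, he]
    · intro j hj hji
      rw [key j (hle j hj)]; exact (hall j (hle j hj)).1 (Or.inl hji)
    · intro j hj hji
      rw [key j (hle j hj)]; exact (hall j (hle j hj)).1 (Or.inr hji)
  obtain ⟨x, t, z, hx, ht, hz, hk⟩ := F.edge hab P
  have h3 := List.all_eq_true.1 h2 t (by
    have : 1 * t ≤ b * t := Nat.mul_le_mul_right _ hb1
    simp; omega)
  simp only [Bool.or_eq_true, Nat.blt_eq] at h3
  omega

def eTab : List (ℕ × ℕ × ℕ × ℕ × ℕ) := [
  (3, 4, 3, 1, 4), (4, 4, 3, 0, 3), (4, 5, 5, 0, 5), (4, 6, 5, 1, 6), (5, 4, 3, 0, 3), (5, 5, 5, 0, 5), (5, 6, 5, 0, 5),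
  (5, 7, 5, 2, 7), (5, 8, 7, 1, 8), (5, 9, 3, 0, 9), (6, 6, 5, 0, 5), (6, 7, 7, 0, 7), (6, 8, 7, 0, 7), (6, 9, 3, 0, 9),
  (6, 10, 3, 1, 10), (7, 8, 7, 0, 7), (7, 9, 3, 0, 9), (7, 10, 3, 0, 9), (7, 11, 3, 2, 11), (7, 12, 11, 1, 12), (8, 8, 5, 0, 5),
  (8, 9, 3, 0, 9), (8, 10, 3, 0, 9), (8, 11, 3, 0, 9), (8, 12, 3, 3, 12), (8, 13, 11, 2, 13), (8, 14, 11, 2, 13), (8, 15, 13, 1, 14),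
  (9, 9, 3, 0, 9), (9, 10, 3, 1, 10), (9, 11, 3, 1, 10), (9, 12, 3, 0, 9), (9, 13, 3, 4, 13), (9, 14, 11, 3, 14), (9, 15, 11, 3, 14),
  (9, 16, 13, 2, 15), (10, 9, 3, 0, 9), (10, 10, 3, 0, 9), (10, 11, 3, 2, 11), (10, 12, 3, 0, 9), (10, 13, 3, 0, 9), (10, 14, 3, 5, 14),
  (10, 15, 5, 0, 15), (10, 16, 11, 4, 15), (10, 17, 13, 3, 16), (10, 18, 17, 1, 18), (11, 10, 3, 0, 9), (11, 12, 3, 0, 9), (11, 13, 3, 0, 9),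
  (11, 14, 3, 0, 9), (11, 15, 5, 0, 15), (11, 16, 11, 5, 16), (11, 17, 13, 4, 17), (11, 18, 13, 4, 17), (11, 19, 17, 2, 19), (11, 20, 19, 1, 20),
  (11, 21, 17, 2, 19), (12, 8, 7, 1, 8), (12, 10, 3, 1, 10), (12, 12, 3, 0, 9), (12, 13, 3, 1, 10), (12, 14, 3, 1, 10), (12, 15, 5, 0, 15),
  (12, 16, 13, 0, 13), (12, 17, 13, 0, 13), (12, 18, 13, 5, 18), (12, 19, 17, 0, 17), (12, 20, 17, 3, 20), (12, 21, 17, 3, 20), (12, 22, 17, 3, 20),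
  (13, 9, 3, 0, 9), (13, 14, 3, 2, 11), (13, 15, 3, 0, 9), (13, 16, 5, 0, 15), (13, 17, 17, 0, 17), (13, 18, 13, 0, 13), (13, 19, 13, 6, 19),
  (13, 20, 17, 0, 17), (13, 21, 17, 4, 21), (13, 22, 17, 4, 21), (13, 23, 17, 4, 21), (13, 24, 19, 3, 22), (13, 25, 5, 0, 25), (13, 26, 5, 0, 25),
  (14, 16, 5, 1, 16), (14, 17, 5, 1, 16), (14, 18, 17, 0, 17), (14, 19, 13, 0, 13), (14, 20, 13, 7, 20), (14, 21, 7, 0, 21), (14, 22, 17, 5, 22),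
  (14, 23, 17, 5, 22), (14, 24, 17, 5, 22), (14, 25, 5, 0, 25), (14, 26, 5, 1, 26), (14, 27, 3, 0, 27), (15, 18, 5, 2, 17), (15, 19, 17, 0, 17),
  (15, 20, 13, 0, 13), (15, 21, 7, 0, 21), (15, 22, 7, 0, 21), (15, 23, 17, 6, 23), (15, 24, 17, 6, 23), (15, 25, 5, 0, 25), (15, 26, 5, 0, 25),
  (15, 27, 3, 0, 27), (15, 28, 3, 1, 28), (16, 20, 17, 0, 17), (16, 21, 7, 0, 21), (16, 22, 7, 0, 21), (16, 23, 7, 0, 21), (16, 24, 17, 7, 24),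
  (16, 25, 5, 0, 25), (16, 26, 5, 0, 25), (16, 27, 3, 0, 27), (16, 28, 3, 0, 27), (16, 29, 3, 2, 29), (16, 30, 3, 3, 30), (17, 20, 11, 0, 11),
  (17, 21, 7, 0, 21), (17, 22, 7, 0, 21), (17, 23, 7, 0, 21), (17, 24, 17, 0, 17), (17, 25, 5, 0, 25), (17, 26, 5, 0, 25), (17, 27, 3, 0, 27),
  (17, 28, 3, 0, 27), (17, 29, 3, 0, 27), (17, 30, 3, 3, 30), (17, 31, 29, 2, 31), (17, 32, 31, 1, 32), (17, 33, 3, 3, 30), (17, 34, 3, 3, 30),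
  (18, 22, 7, 0, 21), (18, 23, 17, 0, 17), (18, 24, 7, 0, 21), (18, 25, 5, 0, 25), (18, 26, 5, 0, 25), (18, 27, 3, 0, 27), (18, 28, 3, 1, 28),
  (18, 29, 3, 1, 28), (18, 30, 3, 0, 27), (18, 31, 3, 4, 31), (18, 32, 31, 0, 31), (18, 33, 31, 2, 33), (18, 34, 3, 4, 31), (18, 35, 3, 4, 31)]

theorem eTab_ok : eTab.all ptOK = true := by decide +kernel

/-- the survivor `(U, n, k)` is excluded by a certificate -/
def surv (U n k : ℕ) : Bool :=
  eTab.any fun t => Nat.beq t.1 U && Nat.beq t.2.1 n && repOK t k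

theorem Fac.surv_contra {U n k : ℕ} {g h : ℤ[X]} (F : Fac (-(U:ℤ)) n k g h) (hs : surv U n k = true) : False := by
  obtain ⟨⟨U', n', p, i, l⟩, ht, h2⟩ := List.any_eq_true.1 hs
  simp only [Bool.and_eq_true, Nat.beq_eq] at h2
  obtain ⟨⟨rfl, rfl⟩, h3⟩ := h2
  exact F.edge_contra (List.all_eq_true.1 eTab_ok _ ht) h3

theorem surv17 : (surv 18 34 17 && surv 18 35 17 && surv 17 34 17) = true := by decide +kernel

/-- valuation of a window of odd numbers -/
theorem win_val {p : ℕ} (hp : p.Prime) (hodd : p % 2 = 1) (k c : ℕ) (hk : 1 ≤ k) (hc : c % 2 = 1) :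
    ∃ i0 < k, ∑ i ∈ (range k).erase i0, (c + 2 * i).factorization p ≤ (k - 1).factorial.factorization p := by
  obtain ⟨i0, hi0, hmax⟩ := (range k).exists_max_image (fun i => (c + 2 * i).factorization p)
    ⟨0, by simp; omega⟩
  rw [mem_range] at hi0
  refine ⟨i0, hi0, ?_⟩
  set f : ℕ → ℕ := fun i => if i = i0 then 1 else (i - i0) + (i0 - i) with hf
  have hf0 : ∀ i, f i ≠ 0 := by
    intro i; simp only [hf]; split_ifs <;> omega
  have h1 : ∀ i ∈ (range k).erase i0, (c + 2 * i).factorization p ≤ (f i).factorization p := by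
    intro i hi
    rw [mem_erase, mem_range] at hi
    have hle := hmax i (by simpa using hi.2)
    rw [← Nat.Prime.pow_dvd_iff_le_factorization hp (hf0 i)]
    have ha : p ^ ((c + 2 * i).factorization p) ∣ c + 2 * i := Nat.ordProj_dvd _ _
    have hb : p ^ ((c + 2 * i).factorization p) ∣ c + 2 * i0 :=
      (pow_dvd_pow p hle).trans (Nat.ordProj_dvd _ _)
    have hcop : Nat.Coprime (p ^ ((c + 2 * i).factorization p)) 2 := by
      apply Nat.Coprime.pow_left
      rw [Nat.coprime_primes hp Nat.prime_two]
      omega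
    simp only [hf, if_neg hi.1]
    rcases Nat.lt_or_ge i i0 with h | h
    · have := Nat.dvd_sub hb ha
      rw [show c + 2 * i0 - (c + 2 * i) = 2 * (i - i0 + (i0 - i)) by omega] at this
      exact hcop.dvd_of_dvd_mul_left this
    · have := Nat.dvd_sub ha hb
      rw [show c + 2 * i - (c + 2 * i0) = 2 * (i - i0 + (i0 - i)) by omega] at this
      exact hcop.dvd_of_dvd_mul_left this
  have h2 : ∏ i ∈ range k, f i = i0.factorial * (k - 1 - i0).factorial := by
    obtain ⟨m, rfl⟩ : ∃ m, k = i0 + 1 + m := ⟨k - 1 - i0, by omega⟩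
    rw [prod_range_add, prod_range_succ]
    have e1 : ∏ x ∈ range i0, f x = i0.factorial := by
      rw [← prod_range_add_one_eq_factorial, ← prod_range_reflect]
      apply prod_congr rfl
      intro i hi
      rw [mem_range] at hi
      simp only [hf, if_neg (show i0 - 1 - i ≠ i0 by omega)]
      omega
    have e2 : ∏ x ∈ range m, f (i0 + 1 + x) = m.factorial := by
      rw [← prod_range_add_one_eq_factorial]
      apply prod_congr rfl
      intro i hi
      simp only [hf, if_neg (show i0 + 1 + i ≠ i0 by omega)]
      omega
    rw [e1, e2, show i0 + 1 + m - 1 - i0 = m by omega]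
    simp [hf]
  have h3 : ∏ i ∈ range k, f i ∣ (k - 1).factorial := by
    rw [h2]
    have := Nat.factorial_mul_factorial_dvd_factorial (show i0 ≤ k - 1 by omega)
    exact this
  calc _ ≤ ∑ i ∈ (range k).erase i0, (f i).factorization p := sum_le_sum h1
    _ ≤ ∑ i ∈ (range k), (f i).factorization p := sum_le_sum_of_subset (erase_subset _ _)
    _ = (∏ i ∈ range k, f i).factorization p := by
      rw [Nat.factorization_prod (fun i _ => hf0 i)]; simp
    _ ≤ _ := (Nat.factorization_le_iff_dvd (prod_ne_zero_iff.2 fun i _ => hf0 i)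
        (Nat.factorial_ne_zero _)).2 h3 p

theorem two_pow_le_v2 (n : ℕ) : 2 ^ n ≤ (n + 1) * 2 ^ (n.factorial.factorization 2) := by
  induction n using Nat.strong_induction_on with
  | _ n ih =>
    rcases Nat.eq_zero_or_pos n with h0 | h0
    · subst h0; simp
    obtain ⟨m, hm⟩ : ∃ m, n = 2 * m ∨ n = 2 * m + 1 := ⟨n / 2, by omega⟩
    have key : m + m.factorial.factorization 2 ≤ (2 * m).factorial.factorization 2 := by
      rw [← Nat.Prime.pow_dvd_iff_le_factorization Nat.prime_two (Nat.factorial_ne_zero _), pow_add]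
      have : 2 ^ m * m.factorial ∣ (2 * m).factorial := by
        clear * -
        induction m with
        | zero => simp
        | succ m ih =>
          rw [show 2 * (m + 1) = 2 * m + 1 + 1 by ring, Nat.factorial_succ, Nat.factorial_succ,
            Nat.factorial_succ, pow_succ]
          obtain ⟨r, hr⟩ := ih
          rw [hr]
          exact ⟨(2 * m + 1) * r, by ring⟩
      exact (Nat.mul_dvd_mul_left _ (Nat.ordProj_dvd _ _)).trans this
    have h1 : (2 * m).factorial.factorization 2 ≤ n.factorial.factorization 2 := by
      apply (Nat.factorization_le_iff_dvd (Nat.factorial_ne_zero _) (Nat.factorial_ne_zero _)).2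
      exact Nat.factorial_dvd_factorial (by omega)
    have h2 : 2 ^ (m + m.factorial.factorization 2) ≤ 2 ^ (n.factorial.factorization 2) :=
      Nat.pow_le_pow_right (by norm_num) (key.trans h1)
    rw [pow_add] at h2
    have h3 := ih m (by omega)
    have h4 : 2 ^ m * 2 ^ m ≤ (m + 1) * 2 ^ (n.factorial.factorization 2) := by
      calc 2 ^ m * 2 ^ m ≤ 2 ^ m * ((m + 1) * 2 ^ (m.factorial.factorization 2)) := Nat.mul_le_mul_left _ h3
        _ = (m + 1) * (2 ^ m * 2 ^ (m.factorial.factorization 2)) := by ring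
        _ ≤ _ := Nat.mul_le_mul_left _ h2
    generalize 2 ^ (n.factorial.factorization 2) = Y at *
    rcases hm with hm | hm
    · rw [hm, two_mul, pow_add]
      have : (m + 1) * Y ≤ (m + m + 1) * Y := Nat.mul_le_mul_right _ (by omega)
      omega
    · rw [hm, pow_succ, two_mul, pow_add]
      have : (m + m + 1 + 1) * Y = ((m + 1) * Y) * 2 := by ring
      omega

/-- odd products -/
theorem odd_dvd_of_fact {A B v : ℕ} (hA : A % 2 = 1) (hB : B ≠ 0) (hv : 2 ^ v ∣ B)
    (H : ∀ p, p.Prime → p % 2 = 1 → A.factorization p ≤ B.factorization p) : A * 2 ^ v ∣ B := by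
  have h1 : A ∣ B := by
    rw [← Nat.factorization_prime_le_iff_dvd (by omega) hB]
    intro p hp
    rcases hp.eq_two_or_odd with h2 | h2
    · subst h2
      rw [Nat.factorization_eq_zero_of_not_dvd (by omega)]; simp
    · exact H p hp h2
  refine Nat.Coprime.mul_dvd_of_dvd_of_dvd ?_ h1 hv
  apply Nat.Coprime.pow_right
  rw [Nat.coprime_two_right, Nat.odd_iff]; exact hA

theorem prod_odd {I : Finset ℕ} {x : ℕ → ℕ} (h : ∀ i ∈ I, x i % 2 = 1) : (∏ i ∈ I, x i) % 2 = 1 := by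
  rw [← Nat.odd_iff]
  apply Finset.prod_induction _ Odd (fun a b => Odd.mul) odd_one
  intro i hi
  rw [Nat.odd_iff]; exact h i hi

/-- The removal inequality for windows of odd numbers. -/
theorem win_removal (k c : ℕ) (hk : 1 ≤ k) (hc : c % 2 = 1) (Q : Finset ℕ)
    (hQ : ∀ i < k, ∀ p, p.Prime → p ∣ c + 2 * i → p ∈ Q) :
    c ^ (k - Q.card) * 2 ^ (k - 1) ≤ k.factorial := by
  classical
  have ex : ∀ p : ℕ, ∃ i0 < k, p.Prime → p % 2 = 1 → ∑ i ∈ (range k).erase i0, (c + 2 * i).factorization p ≤ (k - 1).factorial.factorization p := by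
    intro p
    by_cases h : p.Prime ∧ p % 2 = 1
    · obtain ⟨i0, h1, h2⟩ := win_val h.1 h.2 k c hk hc
      exact ⟨i0, h1, fun _ _ => h2⟩
    · exact ⟨0, hk, fun a b => absurd ⟨a, b⟩ h⟩
  choose ι hι hι2 using ex
  set R := Q.image ι with hR
  have hRk : R ⊆ range k := by
    intro i hi
    rw [hR, mem_image] at hi
    obtain ⟨p, -, rfl⟩ := hi
    simpa using hι p
  have hcard : k - Q.card ≤ (range k \ R).card := by
    rw [card_sdiff_of_subset hRk, card_range]
    have : R.card ≤ Q.card := card_image_le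
    omega
  set A := ∏ i ∈ range k \ R, (c + 2 * i) with hA
  have hodd : A % 2 = 1 := prod_odd (fun i _ => by omega)
  have hdvd : A * 2 ^ ((k - 1).factorial.factorization 2) ∣ (k - 1).factorial := by
    apply odd_dvd_of_fact hodd (Nat.factorial_ne_zero _) (Nat.ordProj_dvd _ _)
    intro p hp hpo
    have e : A.factorization p = ∑ i ∈ range k \ R, (c + 2 * i).factorization p := by
      rw [hA, Nat.factorization_prod (fun i _ => by omega)]; simp
    rw [e]
    by_cases hpQ : p ∈ Q
    · refine le_trans (sum_le_sum_of_subset ?_) (hι2 p hp hpo)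
      intro i hi
      rw [mem_sdiff] at hi
      rw [mem_erase]
      refine ⟨?_, hi.1⟩
      rintro rfl
      exact hi.2 (mem_image_of_mem _ hpQ)
    · rw [sum_eq_zero]
      · simp
      · intro i hi
        rw [mem_sdiff, mem_range] at hi
        apply Nat.factorization_eq_zero_of_not_dvd
        intro hd
        exact hpQ (hQ i hi.1 p hp hd)
  have hle := Nat.le_of_dvd (Nat.factorial_pos _) hdvd
  have h2 := two_pow_le_v2 (k - 1)
  have hcA : c ^ (k - Q.card) ≤ A := by
    calc c ^ (k - Q.card) ≤ c ^ (range k \ R).card := Nat.pow_le_pow_right (by omega) hcard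
      _ ≤ A := by
        rw [← prod_const]
        exact prod_le_prod' (fun i _ => by omega)
  have hkf : k * (k - 1).factorial = k.factorial := Nat.mul_factorial_pred (by omega)
  rw [show k - 1 + 1 = k by omega] at h2
  calc c ^ (k - Q.card) * 2 ^ (k - 1) ≤ A * (k * 2 ^ ((k - 1).factorial.factorization 2)) :=
        Nat.mul_le_mul hcA h2
    _ = k * (A * 2 ^ ((k - 1).factorial.factorization 2)) := by ring
    _ ≤ k * (k - 1).factorial := Nat.mul_le_mul_left _ hle
    _ = _ := hkf

/-- Master inequality for windows of odd numbers. -/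
theorem win_master (K t : ℕ) (hK : 1 ≤ K) (Q : Finset ℕ)
    (hQp : ∀ p ∈ Q, p.Prime)
    (hQ : ∀ i < K, ∀ p, p.Prime → p ∣ 2 * t + 1 + 2 * i → p ∈ Q) :
    2 ^ (2 * K - 1) * (t + K - 1).choose K ≤ ∏ p ∈ Q, p ^ (Nat.log p (2 * (t + K - 1) + 1)) := by
  set N := 2 * (t + K - 1) + 1 with hN
  set A := ∏ i ∈ range K, (2 * t + 1 + 2 * i) with hA
  set B := ∏ p ∈ Q, p ^ (Nat.log p N) with hB
  have hB0 : B ≠ 0 := prod_ne_zero_iff.2 fun p hp => pow_ne_zero _ (hQp p hp).ne_zero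
  have hodd : A % 2 = 1 := prod_odd (fun i _ => by omega)
  have hdvd : A * 2 ^ ((K - 1).factorial.factorization 2) ∣ B * (K - 1).factorial := by
    apply odd_dvd_of_fact hodd (mul_ne_zero hB0 (Nat.factorial_ne_zero _))
      ((Nat.ordProj_dvd _ _).mul_left _)
    intro p hp hpo
    have e : A.factorization p = ∑ i ∈ range K, (2 * t + 1 + 2 * i).factorization p := by
      rw [hA, Nat.factorization_prod (fun i _ => by omega)]; simp
    rw [e, Nat.factorization_mul hB0 (Nat.factorial_ne_zero _)]
    by_cases hpQ : p ∈ Q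
    · obtain ⟨i0, h1, h2⟩ := win_val hp hpo K (2 * t + 1) hK (by omega)
      rw [← add_sum_erase _ _ (mem_range.2 h1)]
      refine Nat.add_le_add ?_ h2
      have h3 : p ^ ((2 * t + 1 + 2 * i0).factorization p) ≤ N :=
        (Nat.le_of_dvd (by omega) (Nat.ordProj_dvd _ _)).trans (by omega)
      have h4 : (2 * t + 1 + 2 * i0).factorization p ≤ Nat.log p N :=
        Nat.le_log_of_pow_le hp.one_lt h3
      refine h4.trans ?_
      rw [← Nat.Prime.pow_dvd_iff_le_factorization hp hB0]
      exact dvd_prod_of_mem (fun p => p ^ (Nat.log p N)) hpQ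
    · rw [sum_eq_zero]
      · simp
      · intro i hi
        rw [mem_range] at hi
        apply Nat.factorization_eq_zero_of_not_dvd
        intro hd
        exact hpQ (hQ i hi p hp hd)
  have hle := Nat.le_of_dvd (Nat.mul_pos (Nat.pos_of_ne_zero hB0) (Nat.factorial_pos _)) hdvd
  have h2 := two_pow_le_v2 (K - 1)
  have hkf : K * (K - 1).factorial = K.factorial := Nat.mul_factorial_pred (by omega)
  rw [show K - 1 + 1 = K by omega] at h2
  have hAl : 2 ^ K * (K.factorial * (t + K - 1).choose K) ≤ A := by
    rw [← Nat.ascFactorial_eq_factorial_mul_choose', Nat.ascFactorial_eq_prod_range, ← card_range K, ← prod_const,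
      card_range, ← prod_mul_distrib]
    exact prod_le_prod' fun i _ => by omega
  have h5 : K.factorial * (2 ^ (2 * K - 1) * (t + K - 1).choose K) ≤ K.factorial * B := by
    calc K.factorial * (2 ^ (2 * K - 1) * (t + K - 1).choose K)
        = (2 ^ K * (K.factorial * (t + K - 1).choose K)) * 2 ^ (K - 1) := by
          rw [show 2 * K - 1 = K + (K - 1) by omega, pow_add]; ring
      _ ≤ A * (K * 2 ^ ((K - 1).factorial.factorization 2)) := Nat.mul_le_mul hAl h2
      _ = K * (A * 2 ^ ((K - 1).factorial.factorization 2)) := by ring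
      _ ≤ K * (B * (K - 1).factorial) := Nat.mul_le_mul_left _ hle
      _ = K.factorial * B := by rw [← hkf]; ring
  exact Nat.le_of_mul_le_mul_left h5 (Nat.factorial_pos _)

theorem logpow_le {N : ℕ} (hN : 1 ≤ N) (Q : Finset ℕ) (hQp : ∀ p ∈ Q, p.Prime) :
    ∏ p ∈ Q, p ^ (Nat.log p N) ≤ (∏ p ∈ Q, p) * N ^ (Q.filter (· ≤ Nat.sqrt N)).card := by
  have h1 : ∀ p ∈ Q, p ^ (Nat.log p N) ≤ p * (if p ≤ Nat.sqrt N then N else 1) := by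
    intro p hp
    have hpp := hQp p hp
    split_ifs with h
    · calc p ^ (Nat.log p N) ≤ N := Nat.pow_log_le_self p (by omega)
        _ ≤ p * N := Nat.le_mul_of_pos_left _ hpp.pos
    · have h2 : Nat.log p N < 2 := by
        apply Nat.log_lt_of_lt_pow (by omega)
        rw [pow_two]
        exact Nat.sqrt_lt.1 (by omega)
      calc p ^ (Nat.log p N) ≤ p ^ 1 := Nat.pow_le_pow_right hpp.pos (by omega)
        _ = p * 1 := by ring
  calc _ ≤ ∏ p ∈ Q, (p * (if p ≤ Nat.sqrt N then N else 1)) := prod_le_prod' h1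
    _ = _ := by
      rw [prod_mul_distrib, ← prod_filter, prod_const]

theorem logpow_le' {N : ℕ} (hN : 1 ≤ N) (Q : Finset ℕ) :
    ∏ p ∈ Q, p ^ (Nat.log p N) ≤ N ^ Q.card := by
  rw [← prod_const]
  exact prod_le_prod' fun p hp => Nat.pow_log_le_self p (by omega)

theorem card_primes_le (Q : Finset ℕ) (hQp : ∀ p ∈ Q, p.Prime) (s : ℕ) (hs : ∀ p ∈ Q, p ≤ s) :
    Q.card ≤ Nat.primeCounting' (s + 1) := by
  rw [Nat.primeCounting', Nat.count_eq_card_filter_range]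
  apply card_le_card
  intro p hp
  simp only [mem_filter, mem_range]
  exact ⟨Nat.lt_succ_of_le (hs p hp), hQp p hp⟩

theorem pc7 : Nat.primeCounting' 7 = 3 := by decide +kernel

theorem pc_third (s : ℕ) : 3 * Nat.primeCounting' (s + 1) ≤ s + 9 := by
  rcases Nat.lt_or_ge s 6 with h | h
  · have : Nat.primeCounting' (s + 1) ≤ Nat.primeCounting' 7 := Nat.monotone_primeCounting' (by omega)
    rw [pc7] at this; omega
  · have := Nat.primeCounting'_add_le (a := 6) (k := 7) (by norm_num) (by norm_num) (s - 6)
    rw [pc7, show Nat.totient 6 = 2 by decide +kernel, show 7 + (s - 6) = s + 1 by omega] at this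
    omega

theorem pc_half (K : ℕ) (hK : 2500 ≤ K) : 2 * Nat.primeCounting' (2 * K + 34) ≤ K := by
  have h1 := pc_third 210
  have := Nat.primeCounting'_add_le (a := 210) (k := 211) (by norm_num) (by norm_num) (2 * K + 34 - 211)
  rw [show Nat.totient 210 = 48 by decide +kernel, show 211 + (2 * K + 34 - 211) = 2 * K + 34 by omega] at this
  norm_num at h1
  omega

theorem prod_primes_le (Q : Finset ℕ) (hQp : ∀ p ∈ Q, p.Prime) (s : ℕ) (hs : ∀ p ∈ Q, p ≤ s) :
    ∏ p ∈ Q, p ≤ 4 ^ s := by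
  refine le_trans ?_ (primorial_le_four_pow s)
  unfold primorial
  apply prod_le_prod_of_subset_of_one_le'
  · intro p hp
    simp only [mem_filter, mem_range]
    exact ⟨Nat.lt_succ_of_le (hs p hp), hQp p hp⟩
  · intro p hp _
    exact (mem_filter.1 hp).2.one_lt.le

theorem choose_ratio (K a b d e : ℕ) (h : ∀ x, 2 * K ≤ x → x < 2 * K + d → a * (x + 1 - K) ≤ b * (x + 1)) (hde : d = e) :
    (2 * K).choose K * a ^ e ≤ (2 * K + d).choose K * b ^ e := by
  subst hde
  induction d with
  | zero => simp
  | succ d ih =>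
    have ih' := ih (fun x h1 h2 => h x h1 (by omega))
    have h1 := h (2 * K + d) (by omega) (by omega)
    have h2 : (2 * K + d).choose K * (2 * K + d + 1) = (2 * K + d + 1).choose K * (2 * K + d + 1 - K) :=
      Nat.choose_mul_succ_eq _ _
    have hpos : 0 < 2 * K + d + 1 - K := by omega
    apply Nat.le_of_mul_le_mul_right _ hpos
    calc (2 * K).choose K * a ^ (d + 1) * (2 * K + d + 1 - K)
        = ((2 * K).choose K * a ^ d) * (a * (2 * K + d + 1 - K)) := by ring
      _ ≤ ((2 * K + d).choose K * b ^ d) * (b * (2 * K + d + 1)) := Nat.mul_le_mul ih' h1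
      _ = ((2 * K + d).choose K * (2 * K + d + 1)) * b ^ (d + 1) := by ring
      _ = _ := by rw [h2, ← add_assoc]; ring

theorem pow_le_choose' (K m : ℕ) (h : K ≤ m) : m ^ K ≤ m.choose K * K ^ K := by
  have h1 : ∏ i ∈ range K, (m * (K - i)) ≤ ∏ i ∈ range K, ((m - i) * K) := by
    apply prod_le_prod'
    intro i hi
    rw [mem_range] at hi
    obtain ⟨a, rfl⟩ : ∃ a, K = i + a := ⟨K - i, by omega⟩
    obtain ⟨b, rfl⟩ : ∃ b, m = i + a + b := ⟨m - (i + a), by omega⟩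
    rw [show i + a - i = a by omega, show i + a + b - i = a + b by omega]
    nlinarith [Nat.zero_le (b * i)]
  rw [prod_mul_distrib, prod_mul_distrib, prod_const, prod_const, card_range,
    ← Nat.descFactorial_eq_prod_range, ← Nat.descFactorial_eq_prod_range, Nat.descFactorial_self,
    Nat.descFactorial_eq_factorial_mul_choose] at h1
  apply Nat.le_of_mul_le_mul_right _ (Nat.factorial_pos K)
  calc m ^ K * K.factorial ≤ _ := h1
    _ = _ := by ring

section logs
open Real

theorem lg5 : log 5 ≤ 1.6174 := by
  have h : log ((5:ℝ)^3) ≤ log ((2:ℝ)^7) := log_le_log (by norm_num) (by norm_num)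
  rw [log_pow, log_pow] at h
  have := log_two_lt_d9
  push_cast at h
  linarith

theorem lg3l : 1.0974 ≤ log 3 := by
  have h : log ((2:ℝ)^19) ≤ log ((3:ℝ)^12) := log_le_log (by norm_num) (by norm_num)
  rw [log_pow, log_pow] at h
  have := log_two_gt_d9
  push_cast at h
  linarith

theorem lg3u : log 3 ≤ 1.1091 := by
  have h : log ((3:ℝ)^5) ≤ log ((2:ℝ)^8) := log_le_log (by norm_num) (by norm_num)
  rw [log_pow, log_pow] at h
  have := log_two_lt_d9
  push_cast at h
  linarith

theorem lg53 : 0.5 ≤ log 5 - log 3 := by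
  have h : log ((2:ℝ)^14 * 3^19) ≤ log ((5:ℝ)^19) := log_le_log (by norm_num) (by norm_num)
  rw [log_mul (by norm_num) (by norm_num), log_pow, log_pow, log_pow] at h
  have := log_two_gt_d9
  push_cast at h
  linarith

theorem lg43 : 0.28 ≤ 2 * log 2 - log 3 := by
  have h : log ((3:ℝ)^5) ≤ log ((2:ℝ)^8) := log_le_log (by norm_num) (by norm_num)
  rw [log_pow, log_pow] at h
  have h1 : log ((3:ℝ)^12) ≤ log ((2:ℝ)^19 * (2^(1/10:ℝ))) := by
    apply log_le_log (by norm_num)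
    have : (1.02:ℝ) ≤ 2^(1/10:ℝ) := by
      rw [show (1/10:ℝ) = ((10:ℕ):ℝ)⁻¹ by norm_num]
      rw [Real.le_rpow_inv_iff_of_pos (by norm_num) (by norm_num) (by norm_num)]
      norm_num
    nlinarith
  rw [log_mul (by norm_num) (by positivity), log_pow, log_pow, log_rpow (by norm_num)] at h1
  have := log_two_gt_d9
  push_cast at h h1
  linarith

theorem lgr {r : ℝ} (hr : 50 ≤ r) : log r ≤ r / 50 + 2.9280 := by
  have h : log (r / 50) ≤ r / 50 - 1 := log_le_sub_one_of_pos (by positivity)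
  rw [log_div (by positivity) (by norm_num)] at h
  have h2 : log ((50:ℝ)^3) ≤ log ((2:ℝ)^17) := log_le_log (by norm_num) (by norm_num)
  rw [log_pow, log_pow] at h2
  have := log_two_lt_d9
  push_cast at h2
  linarith

theorem lgr_lb {r : ℝ} (hr : 50 ≤ r) : 3.8 ≤ log r := by
  have h2 : log ((2:ℝ)^11) ≤ log ((r:ℝ)^2) := log_le_log (by norm_num) (by nlinarith)
  rw [log_pow, log_pow] at h2
  have := log_two_gt_d9
  push_cast at h2
  linarith
end logs

section logs
open Real

/-- From the master inequality, with primes up to `M`. -/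
theorem big_log (K m M : ℕ) (hK : 2500 ≤ K) (hm : 2 * K ≤ m) (Q : Finset ℕ) (hQp : ∀ p ∈ Q, p.Prime)
    (hM : ∀ p ∈ Q, p ≤ M) (H : 2 ^ (2 * K - 1) * m.choose K ≤ ∏ p ∈ Q, p ^ (Nat.log p (2 * m + 1)))
    (s : ℝ) (hs : 0 ≤ s) (hs2 : (2 * m + 1 : ℝ) ≤ s ^ 2) :
    (2 * K - 1) * log 2 + log (m.choose K) ≤ 2 * M * log 2 + (s / 3 + 3) * (2 * log s) := by
  have h1 := logpow_le (N := 2 * m + 1) (by omega) Q hQp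
  have h2 := prod_primes_le Q hQp M hM
  set Q' := Q.filter (· ≤ Nat.sqrt (2 * m + 1)) with hQ'
  have h3 : Q'.card ≤ Nat.primeCounting' (Nat.sqrt (2 * m + 1) + 1) :=
    card_primes_le Q' (fun p hp => hQp p (mem_filter.1 hp).1) _ (fun p hp => (mem_filter.1 hp).2)
  have h4 := pc_third (Nat.sqrt (2 * m + 1))
  have h5 : 2 ^ (2 * K - 1) * m.choose K ≤ 4 ^ M * (2 * m + 1) ^ Q'.card :=
    (H.trans h1).trans (Nat.mul_le_mul_right _ h2)
  have h6 : ((2 ^ (2 * K - 1) * m.choose K : ℕ) : ℝ) ≤ ((4 ^ M * (2 * m + 1) ^ Q'.card : ℕ) : ℝ) := by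
    exact_mod_cast h5
  have hcp : 0 < m.choose K := Nat.choose_pos (by omega)
  have hcp' : (0:ℝ) < m.choose K := by exact_mod_cast hcp
  have h7 := log_le_log (by positivity) h6
  push_cast at h7
  rw [log_mul (by positivity) (by positivity), log_mul (by positivity) (by positivity), log_pow, log_pow, log_pow,
    show (4:ℝ) = 2 ^ 2 by norm_num, log_pow] at h7
  have e1 : ((2 * K - 1 : ℕ) : ℝ) = 2 * K - 1 := by
    rw [Nat.cast_sub (by omega)]; push_cast; ring
  rw [e1] at h7
  have hlN : 0 ≤ log (2 * m + 1 : ℝ) := log_nonneg (by have : (0:ℝ) ≤ m := by positivity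
                                                       linarith)
  have hlN2 : log (2 * m + 1 : ℝ) ≤ 2 * log s := by
    have := log_le_log (by positivity) hs2
    rw [log_pow] at this
    exact_mod_cast this
  have hsq : ((Nat.sqrt (2 * m + 1) : ℕ) : ℝ) ≤ s := by
    have : ((Nat.sqrt (2 * m + 1) : ℕ) : ℝ) ^ 2 ≤ s ^ 2 := by
      refine le_trans ?_ hs2
      exact_mod_cast Nat.sqrt_le' (2 * m + 1)
    exact abs_le_of_sq_le_sq' this hs |>.2
  have hcard : (Q'.card : ℝ) ≤ s / 3 + 3 := by
    have : (3 * Q'.card : ℝ) ≤ Nat.sqrt (2 * m + 1) + 9 := by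
      exact_mod_cast (show 3 * Q'.card ≤ _ by omega)
    linarith
  have h8 : (Q'.card : ℝ) * log (2 * m + 1 : ℝ) ≤ (s / 3 + 3) * (2 * log s) :=
    mul_le_mul hcard hlN2 hlN (by positivity)
  push_cast at h7
  linarith

theorem log_central (K : ℕ) (hK : 2500 ≤ K) : 2 * K * log 2 - (log 2 + log K) ≤ log ((2 * K).choose K) := by
  have h := Nat.four_pow_le_two_mul_self_mul_centralBinom K (by omega)
  rw [Nat.centralBinom_eq_two_mul_choose] at h
  have h6 : ((4 ^ K : ℕ) : ℝ) ≤ ((2 * K * (2 * K).choose K : ℕ) : ℝ) := by exact_mod_cast h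
  have hcp' : (0:ℝ) < (2 * K).choose K := by exact_mod_cast Nat.choose_pos (by omega)
  have hKp : (0:ℝ) < K := by exact_mod_cast (show 0 < K by omega)
  have h7 := log_le_log (by positivity) h6
  push_cast at h7
  rw [log_mul (by positivity) (by positivity), log_mul (by positivity) (by positivity), log_pow,
    show (4:ℝ) = 2 ^ 2 by norm_num, log_pow] at h7
  push_cast at h7
  linarith

theorem log_choose_mono (K a m : ℕ) (h : a ≤ m) (hK : K ≤ a) : log (a.choose K) ≤ log (m.choose K) := by
  apply log_le_log
  · exact_mod_cast Nat.choose_pos hK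
  · exact_mod_cast Nat.choose_le_choose K h

theorem log_ratio (K a b d : ℕ) (ha : 0 < a) (hb : 0 < b)
   (h : ∀ x, 2 * K ≤ x → x < 2 * K + d → a * (x + 1 - K) ≤ b * (x + 1)) :
    log ((2 * K).choose K) + d * (log a - log b) ≤ log ((2 * K + d).choose K) := by
  have h1 := choose_ratio K a b d d h rfl
  have h6 : (((2 * K).choose K * a ^ d : ℕ) : ℝ) ≤ (((2 * K + d).choose K * b ^ d : ℕ) : ℝ) := by exact_mod_cast h1
  have hcp' : (0:ℝ) < (2 * K).choose K := by exact_mod_cast Nat.choose_pos (by omega)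
  have hcp : (0:ℝ) < (2 * K + d).choose K := by exact_mod_cast Nat.choose_pos (by omega)
  have ha' : (0:ℝ) < a := by exact_mod_cast ha
  have hb' : (0:ℝ) < b := by exact_mod_cast hb
  have h7 := log_le_log (by push_cast; positivity) h6
  push_cast at h7
  rw [log_mul (by positivity) (by positivity), log_mul (by positivity) (by positivity), log_pow, log_pow] at h7
  linarith

theorem log_choose_big (K m : ℕ) (hK : 0 < K) (h : K ≤ m) : K * (log m - log K) ≤ log (m.choose K) := by
  have h1 := pow_le_choose' K m h
  have h6 : ((m ^ K : ℕ) : ℝ) ≤ ((m.choose K * K ^ K : ℕ) : ℝ) := by exact_mod_cast h1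
  have hcp : (0:ℝ) < m.choose K := by exact_mod_cast Nat.choose_pos (by omega)
  have ha' : (0:ℝ) < m := by exact_mod_cast (show 0 < m by omega)
  have hb' : (0:ℝ) < K := by exact_mod_cast hK
  have h7 := log_le_log (by push_cast; positivity) h6
  push_cast at h7
  rw [log_mul (by positivity) (by positivity), log_pow, log_pow] at h7
  linarith

theorem log_two_m (K m : ℕ) (hK : 0 < K) (h : K ≤ m) :
    log (2 * m + 1 : ℝ) ≤ log 2 + log m + 1 / K := by
  have ha' : (0:ℝ) < m := by exact_mod_cast (show 0 < m by omega)
  have hb' : (0:ℝ) < K := by exact_mod_cast hK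
  have h1 : log ((2 * m + 1 : ℝ) / (2 * m)) ≤ (2 * m + 1 : ℝ) / (2 * m) - 1 :=
    log_le_sub_one_of_pos (by positivity)
  rw [log_div (by positivity) (by positivity), log_mul (by norm_num) (by positivity)] at h1
  have h2 : (2 * m + 1 : ℝ) / (2 * m) - 1 ≤ 1 / K := by
    have : (K:ℝ) ≤ m := by exact_mod_cast h
    rw [show (2 * m + 1 : ℝ) / (2 * m) - 1 = 1 / (2 * m) by field_simp; ring]
    apply one_div_le_one_div_of_le hb'
    linarith
  linarith

set_option maxHeartbeats 1000000 in
theorem bigK (K t : ℕ) (hK : 2500 ≤ K) (ht : K + 17 ≤ t)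
    (H : ∀ i < K, ∀ p, p.Prime → p ∣ 2 * t + 1 + 2 * i → p ≤ 2 * K + 33) : False := by
  obtain ⟨m, hm⟩ : ∃ m, m = t + K - 1 := ⟨_, rfl⟩
  set Q := (range (2 * K + 34)).filter (fun p => p.Prime ∧ 3 * p ≤ 2 * m + 1) with hQ
  have hQp : ∀ p ∈ Q, p.Prime := fun p hp => (mem_filter.1 hp).2.1
  have hQ1 : ∀ p ∈ Q, p ≤ 2 * K + 33 := fun p hp => by
    have := mem_range.1 (mem_filter.1 hp).1
    omega
  have hQ2 : ∀ p ∈ Q, 3 * p ≤ 2 * m + 1 := fun p hp => (mem_filter.1 hp).2.2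
  have hmaster : 2 ^ (2 * K - 1) * m.choose K ≤ ∏ p ∈ Q, p ^ (Nat.log p (2 * m + 1)) := by
    rw [hm]
    apply win_master K t (by omega) Q hQp
    intro i hi p hp hd
    have hp2 := H i hi p hp hd
    rw [hQ, mem_filter, mem_range]
    refine ⟨by omega, hp, ?_⟩
    obtain ⟨q, hq⟩ := hd
    have hq0 : q ≠ 0 := by rintro rfl; omega
    have hq1 : q ≠ 1 := by rintro rfl; omega
    have hq2 : q ≠ 2 := by rintro rfl; omega
    have : p * 3 ≤ p * q := Nat.mul_le_mul_left _ (by omega)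
    omega
  have hm2 : 2 * K + 16 ≤ m := by omega
  clear_value Q
  clear hm ht H hQ
  -- reals
  obtain ⟨r, hr⟩ : ∃ r : ℝ, r = √K := ⟨_, rfl⟩
  have hr2 : r ^ 2 = K := by rw [hr]; exact sq_sqrt (by positivity)
  have hKR : (2500:ℝ) ≤ K := by exact_mod_cast hK
  have hr0 : 0 ≤ r := by rw [hr]; positivity
  have hr50 : 50 ≤ r := by nlinarith
  have hlr := lgr hr50
  have hlr' := lgr_lb hr50
  have hlK : log K = 2 * log r := by rw [← hr2, log_pow]; norm_cast
  have l2a := log_two_gt_d9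
  have l2b := log_two_lt_d9
  rcases Nat.lt_or_ge (2 * m) (5 * K) with c1 | c1
  · -- case I
    have hb := big_log K m (5 * K / 3) hK (by omega) Q hQp (fun p hp => by
      have := hQ2 p hp; omega) hmaster (2.24 * r) (by positivity) (by
        have : (2 * m + 1 : ℝ) ≤ 5 * K := by exact_mod_cast (show 2 * m + 1 ≤ 5 * K by omega)
        nlinarith)
    have hc := log_central K hK
    have hd := log_choose_mono K (2 * K) m (by omega) (by omega)
    have hM : ((5 * K / 3 : ℕ) : ℝ) ≤ 5 * K / 3 := by
      have := @Nat.cast_div_le ℝ _ _ _ (5 * K) 3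
      push_cast at this ⊢; exact this
    rw [log_mul (by norm_num) (by positivity)] at hb
    have l5 := lg5
    have l224 : log (2.24:ℝ) ≤ 0.82 := by
      have h : log ((2.24:ℝ)) ≤ log ((2:ℝ)) + (2.24/2 - 1) := by
        have := log_le_sub_one_of_pos (show (0:ℝ) < 2.24 / 2 by norm_num)
        rw [log_div (by norm_num) (by norm_num)] at this
        linarith
      linarith
    have hM2 : 2 * ((5 * K / 3 : ℕ) : ℝ) * log 2 ≤ 2 * (5 * K / 3) * log 2 := by
      apply mul_le_mul_of_nonneg_right _ (by linarith); linarith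
    have hp : (2.24 * r / 3 + 3) * (2 * (log 2.24 + log r)) ≤ (2.24 * r / 3 + 3) * (2 * (0.82 + (r / 50 + 2.928))) := by
      apply mul_le_mul_of_nonneg_left _ (by positivity); linarith
    have hq : (2 * K / 3) * log 2 ≥ (2 * K / 3) * 0.693 := by
      apply mul_le_mul_of_nonneg_left _ (by positivity); linarith
    nlinarith
  have hm8 : ∀ (s : ℝ), 0 ≤ s → (2 * m + 1 : ℝ) ≤ s ^ 2 → (2 * K - 1) * log 2 + log (m.choose K) ≤ 2 * (2 * K + 33) * log 2 + (s / 3 + 3) * (2 * log s) := by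
    intro s hs hs2
    have := big_log K m (2 * K + 33) hK (by omega) Q hQp hQ1 hmaster s hs hs2
    push_cast at this; exact this
  rcases Nat.lt_or_ge m (4 * K) with c2 | c2
  · have hb := hm8 (2.83 * r) (by positivity) (by
        have : (2 * m + 1 : ℝ) ≤ 8 * K := by exact_mod_cast (show 2 * m + 1 ≤ 8 * K by omega)
        nlinarith)
    have hc := log_central K hK
    have hd := log_choose_mono K (2 * K + K / 2) m (by omega) (by omega)
    have he := log_ratio K 5 3 (K / 2) (by norm_num) (by norm_num) (by intro x h1 h2; omega)
    have hM : (K:ℝ) / 2 - 1 / 2 ≤ ((K / 2 : ℕ) : ℝ) := by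
      have : (K : ℝ) ≤ 2 * ((K / 2 : ℕ) : ℝ) + 1 := by exact_mod_cast (show K ≤ 2 * (K / 2) + 1 by omega)
      linarith
    rw [log_mul (by norm_num) (by positivity)] at hb
    have l53 := lg53
    have l283 : log (2.83:ℝ) ≤ 1.09 := by
      have h : log (2.83 ^ 2 : ℝ) ≤ 2.18 := by
        have := log_le_sub_one_of_pos (show (0:ℝ) < 2.83 ^ 2 / 2 ^ 3 by norm_num)
        rw [log_div (by norm_num) (by norm_num), show log ((2:ℝ)^3) = 3 * log 2 by rw [log_pow]; norm_cast] at this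
        linarith
      rw [log_pow] at h
      push_cast at h
      linarith
    have hp : (2.83 * r / 3 + 3) * (2 * (log 2.83 + log r)) ≤ (2.83 * r / 3 + 3) * (2 * (1.09 + (r / 50 + 2.928))) := by
      apply mul_le_mul_of_nonneg_left _ (by positivity); linarith
    have hq : ((K / 2 : ℕ) : ℝ) * (log (5:ℕ) - log (3:ℕ)) ≥ (K / 2 - 1 / 2) * 0.5 := by
      apply mul_le_mul hM _ (by norm_num) (by positivity)
      push_cast; linarith
    nlinarith
  rcases Nat.lt_or_ge m (8 * K) with c3 | c3
  · have hb := hm8 (4 * r) (by positivity) (by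
        have : (2 * m + 1 : ℝ) ≤ 16 * K := by exact_mod_cast (show 2 * m + 1 ≤ 16 * K by omega)
        nlinarith)
    have hc := log_central K hK
    have hd := log_choose_mono K (2 * K + 2 * K) m (by omega) (by omega)
    have he := log_ratio K 4 3 (2 * K) (by norm_num) (by norm_num) (by intro x h1 h2; omega)
    rw [log_mul (by norm_num) (by positivity)] at hb
    have l43 := lg43
    have l4 : log (4:ℝ) = 2 * log 2 := by rw [show (4:ℝ) = 2 ^ 2 by norm_num, log_pow]; norm_cast
    have hp : (4 * r / 3 + 3) * (2 * (log 4 + log r)) ≤ (4 * r / 3 + 3) * (2 * (1.387 + (r / 50 + 2.928))) := by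
      apply mul_le_mul_of_nonneg_left _ (by positivity); linarith
    have hq : ((2 * K : ℕ) : ℝ) * (log (4:ℕ) - log (3:ℕ)) ≥ (2 * K) * 0.28 := by
      push_cast
      apply mul_le_mul_of_nonneg_left _ (by positivity)
      linarith
    have he3 : log ((2 * K).choose K) + (2 * K) * 0.28 ≤ log (m.choose K) :=
      le_trans (add_le_add le_rfl hq) (he.trans hd)
    clear he hq hd
    have hfin : 0.56 * (K:ℝ) ≤ 55 + r / 25 + (4 * r / 3 + 3) * (2 * (1.387 + (r / 50 + 2.928))) := by
      linarith
    rw [← hr2] at hfin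
    nlinarith
  have hKpos : (0:ℝ) < K := by linarith
  have hlb := log_choose_big K m (by omega) (by omega)
  have hl2m := log_two_m K m (by omega) (by omega)
  have hmR : (8 * K : ℝ) ≤ m := by exact_mod_cast c3
  have hmpos : (0:ℝ) < m := by linarith
  have hKinv : (K:ℝ) * (1 / K) = 1 := by field_simp
  rcases Nat.lt_or_ge (6 * m) (K ^ 2) with c4 | c4
  · -- concavity
    obtain ⟨s, hs⟩ : ∃ s : ℝ, s = √(2 * m + 1) := ⟨_, rfl⟩
    have hs2 : s ^ 2 = 2 * m + 1 := by rw [hs]; exact sq_sqrt (by positivity)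
    have hs0 : 0 ≤ s := by rw [hs]; positivity
    have hs1 : 4 * r ≤ s := by
      apply abs_le_of_sq_le_sq' _ hs0 |>.2
      nlinarith
    have hsu : s ≤ 0.6 * K := by
      apply abs_le_of_sq_le_sq' _ (by positivity) |>.2
      have : (6 * m : ℝ) ≤ K ^ 2 := by exact_mod_cast c4.le
      nlinarith
    have hb := hm8 s hs0 hs2.ge
    have hlN : log (2 * m + 1 : ℝ) = 2 * log s := by rw [← hs2, log_pow]; norm_cast
    rw [hlN] at hl2m
    have hconc : ConcaveOn ℝ (Set.Ici (0:ℝ) ∩ Set.Ioi 0) (fun x : ℝ => (2 * K - 6) * log x - (2 / 3) * (x * log x)) := by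
      have hcv : Convex ℝ (Set.Ici (0:ℝ) ∩ Set.Ioi 0) := (convex_Ici 0).inter (convex_Ioi 0)
      have h1 : ConcaveOn ℝ (Set.Ici (0:ℝ) ∩ Set.Ioi 0) (fun x : ℝ => (2 * K - 6) * log x) := by
        have := (strictConcaveOn_log_Ioi.concaveOn).subset Set.inter_subset_right hcv
        exact this.smul (show (0:ℝ) ≤ 2 * K - 6 by linarith)
      have h2 : ConvexOn ℝ (Set.Ici (0:ℝ) ∩ Set.Ioi 0) (fun x : ℝ => (2 / 3) * (x * log x)) := by
        have := (convexOn_mul_log).subset Set.inter_subset_left hcv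
        exact this.smul (show (0:ℝ) ≤ 2 / 3 by norm_num)
      exact h1.sub h2
    have hmin := hconc.min_le_of_mem_Icc (x := 4 * r) (y := 0.6 * K) (z := s)
      ⟨by simp; positivity, by simp; positivity⟩ ⟨by simp only [Set.mem_Ici]; positivity, by simp only [Set.mem_Ioi]; positivity⟩ ⟨hs1, hsu⟩
    have hfs : (2 * K - 6) * log s - (2 / 3) * (s * log s) ≤ K * (3 * log 2 + log K) + 67 * log 2 + 1 := by
      have : (K:ℝ) * (2 * log s) ≤ K * (log 2 + log m + 1 / K) := mul_le_mul_of_nonneg_left hl2m hKpos.le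
      nlinarith
    have l4 : log (4:ℝ) = 2 * log 2 := by rw [show (4:ℝ) = 2 ^ 2 by norm_num, log_pow]; norm_cast
    rw [min_le_iff] at hmin
    rcases hmin with hmin | hmin
    · rw [log_mul (by norm_num) (by positivity), l4] at hmin
      have h9 := hmin.trans hfs
      rw [hlK] at h9
      have hp : (6 + 8 / 3 * r) * (2 * log 2 + log r) ≤ (6 + 8 / 3 * r) * (1.387 + (r / 50 + 2.928)) := by
        apply mul_le_mul_of_nonneg_left _ (by positivity); linarith
      have hq : (K:ℝ) * log 2 ≥ K * 0.693 := by
        apply mul_le_mul_of_nonneg_left _ (by positivity); linarith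
      nlinarith
    · rw [log_mul (by norm_num) (by positivity)] at hmin
      have h9 := hmin.trans hfs
      have l06 : -0.52 ≤ log (0.6:ℝ) := by
        rw [show (0.6:ℝ) = 3 / 5 by norm_num, log_div (by norm_num) (by norm_num)]
        linarith [lg3l, lg5]
      have hKl : 7.6 ≤ log K := by linarith
      have hp : (1.6 * K - 6) * log 0.6 ≥ (1.6 * K - 6) * (-0.52) :=
        mul_le_mul_of_nonneg_left l06 (by linarith)
      have hp2 : (0.6 * K - 6) * log K ≥ (0.6 * K - 6) * 7.6 :=
        mul_le_mul_of_nonneg_left hKl (by linarith)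
      have hq : (K:ℝ) * log 2 ≤ K * 0.694 := by
        apply mul_le_mul_of_nonneg_left _ (by positivity); linarith
      nlinarith
  · -- case V
    have h1 := hmaster.trans (logpow_le' (N := 2 * m + 1) (by omega) Q)
    have h2 : Q.card ≤ Nat.primeCounting' (2 * K + 34) := card_primes_le Q hQp (2 * K + 33) hQ1
    have h3 := pc_half K hK
    have hcard : (Q.card : ℝ) ≤ K / 2 := by
      have : (2 * Q.card : ℝ) ≤ K := by exact_mod_cast (show 2 * Q.card ≤ K by omega)
      linarith
    have h6 : ((2 ^ (2 * K - 1) * m.choose K : ℕ) : ℝ) ≤ (((2 * m + 1) ^ Q.card : ℕ) : ℝ) := by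
      exact_mod_cast h1
    have hcp' : (0:ℝ) < m.choose K := by exact_mod_cast Nat.choose_pos (by omega)
    have h7 := log_le_log (by push_cast; positivity) h6
    push_cast at h7
    rw [log_mul (by positivity) (by positivity), log_pow, log_pow] at h7
    have e1 : ((2 * K - 1 : ℕ) : ℝ) = 2 * K - 1 := by
      rw [Nat.cast_sub (by omega)]; push_cast; ring
    rw [e1] at h7
    have hlN : 0 ≤ log (2 * m + 1 : ℝ) := log_nonneg (by linarith)
    have h8 : (Q.card : ℝ) * log (2 * m + 1 : ℝ) ≤ (K / 2) * (log 2 + log m + 1 / K) :=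
      mul_le_mul hcard hl2m hlN (by positivity)
    have h9 : 2 * log K ≤ log 2 + log 3 + log m := by
      have : ((K:ℝ) ^ 2) ≤ 2 * 3 * m := by
        have : ((K:ℝ) ^ 2) ≤ 6 * m := by exact_mod_cast c4
        linarith
      have := log_le_log (by positivity) this
      rw [log_pow, log_mul (by norm_num) (by positivity), log_mul (by norm_num) (by norm_num)] at this
      exact_mod_cast this
    have l3 := lg3u
    have h10 : (K:ℝ) / 2 * (log m) ≥ K / 2 * (2 * log K - log 2 - log 3) :=
      mul_le_mul_of_nonneg_left (by linarith) (by positivity)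
    have h11 : (K:ℝ) * (log 2) ≥ K * 0.693 := mul_le_mul_of_nonneg_left (by linarith) (by positivity)
    have h12 : (K:ℝ) * (log 3) ≤ K * 1.1091 := mul_le_mul_of_nonneg_left (by linarith) (by positivity)
    nlinarith
end logs

/-- evaluate `x` before passing it on (the kernel does it) -/
def force {α : Type} (x : ℕ) (f : ℕ → α) : α :=
  match x with
  | 0 => f 0
  | m + 1 => f (m + 1)

theorem force_eq {α : Type} (x : ℕ) (f : ℕ → α) : force x f = f x := by
  cases x <;> rfl

/-- product of the odd primes up to 67 -/
def PR : ℕ := [3,5,7,11,13,17,19,23,29,31,37,41,43,47,53,59,61,67].prod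

def cand (m : ℕ) : Bool :=
  if m < 121 then (Nat.gcd m 105 == 1) || m == 3 || m == 5 || m == 7 else Nat.gcd m PR == 1

theorem coprime_list {p : ℕ} (hp : p.Prime) (L : List ℕ) (hL : ∀ x ∈ L, 0 < x ∧ x < p) : Nat.gcd p L.prod = 1 := by
  rw [← Nat.Coprime, Nat.Prime.coprime_iff_not_dvd hp]
  intro hd
  rw [Prime.dvd_prod_iff hp.prime] at hd
  obtain ⟨a, ha, hda⟩ := hd
  have := hL a ha
  have := Nat.le_of_dvd this.1 hda
  omega

theorem cand_prime {p : ℕ} (hp : p.Prime) (hodd : p % 2 = 1) : cand p = true := by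
  unfold cand
  split_ifs with h
  · rcases Nat.lt_or_ge p 8 with h8 | h8
    · have := hp.two_le
      interval_cases p <;> first | rfl | omega
    · have := coprime_list hp [3,5,7] (by
        intro x hx; simp only [List.mem_cons, List.not_mem_nil, or_false] at hx; omega)
      norm_num at this
      simp [this]
  · have := coprime_list hp [3,5,7,11,13,17,19,23,29,31,37,41,43,47,53,59,61,67] (by
        intro x hx; simp only [List.mem_cons, List.not_mem_nil, or_false] at hx; omega)
    unfold PR
    simp only [beq_iff_eq]
    exact this

def oddPr (k : ℕ) : Finset ℕ := (range (2 * k + 1)).filter (fun p => p.Prime ∧ p % 2 = 1)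

theorem oddPr_succ (k : ℕ) : (oddPr (k + 1)).card ≤ (oddPr k).card + (if cand (2 * k + 1) then 1 else 0) := by
  have hsub : oddPr (k + 1) ⊆ oddPr k ∪ (if cand (2 * k + 1) then {2 * k + 1} else ∅) := by
    intro p hp
    simp only [oddPr, mem_filter, mem_range] at hp
    rw [mem_union]
    rcases Nat.lt_or_ge p (2 * k + 1) with h | h
    · left; simp only [oddPr, mem_filter, mem_range]; exact ⟨h, hp.2⟩
    · right
      have : p = 2 * k + 1 := by omega
      rw [if_pos (this ▸ cand_prime hp.2.1 hp.2.2)]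
      simp [this]
  refine (card_le_card hsub).trans ((card_union_le _ _).trans ?_)
  split_ifs <;> simp

def mloop : ℕ → ℕ → ℕ → ℕ → Bool
  | 0, _, _, _ => true
  | f + 1, k, cnt, fa =>
    Nat.ble ((3 * k) ^ (k - cnt) * 2 ^ (k - 1)) fa == false &&
      force (k + 1) fun k' => force (cnt + (if cand (2 * k + 1) then 1 else 0)) fun c' =>
        force (fa * (k + 1)) fun fa' => mloop f k' c' fa'

theorem mloop_spec (f k cnt fa : ℕ) (h : mloop f k cnt fa = true) (hc : (oddPr k).card ≤ cnt)
    (hfa : fa = k.factorial) (j : ℕ) (h1 : k ≤ j) (h2 : j < k + f) :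
    j.factorial < (3 * j) ^ (j - (oddPr j).card) * 2 ^ (j - 1) := by
  induction f generalizing k cnt fa with
  | zero => omega
  | succ f ih =>
    simp only [mloop, force_eq, Bool.and_eq_true, beq_iff_eq] at h
    rcases Nat.eq_or_lt_of_le h1 with h3 | h3
    · subst h3
      have h4 := h.1
      have h5 : ¬ ((3 * k) ^ (k - cnt) * 2 ^ (k - 1) ≤ fa) := by
        intro hle
        rw [Nat.ble_eq_true_of_le hle] at h4
        cases h4
      rw [hfa, not_le] at h5
      refine h5.trans_le (Nat.mul_le_mul_right _ ?_)
      rcases Nat.eq_zero_or_pos k with h0 | h0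
      · subst h0; simp
      · exact Nat.pow_le_pow_right (by omega) (by omega)
    · refine ih (k + 1) _ _ h.2 ?_ ?_ (by omega) (by omega)
      · have := oddPr_succ k
        omega
      · rw [Nat.factorial_succ, hfa, mul_comm]

theorem oddPr_small : (oddPr 17).card ≤ 10 := by decide +kernel

theorem mloop_ok : mloop 2503 17 10 (Nat.factorial 17) = true := by decide +kernel

def isPr (m : ℕ) : Bool := Nat.ble 2 m && Nat.ble m 528 && (Nat.gcd m 9699690 == 1)

theorem isPr_prime {m : ℕ} (h : isPr m = true) : m.Prime := by
  simp only [isPr, Bool.and_eq_true, Nat.ble_eq, beq_iff_eq] at h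
  obtain ⟨⟨h2, h3⟩, h4⟩ := h
  by_contra hnp
  have h5 := Nat.minFac_sq_le_self (by omega) hnp
  have h6 : m.minFac < 23 := by
    by_contra hcon
    have : 23 * 23 ≤ m.minFac ^ 2 := by rw [pow_two]; exact Nat.mul_le_mul (by omega) (by omega)
    omega
  have h7 := Nat.minFac_prime (n := m) (by omega)
  have h8 : m.minFac ∣ 9699690 := by
    generalize m.minFac = q at *
    interval_cases q <;> first | (exfalso; revert h7; norm_num; done) | decide
  have h9 : m.minFac ∣ 1 := by
    rw [← h4]; exact Nat.dvd_gcd (Nat.minFac_dvd m) h8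
  have := h7.one_lt
  have := Nat.le_of_dvd one_pos h9
  omega

def wchk (k c : ℕ) : Bool := (List.range k).any fun i => Nat.ble (2 * k + 1) (c + 2 * i) && isPr (c + 2 * i)

def schk (k : ℕ) : Bool :=
  (List.range (3 * k)).all fun c => c % 2 == 0 || Nat.ble (c + 34) (2 * k) || (k == 17 && Nat.ble c 3) || wchk k c

theorem schk_ok : ((List.range 83).all fun k => schk (k + 17)) = true := by decide +kernel

theorem ladder (k : ℕ) (h1 : 100 ≤ k) (h2 : k < 2520) : ∃ q, q.Prime ∧ 3 * k ≤ q ∧ q + 35 ≤ 4 * k := by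
  rcases Nat.lt_or_ge k 120 with h | h; · exact ⟨359, by norm_num, by omega, by omega⟩
  rcases Nat.lt_or_ge k 148 with h | h; · exact ⟨443, by norm_num, by omega, by omega⟩
  rcases Nat.lt_or_ge k 186 with h | h; · exact ⟨557, by norm_num, by omega, by omega⟩
  rcases Nat.lt_or_ge k 237 with h | h; · exact ⟨709, by norm_num, by omega, by omega⟩
  rcases Nat.lt_or_ge k 304 with h | h; · exact ⟨911, by norm_num, by omega, by omega⟩
  rcases Nat.lt_or_ge k 393 with h | h; · exact ⟨1181, by norm_num, by omega, by omega⟩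
  rcases Nat.lt_or_ge k 511 with h | h; · exact ⟨1531, by norm_num, by omega, by omega⟩
  rcases Nat.lt_or_ge k 668 with h | h; · exact ⟨2003, by norm_num, by omega, by omega⟩
  rcases Nat.lt_or_ge k 878 with h | h; · exact ⟨2633, by norm_num, by omega, by omega⟩
  rcases Nat.lt_or_ge k 1157 with h | h; · exact ⟨3469, by norm_num, by omega, by omega⟩
  rcases Nat.lt_or_ge k 1531 with h | h; · exact ⟨4591, by norm_num, by omega, by omega⟩
  rcases Nat.lt_or_ge k 2030 with h | h; · exact ⟨6089, by norm_num, by omega, by omega⟩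
  exact ⟨8081, by norm_num, by omega, by omega⟩

/-- There is a prime larger than `2 * k` dividing one of the terms. -/
theorem win_all (k c : ℕ) (hk : 17 ≤ k) (hc : c % 2 = 1) (hkc : 2 * k ≤ c + 33) (hex : ¬ (k = 17 ∧ c ≤ 3))
    (H : ∀ i < k, ∀ p, p.Prime → p ∣ c + 2 * i → p ≤ 2 * k) : False := by
  rcases Nat.lt_or_ge k 2520 with hk2 | hk2
  · have hc3 : c < 3 * k := by
      by_contra hcon
      have h1 := win_removal k c (by omega) hc (oddPr k) (by
        intro i hi p hp hd
        simp only [oddPr, mem_filter, mem_range]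
        refine ⟨Nat.lt_succ_of_le (H i hi p hp hd), hp, ?_⟩
        rcases hp.eq_two_or_odd with h2 | h2
        · subst h2; omega
        · exact h2)
      have h2 := mloop_spec _ _ _ _ mloop_ok oddPr_small rfl k hk (by omega)
      have h3 : (3 * k) ^ (k - (oddPr k).card) * 2 ^ (k - 1) ≤ c ^ (k - (oddPr k).card) * 2 ^ (k - 1) :=
        Nat.mul_le_mul_right _ (Nat.pow_le_pow_left (by omega) _)
      omega
    rcases Nat.lt_or_ge k 100 with h100 | h100
    · have h1 := List.all_eq_true.1 schk_ok (k - 17) (by simp; omega)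
      rw [show k - 17 + 17 = k by omega] at h1
      have h2 := List.all_eq_true.1 h1 c (by simpa using hc3)
      simp only [Bool.or_eq_true, Bool.and_eq_true, beq_iff_eq, Nat.ble_eq] at h2
      rcases h2 with ((h2 | h2) | h2) | h2
      · omega
      · omega
      · exact hex h2
      · obtain ⟨i, hi, h3⟩ := List.any_eq_true.1 h2
        simp only [Bool.and_eq_true, Nat.ble_eq] at h3
        have := H i (by simpa using hi) _ (isPr_prime h3.2) dvd_rfl
        omega
    · obtain ⟨q, hq, h1, h2⟩ := ladder k h100 hk2
      have hodd : q % 2 = 1 := by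
        rcases hq.eq_two_or_odd with h | h
        · omega
        · exact h
      have := H ((q - c) / 2) (by omega) q hq (by rw [show c + 2 * ((q - c) / 2) = q by omega])
      omega
  · apply bigK (k - 17) ((c + 33) / 2) (by omega) (by omega)
    intro i hi p hp hd
    have := H (i + 17) (by omega) p hp (by
      rw [show c + 2 * (i + 17) = 2 * ((c + 33) / 2) + 1 + 2 * i by omega]; exact hd)
    rcases hp.eq_two_or_odd with h | h
    · omega
    · omega

theorem blt_t {a b : ℕ} (h : a < b) : Nat.blt a b = true := by rw [Nat.blt_eq]; exact h
theorem blt_f {a b : ℕ} (h : ¬ a < b) : Nat.blt a b = false := by rw [← Bool.not_eq_true, Nat.blt_eq]; exact h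
theorem beq_t {a b : ℕ} (h : a = b) : Nat.beq a b = true := by rw [Nat.beq_eq]; exact h

/-- Erdos removal: smooth terms, for each prime drop a term with the largest valuation. -/
theorem erdos_core {ι : Type*} [DecidableEq ι] (I : Finset ι) (hI : I.Nonempty) (x : ι → ℕ) (P : Finset ℕ) (M : ℕ → ℕ) (m : ℕ)
    (hP : ∀ p ∈ P, p.Prime) (hx : ∀ d ∈ I, m ≤ x d) (hm : 1 ≤ m)
    (hs : ∀ d ∈ I, ∀ p, p.Prime → p ∣ x d → p ∈ P)
    (hM : ∀ p ∈ P, ∀ d0 ∈ I, (∀ d ∈ I, padicValNat p (x d) ≤ padicValNat p (x d0)) →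
      ∏ d ∈ I.erase d0, p ^ padicValNat p (x d) ≤ M p) :
    m ^ (I.card - P.card) ≤ ∏ p ∈ P, M p := by
  have hex : ∀ p, ∃ d0 ∈ I, ∀ d ∈ I, padicValNat p (x d) ≤ padicValNat p (x d0) :=
    fun p => I.exists_max_image (fun d => padicValNat p (x d)) hI
  choose f hf1 hf2 using hex
  set R := I \ P.image f with hR
  have hcard : I.card - P.card ≤ R.card := by
    have h1 := Finset.le_card_sdiff (P.image f) I
    have h2 : (P.image f).card ≤ P.card := Finset.card_image_le
    rw [← hR] at h1
    omega
  calc m ^ (I.card - P.card) ≤ m ^ R.card := Nat.pow_le_pow_right hm hcard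
    _ = ∏ d ∈ R, m := by rw [Finset.prod_const]
    _ ≤ ∏ d ∈ R, x d := Finset.prod_le_prod' fun d hd => hx d (Finset.mem_sdiff.1 hd).1
    _ = ∏ d ∈ R, ∏ p ∈ P, p ^ padicValNat p (x d) := by
        apply Finset.prod_congr rfl
        intro d hd
        have hdI := (Finset.mem_sdiff.1 hd).1
        have hx0 : x d ≠ 0 := by have := hx d hdI; omega
        conv_lhs => rw [← Nat.prod_factorization_pow_eq_self hx0]
        rw [Finsupp.prod]
        have : (x d).factorization.support ⊆ P := by
          intro p hp
          rw [Nat.support_factorization, Nat.mem_primeFactors] at hp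
          exact hs d hdI p hp.1 hp.2.1
        rw [Finset.prod_subset this]
        · apply Finset.prod_congr rfl
          intro p hp
          rw [Nat.factorization_def _ (hP p hp)]
        · intro p _ hp
          rw [Finsupp.notMem_support_iff.1 hp, pow_zero]
    _ = ∏ p ∈ P, ∏ d ∈ R, p ^ padicValNat p (x d) := Finset.prod_comm
    _ ≤ ∏ p ∈ P, M p := by
        apply Finset.prod_le_prod'
        intro p hp
        refine le_trans ?_ (hM p hp (f p) (hf1 p) (hf2 p))
        apply Finset.prod_le_prod_of_subset_of_one_le'
        · intro d hd
          rw [Finset.mem_sdiff] at hd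
          rw [Finset.mem_erase]
          refine ⟨?_, hd.1⟩
          rintro rfl
          exact hd.2 (Finset.mem_image_of_mem f hp)
        · intro d _ _
          exact Nat.one_le_pow _ _ (hP p hp).pos

/-- absolute difference -/
def ad (a b : ℕ) : ℕ := (a - b) + (b - a)

/-- offsets of the terms -/
def oo (U k d : ℕ) : ℕ := bif Nat.blt d k then 2 * d else 2 * (d - k) + 2 * U - 1

/-- the terms -/
def tm (U k n d : ℕ) : ℕ := bif Nat.blt d k then n - d else ca U (n - (d - k))

def dg (U k p d0 d : ℕ) : ℕ :=
  bif Nat.beq p 2 then (bif Nat.blt d k && Nat.blt d0 k then Nat.gcd (ad d d0) (2 ^ 20) else 1)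
  else Nat.gcd (ad (oo U k d) (oo U k d0)) (p ^ 20)

/-- `∏_{d < m, d ≠ d0} dg` -/
def rowP (U k p d0 : ℕ) : ℕ → ℕ
  | 0 => 1
  | d + 1 => (bif Nat.beq d d0 then 1 else dg U k p d0 d) * rowP U k p d0 d

def deepL {α : Type} : List ℕ → (List ℕ → α) → α
  | [], f => f []
  | a :: l, f => force a fun a => deepL l fun l => f (a :: l)

theorem deepL_eq {α : Type} (l : List ℕ) : ∀ f : List ℕ → α, deepL l f = f l := by
  induction l with
  | nil => intro f; rfl
  | cons a l ih => intro f; rw [deepL, force_eq, ih]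

def rowL (P o0 : ℕ) : List ℕ → ℕ
  | [] => 1
  | o :: l => (bif Nat.beq o o0 then 1 else Nat.gcd ((o - o0) + (o0 - o)) P) * rowL P o0 l

def maxL (P : ℕ) (os : List ℕ) : List ℕ → ℕ
  | [] => 1
  | o :: l => force (rowL P o os) fun a => force (maxL P os l) fun b => bif Nat.ble a b then b else a

def olist (f : ℕ → ℕ) : ℕ → List ℕ
  | 0 => []
  | d + 1 => f d :: olist f d

def maxR (U k p : ℕ) : ℕ :=
  deepL (bif Nat.beq p 2 then olist (fun d => d) k else olist (oo U k) (2 * k)) fun os =>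
    force (p ^ 20) fun P => maxL P os os

theorem maxL_spec (P : ℕ) (os l : List ℕ) : 1 ≤ maxL P os l ∧ ∀ o ∈ l, rowL P o os ≤ maxL P os l := by
  induction l with
  | nil => simp [maxL]
  | cons a l ih =>
    rw [maxL, force_eq, force_eq]
    by_cases hc : rowL P a os ≤ maxL P os l
    · have e : Nat.ble (rowL P a os) (maxL P os l) = true := by rw [Nat.ble_eq]; exact hc
      rw [e, cond_true]
      refine ⟨ih.1, fun o ho => ?_⟩
      rcases List.mem_cons.1 ho with rfl | ho
      · exact hc
      · exact ih.2 o ho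
    · have e : Nat.ble (rowL P a os) (maxL P os l) = false := by rw [← Bool.not_eq_true, Nat.ble_eq]; exact hc
      rw [e, cond_false]
      refine ⟨by omega, fun o ho => ?_⟩
      rcases List.mem_cons.1 ho with rfl | ho
      · exact le_rfl
      · have := ih.2 o ho; omega

theorem mem_olist (f : ℕ → ℕ) {m d : ℕ} (h : d < m) : f d ∈ olist f m := by
  induction m with
  | zero => omega
  | succ m ih =>
    rw [olist, List.mem_cons]
    rcases Nat.lt_or_ge d m with h1 | h1
    · exact Or.inr (ih h1)
    · have : d = m := by omega
      subst this; exact Or.inl rfl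

theorem oo_inj {U k d d0 : ℕ} (hU : 1 ≤ U) (hne : d ≠ d0) : oo U k d ≠ oo U k d0 := by
  unfold oo
  by_cases hc : d < k <;> by_cases hc0 : d0 < k
  · rw [blt_t hc, blt_t hc0, cond_true, cond_true]; omega
  · rw [blt_t hc, blt_f hc0, cond_true, cond_false]; omega
  · rw [blt_f hc, blt_t hc0, cond_true, cond_false]; omega
  · rw [blt_f hc, blt_f hc0, cond_false, cond_false]; omega

theorem beq_f {a b : ℕ} (h : a ≠ b) : Nat.beq a b = false := by rw [← Bool.not_eq_true, Nat.beq_eq]; exact h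

theorem rowL_oo {U k p d0 : ℕ} (hU : 1 ≤ U) (hp : p ≠ 2) (m : ℕ) :
    rowP U k p d0 m = rowL (p ^ 20) (oo U k d0) (olist (oo U k) m) := by
  induction m with
  | zero => rfl
  | succ m ih =>
    rw [rowP, olist, rowL, ih, dg, beq_f hp, cond_false]
    by_cases h : m = d0
    · subst h; rw [beq_t rfl, beq_t rfl]; rfl
    · rw [beq_f h, beq_f (oo_inj hU h)]; rfl

theorem rowL_two {U k d0 : ℕ} (hd0 : d0 < k) (m : ℕ) (hm : m ≤ k) :
    rowP U k 2 d0 m = rowL (2 ^ 20) d0 (olist (fun d => d) m) := by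
  induction m with
  | zero => rfl
  | succ m ih =>
    rw [rowP, olist, rowL, ih (by omega), dg, beq_t rfl, cond_true, blt_t (show m < k by omega), blt_t hd0]
    rfl

theorem rowP_two_ge {U k d0 : ℕ} (hd0 : d0 < k) (m : ℕ) : rowP U k 2 d0 (k + m) = rowP U k 2 d0 k := by
  induction m with
  | zero => rfl
  | succ m ih =>
    rw [← add_assoc, rowP, ih, dg, beq_t rfl, cond_true, blt_f (show ¬ k + m < k by omega), Bool.false_and, cond_false]
    rw [beq_f (show k + m ≠ d0 by omega), cond_false, one_mul]

theorem rowP_two_one {U k d0 : ℕ} (hd0 : ¬ d0 < k) (m : ℕ) : rowP U k 2 d0 m = 1 := by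
  induction m with
  | zero => rfl
  | succ m ih =>
    rw [rowP, ih, dg, beq_t rfl, cond_true, blt_f hd0, Bool.and_false, cond_false]
    cases Nat.beq m d0 <;> rfl

theorem rowP_le_maxR {U k p d0 : ℕ} (hU : 1 ≤ U) (h : d0 < 2 * k) : rowP U k p d0 (2 * k) ≤ maxR U k p := by
  rw [maxR, deepL_eq, force_eq]
  by_cases hp : p = 2
  · subst hp
    rw [beq_t rfl, cond_true]
    have e : 2 * k = k + k := by omega
    by_cases hd : d0 < k
    · rw [e, rowP_two_ge hd, rowL_two hd k le_rfl]
      exact (maxL_spec _ _ _).2 d0 (mem_olist (fun d => d) hd)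
    · rw [rowP_two_one hd]; exact (maxL_spec _ _ _).1
  · rw [beq_f hp, cond_false, rowL_oo hU hp]
    exact (maxL_spec _ _ _).2 _ (mem_olist (oo U k) h)

theorem rowP_eq (U k p d0 m : ℕ) : rowP U k p d0 m = ∏ d ∈ (range m).erase d0, dg U k p d0 d := by
  induction m with
  | zero => simp [rowP]
  | succ m ih =>
    rw [rowP, ih, Finset.range_add_one]
    by_cases h : m = d0
    · subst h
      have : Nat.beq m m = true := by rw [Nat.beq_eq]
      rw [this, cond_true, one_mul, Finset.erase_insert_eq_erase]
    · have : Nat.beq m d0 = false := by rw [← Bool.not_eq_true, Nat.beq_eq]; exact h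
      rw [this, cond_false, Finset.erase_insert_of_ne (by exact h), Finset.prod_insert (by simp)]

theorem tm_val {U k n p d0 d : ℕ} (hU : 1 ≤ U) (hU2 : U ≤ 50) (hk2 : k ≤ 50) (hp : p.Prime) (hn : 2 * U + k ≤ n) (hd : d < 2 * k)
    (hd0 : d0 < 2 * k) (hne : d ≠ d0) (hv : padicValNat p (tm U k n d) ≤ padicValNat p (tm U k n d0)) :
    p ^ padicValNat p (tm U k n d) ≤ dg U k p d0 d := by
  have : Fact p.Prime := ⟨hp⟩
  set v := padicValNat p (tm U k n d) with hvdef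
  have h1 : p ^ v ∣ tm U k n d := pow_padicValNat_dvd
  have h2 : p ^ v ∣ tm U k n d0 := (pow_dvd_pow p hv).trans pow_padicValNat_dvd
  have fin : ∀ δ, δ ≠ 0 → δ < 2 ^ 20 → p ^ v ∣ δ → p ^ v ≤ Nat.gcd δ (p ^ 20) := by
    intro δ h0 hlt hdv
    have hv20 : v ≤ 20 := by
      by_contra hcon
      have h3 := Nat.le_of_dvd (Nat.pos_of_ne_zero h0) hdv
      have h4 : 2 ^ v ≤ p ^ v := Nat.pow_le_pow_left hp.two_le _
      have h5 : 2 ^ 20 ≤ 2 ^ v := Nat.pow_le_pow_right (by norm_num) (by omega)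
      omega
    exact Nat.le_of_dvd (Nat.gcd_pos_of_pos_left _ (Nat.pos_of_ne_zero h0))
      (Nat.dvd_gcd hdv (pow_dvd_pow p hv20))
  -- twice the terms
  have hoo : ∀ d, d < 2 * k → tm U k n d ∣ 2 * n - oo U k d ∧ oo U k d ≤ 2 * n ∧ oo U k d ≤ 1000 := by
    intro d hd
    unfold tm oo ca
    by_cases hc : d < k
    · have e : Nat.blt d k = true := by rw [Nat.blt_eq]; exact hc
      simp only [e, cond_true]
      exact ⟨⟨2, by omega⟩, by omega, by omega⟩
    · have e : Nat.blt d k = false := by rw [← Bool.not_eq_true, Nat.blt_eq]; exact hc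
      simp only [e, cond_false]
      refine ⟨⟨1, by omega⟩, by omega, by omega⟩
  have hinj : oo U k d ≠ oo U k d0 := by
    unfold oo
    by_cases hc : d < k <;> by_cases hc0 : d0 < k
    · rw [blt_t hc, blt_t hc0, cond_true, cond_true]; omega
    · rw [blt_t hc, blt_f hc0, cond_true, cond_false]; omega
    · rw [blt_f hc, blt_t hc0, cond_true, cond_false]; omega
    · rw [blt_f hc, blt_f hc0, cond_false, cond_false]; omega
  by_cases hp2 : p = 2
  · subst hp2
    have e2 : Nat.beq 2 2 = true := rfl
    rw [dg, e2, cond_true]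
    by_cases hc : d < k ∧ d0 < k
    · have e : (Nat.blt d k && Nat.blt d0 k) = true := by
        rw [Bool.and_eq_true, Nat.blt_eq, Nat.blt_eq]; exact hc
      rw [e, cond_true]
      apply fin
      · unfold ad; omega
      · unfold ad; norm_num; omega
      · have t1 : tm U k n d = n - d := by
          unfold tm; rw [blt_t hc.1, cond_true]
        have t2 : tm U k n d0 = n - d0 := by
          unfold tm; rw [blt_t hc.2, cond_true]
        rw [t1] at h1; rw [t2] at h2
        have h3 : ad d d0 = (n - d - (n - d0)) + (n - d0 - (n - d)) := by unfold ad; omega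
        rw [h3]
        exact dvd_add (Nat.dvd_sub h1 h2) (Nat.dvd_sub h2 h1)
    · have e : (Nat.blt d k && Nat.blt d0 k) = false := by
        rw [← Bool.not_eq_true, Bool.and_eq_true, Nat.blt_eq, Nat.blt_eq]; exact hc
      rw [e, cond_false]
      have hodd : ∀ d, ¬ d < k → ¬ 2 ∣ tm U k n d := by
        intro d hd
        have e : Nat.blt d k = false := by rw [← Bool.not_eq_true, Nat.blt_eq]; exact hd
        unfold tm ca
        rw [e, cond_false]; omega
      have hv0 : v = 0 := by
        by_contra hv0
        have h3 : 2 ∣ 2 ^ v := dvd_pow_self 2 hv0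
        rcases not_and_or.1 hc with h | h
        · exact hodd d h (h3.trans h1)
        · exact hodd d0 h (h3.trans h2)
      rw [hv0, pow_zero]
  · have e2 : Nat.beq p 2 = false := by rw [← Bool.not_eq_true, Nat.beq_eq]; exact hp2
    rw [dg, e2, cond_false]
    obtain ⟨a1, a2, a3⟩ := hoo d hd
    obtain ⟨b1, b2, b3⟩ := hoo d0 hd0
    have h1' := h1.trans a1
    have h2' := h2.trans b1
    generalize oo U k d = o at *
    generalize oo U k d0 = o0 at *
    apply fin
    · unfold ad; omega
    · unfold ad; norm_num; omega
    · have h3 : ad o o0 = (2 * n - o - (2 * n - o0)) + (2 * n - o0 - (2 * n - o)) := by unfold ad; omega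
      rw [h3]
      exact dvd_add (Nat.dvd_sub h1' h2') (Nat.dvd_sub h2' h1')

def DD (U k : ℕ) : List ℕ → ℕ
  | [] => 1
  | p :: L => maxR U k p * DD U k L

theorem DD_eq (U k : ℕ) (L : List ℕ) : DD U k L = (L.map fun p => maxR U k p).prod := by
  induction L with
  | nil => rfl
  | cons a L ih => simp [DD, ih]

/-- the number theoretic core: a bound for `n` -/
theorem tm_bound {U k n : ℕ} (hU : 1 ≤ U) (hU2 : U ≤ 50) (hk : 1 ≤ k) (hk2 : k ≤ 50) (B : List ℕ) (hB : (2 :: B).Nodup)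
    (hBp : ∀ p ∈ 2 :: B, p.Prime)
    (hn : 2 * U + k ≤ n) (hs : ∀ d < 2 * k, ∀ p, p.Prime → p ∣ tm U k n d → p ∈ 2 :: B) :
    (n - k + 1) ^ (2 * k - (B.length + 1)) ≤ DD U k (2 :: B) := by
  have h := erdos_core (range (2 * k)) ⟨0, by simp; omega⟩ (tm U k n) (2 :: B).toFinset
    (fun p => maxR U k p) (n - k + 1) (by simpa using hBp) (by
      intro d hd
      rw [Finset.mem_range] at hd
      unfold tm ca
      by_cases hc : d < k
      · rw [blt_t hc, cond_true]; omega
      · rw [blt_f hc, cond_false]; omega) (by omega) (by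
      intro d hd p hp hdv
      rw [List.mem_toFinset]
      exact hs d (by simpa using hd) p hp hdv) (by
      intro p hp d0 hd0 hmax
      rw [List.mem_toFinset] at hp
      rw [Finset.mem_range] at hd0
      refine le_trans ?_ (rowP_le_maxR hU hd0)
      rw [rowP_eq]
      apply Finset.prod_le_prod'
      intro d hd
      rw [Finset.mem_erase, Finset.mem_range] at hd
      exact tm_val hU hU2 hk2 (hBp p hp) hn hd.2 hd0 hd.1 (hmax d (by simpa using hd.2)))
  rw [Finset.card_range, List.toFinset_card_of_nodup hB, List.prod_toFinset _ hB, ← DD_eq] at h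
  simpa using h

theorem dvd_pow20 {x : ℕ} (L : List ℕ) (hx : x ≠ 0) (hx2 : x < 2 ^ 20) (h : ∀ p, p.Prime → p ∣ x → p ∈ L) (hL : ∀ p ∈ L, p ≠ 0) :
    x ∣ L.prod ^ 20 := by
  have hL0 : L.prod ≠ 0 := by
    rw [Ne, List.prod_eq_zero_iff]; exact fun h0 => hL 0 h0 rfl
  rw [← Nat.factorization_le_iff_dvd hx (pow_ne_zero _ hL0)]
  intro p
  by_cases hp : p.Prime
  · by_cases hd : p ∣ x
    · have h1 : p ∣ L.prod := List.dvd_prod (h p hp hd)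
      have h2 : 1 ≤ L.prod.factorization p := (hp.dvd_iff_one_le_factorization hL0).1 h1
      rw [Nat.factorization_pow]
      simp only [Finsupp.smul_apply, smul_eq_mul]
      have h3 : x.factorization p < 20 := by
        have h4 := Nat.le_of_dvd (Nat.pos_of_ne_zero hx) (Nat.ordProj_dvd x p)
        by_contra hcon
        have h5 : 2 ^ x.factorization p ≤ p ^ x.factorization p := Nat.pow_le_pow_left hp.two_le _
        have h6 : 2 ^ 20 ≤ 2 ^ x.factorization p := Nat.pow_le_pow_right (by norm_num) (by omega)
        omega
      omega
    · rw [Nat.factorization_eq_zero_of_not_dvd hd]; exact Nat.zero_le _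
  · rw [Nat.factorization_eq_zero_of_not_prime _ hp]; exact Nat.zero_le _

/-- some term is not smooth -/
def nonsm (U k K n : ℕ) : ℕ → Bool
  | 0 => false
  | d + 1 => (bif Nat.beq (K % tm U k n d) 0 then false else true) || nonsm U k K n d

theorem nonsm_spec {U k K n : ℕ} (m : ℕ) (h : nonsm U k K n m = true) : ∃ d < m, ¬ tm U k n d ∣ K := by
  induction m with
  | zero => simp [nonsm] at h
  | succ m ih =>
    rw [nonsm, Bool.or_eq_true] at h
    rcases h with h | h
    · refine ⟨m, by omega, fun hd => ?_⟩
      rw [beq_t (Nat.mod_eq_zero_of_dvd hd)] at h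
      simp at h
    · obtain ⟨d, hd, h2⟩ := ih h
      exact ⟨d, by omega, h2⟩

/-- exceptional triples, treated separately -/
def exc (U n k : ℕ) : Bool :=
  Nat.beq k 2 && ((Nat.beq n 16 && (Nat.beq U 15 || Nat.beq U 16 || Nat.beq U 17)) || (Nat.beq n 4 && Nat.beq U 17))

def step (U k K n : ℕ) : Bool := nonsm U k K n (2 * k) || surv U n k || exc U n k

def scan1 (U k K D r : ℕ) : ℕ → ℕ → Bool
  | 0, _ => true
  | f + 1, n => force n fun n => (step U k K n || (Nat.ble (2 * U + k) n && Nat.blt D ((n - k + 1) ^ r)))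
      && scan1 U k K D r f (n + 1)

/-- blocks of length 100 -/
def scan2 (U k K D r : ℕ) : ℕ → ℕ → Bool
  | 0, _ => false
  | f + 1, n => force n fun n => (Nat.ble (2 * U + k) n && Nat.blt D ((n - k + 1) ^ r)) ||
      (scan1 U k K D r 100 n && scan2 U k K D r f (n + 100))

def erdOK (U k : ℕ) (B : List ℕ) : Bool :=
  force ((2 * B.prod) ^ 20) fun K => force (DD U k (2 :: B)) fun D => force (2 * k - (B.length + 1)) fun r => scan2 U k K D r 500 (2 * k)

theorem scan1_spec {U k K D r : ℕ} (f : ℕ) : ∀ n, scan1 U k K D r f n = true → ∀ m, n ≤ m → m < n + f →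
    step U k K m = true ∨ (2 * U + k ≤ m ∧ D < (m - k + 1) ^ r) := by
  induction f with
  | zero => intros; omega
  | succ f ih =>
    intro n h m h1 h2
    rw [scan1, force_eq, Bool.and_eq_true, Bool.or_eq_true, Bool.and_eq_true, Nat.ble_eq, Nat.blt_eq] at h
    rcases Nat.lt_or_ge n m with h3 | h3
    · exact ih (n + 1) h.2 m (by omega) (by omega)
    · have : m = n := by omega
      subst this; exact h.1

theorem scan2_spec {U k K D r : ℕ} (f : ℕ) : ∀ n, scan2 U k K D r f n = true → ∀ m, n ≤ m →
    (step U k K m = true ∧ m < n + 100 * f) ∨ (2 * U + k ≤ m ∧ D < (m - k + 1) ^ r) := by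
  induction f with
  | zero => intro n h; simp [scan2] at h
  | succ f ih =>
    intro n h m h1
    rw [scan2, force_eq, Bool.or_eq_true, Bool.and_eq_true, Nat.ble_eq, Nat.blt_eq, Bool.and_eq_true] at h
    rcases h with h | h
    · right
      exact ⟨by omega, lt_of_lt_of_le h.2 (Nat.pow_le_pow_left (by omega) _)⟩
    · rcases Nat.lt_or_ge m (n + 100) with h3 | h3
      · rcases scan1_spec 100 n h.1 m h1 h3 with h4 | h4
        · left; exact ⟨h4, by omega⟩
        · right; exact h4
      · rcases ih (n + 100) h.2 m h3 with h4 | h4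
        · left; exact ⟨h4.1, by omega⟩
        · right; exact h4

theorem Fac.tm_prime {U n k : ℕ} {g h : ℤ[X]} (F : Fac (-(U:ℤ)) n k g h)
    {d p : ℕ} (hd : d < 2 * k) (hp : p.Prime) (hp2 : p ≠ 2) (hdv : p ∣ tm U k n d) : (p:ℤ) ∣ g.coeff 0 := by
  have : Fact p.Prime := ⟨hp⟩
  have hodd := hp.eq_two_or_odd.resolve_left hp2
  unfold tm at hdv
  by_cases hc : d < k
  · rw [blt_t hc, cond_true] at hdv
    exact F.dvd_g0 hodd hc (Or.inl hdv)
  · rw [blt_f hc, cond_false] at hdv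
    refine F.dvd_g0 hodd (l := d - k) (by omega) (Or.inr ?_)
    rw [Int.natCast_dvd, ca_eq]; exact hdv

theorem Fac.erd_contra {U n k : ℕ} {g h : ℤ[X]} (F : Fac (-(U:ℤ)) n k g h) (hU : 1 ≤ U) (hU2 : U ≤ 50)
    (hk : 1 ≤ k) (hk2 : k ≤ 50) (hn : 2 * k ≤ n) (B : List ℕ) (hB : (2 :: B).Nodup) (hBp : ∀ p ∈ 2 :: B, p.Prime)
    (hg : ∀ p : ℕ, p.Prime → (p:ℤ) ∣ g.coeff 0 → p ∈ B) (H : erdOK U k B = true) : exc U n k = true := by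
  have hs : ∀ d < 2 * k, ∀ p, p.Prime → p ∣ tm U k n d → p ∈ 2 :: B := by
    intro d hd p hp hdv
    by_cases hp2 : p = 2
    · rw [hp2]; exact List.mem_cons_self
    · exact List.mem_cons_of_mem _ (hg p hp (F.tm_prime hd hp hp2 hdv))
  rw [erdOK, force_eq, force_eq, force_eq] at H
  rcases scan2_spec _ _ H n hn with ⟨h1, h2⟩ | ⟨h1, h2⟩
  · simp only [step, Bool.or_eq_true] at h1
    rcases h1 with (h1 | h1) | h1
    · exfalso
      obtain ⟨d, hd, hnd⟩ := nonsm_spec _ h1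
      apply hnd
      have := dvd_pow20 (x := tm U k n d) (2 :: B) (by
        unfold tm
        by_cases hc : d < k
        · rw [blt_t hc, cond_true]; omega
        · rw [blt_f hc, cond_false]; exact ca_ne _ _) (by
        unfold tm ca
        by_cases hc : d < k
        · rw [blt_t hc, cond_true]; norm_num; omega
        · rw [blt_f hc, cond_false]; norm_num; omega)
        (hs d hd) (fun p hp => (hBp p hp).ne_zero)
      simpa using this
    · exact (F.surv_contra h1).elim
    · exact h1
  · have := tm_bound hU hU2 hk hk2 B hB hBp h1 hs
    omega

section modq
variable {q : ℕ} [hq : Fact q.Prime]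

/-- reduction of `GG` modulo `q` -/
noncomputable def Gq (q : ℕ) (u : ℤ) (n : ℕ) : (ZMod q)[X] := (GG u n).map (Int.castRingHom (ZMod q))

theorem Gq_coeff (u : ℤ) (n j : ℕ) : (Gq q u n).coeff j = ((co u n j : ℤ) : ZMod q) := by
  rw [Gq, coeff_map, coeff_GG]; rfl

theorem Gq_zero (u : ℤ) : Gq q u 0 = 1 := by rw [Gq, GG_zero, Polynomial.map_one]

theorem Gq_one (u : ℤ) : Gq q u 1 = C ((cc u 1 : ℤ) : ZMod q) + X := by
  rw [Gq, GG_one]; simp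

theorem Gq_rec (u : ℤ) (n : ℕ) : Gq q u (n + 2) =
    (C ((4 * ((n:ℤ) + 2) - 1 + 2 * u : ℤ) : ZMod q) + X) * Gq q u (n + 1)
      - C ((2 * ((n:ℤ) + 1) * cc u (n + 1) : ℤ) : ZMod q) * Gq q u n := by
  rw [Gq, GG_rec, Polynomial.map_sub, Polynomial.map_mul, Polynomial.map_mul, Polynomial.map_add, map_C, map_C, map_X]
  rfl

theorem Gq_q (hodd : q % 2 = 1) (u : ℤ) : Gq q u q = X ^ q := by
  ext j
  rw [Gq_coeff, coeff_X_pow]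
  by_cases hj : j = q
  · subst hj; rw [co_self]; simp
  · rw [if_neg hj]
    rcases Nat.lt_or_ge q j with h | h
    · rw [co_zero_of_lt h]; simp
    · rw [ZMod.intCast_zmod_eq_zero_iff_dvd]
      by_cases h0 : j = 0
      · subst h0
        exact Dvd.dvd.mul_left (dvd_prod_cc hodd (by omega)) _
      · apply Dvd.dvd.mul_right
        exact_mod_cast hq.out.dvd_choose_self h0 (by omega)

theorem Gq_add (hodd : q % 2 = 1) (u : ℤ) (n : ℕ) :
    Gq q u (n + q) = X ^ q * Gq q u n ∧ Gq q u (n + 1 + q) = X ^ q * Gq q u (n + 1) := by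
  have hqz : ((q:ℤ) : ZMod q) = 0 := by simp
  induction n with
  | zero =>
    refine ⟨by rw [zero_add, Gq_q hodd, Gq_zero, mul_one], ?_⟩
    obtain ⟨r, hr⟩ : ∃ r, q = r + 1 := ⟨q - 1, by have := hq.out.pos; omega⟩
    have h1 : 0 + 1 + q = r + 2 := by omega
    have h2 : Gq q u (r + 1) = X ^ q := by rw [← hr, Gq_q hodd]
    rw [h1, Gq_rec, h2, Gq_one]
    have h3 : (((2 * ((r:ℤ) + 1) * cc u (r + 1) : ℤ)) : ZMod q) = 0 := by
      have : (r:ℤ) + 1 = q := by omega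
      rw [this]; push_cast; simp
    have h4 : (((4 * ((r:ℤ) + 2) - 1 + 2 * u : ℤ)) : ZMod q) = ((cc u 1 : ℤ) : ZMod q) := by
      have : 4 * ((r:ℤ) + 2) - 1 + 2 * u = 4 * (q:ℤ) + cc u 1 := by unfold cc; push_cast; omega
      rw [this]; push_cast; simp
    rw [h3, h4]; simp; ring
  | succ n ih =>
    refine ⟨ih.2, ?_⟩
    have h1 : n + 1 + 1 + q = (n + q) + 2 := by omega
    have h2 : n + q + 1 = n + 1 + q := by omega
    rw [h1, Gq_rec, h2, ih.1, ih.2, Gq_rec]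
    have h3 : ((2 * (((n + q : ℕ):ℤ) + 1) * cc u (n + 1 + q) : ℤ) : ZMod q)
        = ((2 * ((n:ℤ) + 1) * cc u (n + 1) : ℤ) : ZMod q) := by
      unfold cc; push_cast; simp
    have h4 : ((4 * (((n + q : ℕ):ℤ) + 2) - 1 + 2 * u : ℤ) : ZMod q) = ((4 * ((n:ℤ) + 2) - 1 + 2 * u : ℤ) : ZMod q) := by
      push_cast; simp
    rw [h3, h4]; ring

theorem Gq_mod (hodd : q % 2 = 1) (u : ℤ) (gb : (ZMod q)[X]) (hc : gb.coeff 0 ≠ 0) (m : ℕ) : ∀ s,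
    gb ∣ Gq q u (s + m * q) → gb ∣ Gq q u s := by
  have hcop : IsCoprime gb (X ^ q) := by
    apply IsCoprime.pow_right
    rw [isCoprime_comm, irreducible_X.coprime_iff_not_dvd, X_dvd_iff]
    exact hc
  induction m with
  | zero => intro s h; simpa using h
  | succ m ih =>
    intro s h
    apply ih
    have : s + (m + 1) * q = (s + m * q) + q := by ring
    rw [this, (Gq_add hodd u _).1] at h
    exact hcop.dvd_of_dvd_mul_left h

/-- list to polynomial -/
noncomputable def toP (q : ℕ) : List ℕ → (ZMod q)[X]
  | [] => 0
  | a :: l => C (a : ZMod q) + X * toP q l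

end modq

def forceL {α : Type} (l : List ℕ) (f : List ℕ → α) : α :=
  match l with
  | [] => f []
  | a :: t => f (a :: t)

theorem forceL_eq {α : Type} (l : List ℕ) (f : List ℕ → α) : forceL l f = f l := by cases l <;> rfl

/-- one recurrence step modulo `X^k - ng` -/
def stp (q A B top : ℕ) : List ℕ → List ℕ → List ℕ → ℕ → List ℕ
  | n :: ng, v, w, prev => force ((A * v.headD 0 + prev + top * n + B * w.headD 0) % q) fun x =>
      forceL (stp q A B top ng v.tail w.tail (v.headD 0)) fun l => x :: l
  | [], _, _, _ => []

def lst : List ℕ → ℕ → ℕ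
  | [], d => d
  | a :: l, _ => lst l a

def nz (q : ℕ) : List ℕ → Bool
  | [] => false
  | a :: l => (bif Nat.beq (a % q) 0 then false else true) || nz q l

def runT (U q : ℕ) (ng : List ℕ) (ok : ℕ → Bool) : ℕ → ℕ → List ℕ → List ℕ → Bool
  | 0, _, _, _ => true
  | f + 1, s, v, w => force s fun s => forceL v fun v => (ok s || nz q v) &&
      force ((4 * s + 3 + 2 * U * (q - 1)) % q) fun A =>
      force (((q - 1) * (2 * s * (2 * s + 1 + 2 * U * (q - 1)))) % q) fun B =>
      force (lst v 0) fun top =>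
      runT U q ng ok f (s + 1) (stp q A B top ng v w 0) v

def loopT (P : ℕ → Bool) : ℕ → Bool
  | 0 => true
  | m + 1 => P m && loopT P m

def allT (q : ℕ) : ℕ → (List ℕ → Bool) → Bool
  | 0, P => P []
  | m + 1, P => loopT (fun x => allT q m fun l => P (x :: l)) q

/-- the first steps, where no reduction takes place -/
def preT (U q : ℕ) (z : List ℕ) : ℕ → ℕ → List ℕ → List ℕ → (List ℕ → List ℕ → Bool) → Bool
  | 0, _, v, w, K => deepL v fun v => deepL w fun w => K v w
  | f + 1, s, v, w, K => force s fun s => deepL v fun v => Nat.beq (lst v 0) 0 &&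
      force ((4 * s + 3 + 2 * U * (q - 1)) % q) fun A =>
      force (((q - 1) * (2 * s * (2 * s + 1 + 2 * U * (q - 1)))) % q) fun B =>
      preT U q z f (s + 1) (stp q A B 0 z v w 0) v K

/-- residues excluded since a factor `cc (n - l)` would be divisible by `q` -/
def exS (U q s : ℕ) : ℕ → Bool
  | 0 => false
  | l + 1 => (Nat.ble l s && Nat.beq (ca U (s - l) % q) 0) || exS U q s l

/-- all residues from `fz` on are excluded -/
def fz (U q k : ℕ) : ℕ → ℕ
  | 0 => 0
  | f + 1 => bif exS U q f k then fz U q k f else f + 1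

/-- the certificate: for all monic `g` of degree `k = m+1` with constant term `-d`, `g ∤ G_s` unless `ok s`. -/
def tst (U m q d : ℕ) (ok : ℕ → Bool) : Bool :=
  force (fz U q (m + 1) q) fun f =>
  preT U q (0 :: List.replicate m 0) m 0 (1 :: List.replicate m 0) (0 :: List.replicate m 0) fun v w =>
  allT q m fun t => runT U q (d :: t) ok (f - m) m v w

theorem loopT_spec {P : ℕ → Bool} {m : ℕ} (h : loopT P m = true) : ∀ x < m, P x = true := by
  induction m with
  | zero => intros; omega
  | succ m ih =>
    rw [loopT, Bool.and_eq_true] at h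
    intro x hx
    rcases Nat.lt_or_ge x m with h1 | h1
    · exact ih h.2 x h1
    · have : x = m := by omega
      subst this; exact h.1

theorem allT_spec {q : ℕ} (m : ℕ) : ∀ {P : List ℕ → Bool}, allT q m P = true → ∀ l : List ℕ, l.length = m →
    (∀ x ∈ l, x < q) → P l = true := by
  induction m with
  | zero =>
    intro P h l hl _
    rw [List.length_eq_zero_iff] at hl; subst hl; exact h
  | succ m ih =>
    intro P h l hl hx
    match l, hl with
    | a :: l, hl =>
      have h1 := loopT_spec h a (hx a List.mem_cons_self)
      exact ih h1 l (by simpa using hl) fun x hx' => hx x (List.mem_cons_of_mem _ hx')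

section modq2
variable {q : ℕ} [hq : Fact q.Prime]

theorem toP_degree (l : List ℕ) : (toP q l).degree < ((l.length : ℕ) : WithBot ℕ) := by
  induction l with
  | nil => simp [toP]
  | cons a l ih =>
    rw [toP, List.length_cons]
    refine lt_of_le_of_lt (degree_add_le _ _) (max_lt ?_ ?_)
    · exact lt_of_le_of_lt degree_C_le (by exact_mod_cast Nat.succ_pos _)
    · rw [degree_mul, degree_X]
      by_cases h0 : toP q l = 0
      · rw [h0, degree_zero]; simp
      · rw [degree_eq_natDegree h0] at ih ⊢
        have : (toP q l).natDegree < l.length := by exact_mod_cast ih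
        have h2 : 1 + (toP q l).natDegree < l.length + 1 := by omega
        exact_mod_cast h2

theorem exists_list (k : ℕ) : ∀ f : (ZMod q)[X], f.degree < ((k : ℕ) : WithBot ℕ) →
    ∃ l : List ℕ, l.length = k ∧ (∀ x ∈ l, x < q) ∧ toP q l = f := by
  induction k with
  | zero =>
    intro f hf
    refine ⟨[], rfl, by simp, ?_⟩
    have : f = 0 := by rw [← degree_eq_bot]; exact (Nat.WithBot.lt_zero_iff).1 (by simpa using hf)
    rw [this, toP]
  | succ k ih =>
    intro f hf
    have hd : f.divX.degree < ((k : ℕ) : WithBot ℕ) := by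
      rw [degree_lt_iff_coeff_zero] at hf ⊢
      intro m hm
      rw [coeff_divX]
      exact hf _ (by omega)
    obtain ⟨l, h1, h2, h3⟩ := ih f.divX hd
    refine ⟨(f.coeff 0).val :: l, by simp [h1], ?_, ?_⟩
    · intro x hx
      rcases List.mem_cons.1 hx with rfl | hx
      · exact ZMod.val_lt _
      · exact h2 x hx
    · rw [toP, h3, ZMod.natCast_zmod_val, add_comm]
      exact X_mul_divX_add f

theorem stp_length (A B top : ℕ) (ng : List ℕ) : ∀ v w prev, (stp q A B top ng v w prev).length = ng.length := by
  induction ng with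
  | nil => intros; rfl
  | cons n ng ih => intro v w prev; rw [stp, force_eq, forceL_eq, List.length_cons, ih, List.length_cons]

theorem toP_stp (A B top : ℕ) (ng : List ℕ) : ∀ v w prev, v.length = ng.length → w.length = ng.length →
    toP q (stp q A B top ng v w prev) + X ^ ng.length * C ((lst v prev : ℕ) : ZMod q)
      = C (prev : ZMod q) + (C (A : ZMod q) + X) * toP q v + C (top : ZMod q) * toP q ng + C (B : ZMod q) * toP q w := by
  induction ng with
  | nil =>
    intro v w prev hv hw
    rw [List.length_nil, List.length_eq_zero_iff] at hv hw
    subst hv hw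
    simp [stp, toP, lst]
  | cons n ng ih =>
    intro v w prev hv hw
    match v, w, hv, hw with
    | a :: v, b :: w, hv, hw =>
      have := ih v w a (by simpa using hv) (by simpa using hw)
      rw [stp, force_eq, forceL_eq]
      simp only [List.headD_cons, List.tail_cons, toP, lst, List.length_cons, ZMod.natCast_mod]
      rw [pow_succ]
      push_cast
      simp only [C_add, C_mul]
      linear_combination X * this

theorem nz_spec (l : List ℕ) (h : nz q l = true) : toP q l ≠ 0 := by
  induction l with
  | nil => simp [nz] at h
  | cons a l ih =>
    intro h0
    rw [toP] at h0
    rw [nz, Bool.or_eq_true] at h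
    have hc : (a : ZMod q) = 0 := by
      have := congrArg (fun f => f.coeff 0) h0
      simpa using this
    rcases h with h | h
    · rw [ZMod.natCast_eq_zero_iff] at hc
      rw [beq_t (Nat.mod_eq_zero_of_dvd hc)] at h
      simp at h
    · apply ih h
      rw [hc, C_0, zero_add] at h0
      exact (mul_eq_zero.1 h0).resolve_left X_ne_zero

theorem runT_spec (U : ℕ) (ng : List ℕ) (gb : (ZMod q)[X]) (hgb : gb.degree = ((ng.length : ℕ) : WithBot ℕ))
    (hng : toP q ng = X ^ ng.length - gb) (ok : ℕ → Bool) (f : ℕ) : ∀ s v w, runT U q ng ok f s v w = true →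
    v.length = ng.length → w.length = ng.length → gb ∣ Gq q (-(U:ℤ)) s - toP q v →
    (∀ t, s = t + 1 → gb ∣ Gq q (-(U:ℤ)) t - toP q w) →
    ∀ i, s ≤ i → i < s + f → gb ∣ Gq q (-(U:ℤ)) i → ok i = true := by
  induction f with
  | zero => intros; omega
  | succ f ih =>
    intro s v w h hv hw h1 h2 i hi1 hi2 hdv
    rw [runT, force_eq, forceL_eq, force_eq, force_eq, force_eq, Bool.and_eq_true, Bool.or_eq_true] at h
    rcases Nat.lt_or_ge s i with h3 | h3
    · refine ih (s + 1) _ _ h.2 (stp_length _ _ _ _ _ _ _) hv ?_ ?_ i h3 (by omega) hdv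
      · have e := toP_stp (q := q) ((4 * s + 3 + 2 * U * (q - 1)) % q)
          (((q - 1) * (2 * s * (2 * s + 1 + 2 * U * (q - 1)))) % q) (lst v 0) ng v w 0 hv hw
        have hq1 : ((q - 1 : ℕ) : ZMod q) = -1 := by
          rw [Nat.cast_sub hq.out.one_le]; simp
        simp only [ZMod.natCast_mod] at e
        push_cast at e
        rw [hq1, hng] at e
        generalize stp q _ _ _ ng v w 0 = V at e ⊢
        obtain ⟨a, ha⟩ := h1
        rcases s with _ | t
        · rw [Gq_zero] at ha
          refine ⟨(C ((cc (-(U:ℤ)) 1 : ℤ) : ZMod q) + X) * a + C ((lst v 0 : ℕ) : ZMod q), ?_⟩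
          rw [zero_add, Gq_one]
          unfold cc at *
          push_cast at e ⊢
          simp only [C_add, C_mul, C_neg, C_0, C_1, mul_zero, zero_mul, zero_add] at e ⊢
          have e3 : (C 3 : (ZMod q)[X]) = C 2 + C 1 := by rw [← C_add]; norm_num
          rw [e3] at e
          simp only [C_1] at e
          linear_combination (C 2 * (-C (U : ZMod q)) + C 2 + 1 + X) * ha - e
        · obtain ⟨b, hb⟩ := h2 t rfl
          refine ⟨(C ((4 * ((t:ℤ) + 2) - 1 + 2 * (-(U:ℤ)) : ℤ) : ZMod q) + X) * a
             - C ((2 * ((t:ℤ) + 1) * cc (-(U:ℤ)) (t + 1) : ℤ) : ZMod q) * b + C ((lst v 0 : ℕ) : ZMod q), ?_⟩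
          rw [Gq_rec]
          have hA : ((4 * (t + 1 : ℕ) + 3 + 2 * U * (-1) : ZMod q)) = ((4 * ((t:ℤ) + 2) - 1 + 2 * (-(U:ℤ)) : ℤ) : ZMod q) := by
            push_cast; ring
          have hB : (-1 * (2 * (t + 1 : ℕ) * (2 * (t + 1 : ℕ) + 1 + 2 * U * (-1))) : ZMod q)
              = - ((2 * ((t:ℤ) + 1) * cc (-(U:ℤ)) (t + 1) : ℤ) : ZMod q) := by
            unfold cc; push_cast; ring
          push_cast at hA hB
          simp only [Nat.cast_add, Nat.cast_one] at e
          rw [hA, hB] at e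
          push_cast at e ⊢
          generalize C (4 * ((t : ZMod q) + 2) - 1 + 2 * (-(U : ZMod q))) = AA at e ⊢
          rw [C_neg] at e
          generalize C (2 * ((t : ZMod q) + 1) * (cc (-(U:ℤ)) (t + 1) : ZMod q)) = BB at e ⊢
          rw [C_0] at e
          linear_combination (AA + X) * ha - BB * hb - e
      · intro t ht
        have : t = s := by omega
        subst this; exact h1
    · have : i = s := by omega
      subst this
      rcases h.1 with h4 | h4
      · exact h4
      · exfalso
        have h5 : gb ∣ toP q v := by
          have := dvd_sub hdv h1
          simpa using this
        exact nz_spec v h4 (eq_zero_of_dvd_of_degree_lt h5 (by rw [hgb, ← hv]; exact toP_degree v))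

theorem toP_replicate (m : ℕ) : toP q (List.replicate m 0) = 0 := by
  induction m with
  | zero => rfl
  | succ m ih => rw [List.replicate_succ, toP, ih]; simp

theorem preT_spec (U : ℕ) (z : List ℕ) (K : List ℕ → List ℕ → Bool) (hz : toP q z = 0) (f : ℕ) : ∀ s v w, preT U q z f s v w K = true →
    v.length = z.length → w.length = z.length → Gq q (-(U:ℤ)) s = toP q v →
    (∀ t, s = t + 1 → Gq q (-(U:ℤ)) t = toP q w) →
    ∃ v w, v.length = z.length ∧ w.length = z.length ∧ Gq q (-(U:ℤ)) (s + f) = toP q v ∧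
      (∀ t, s + f = t + 1 → Gq q (-(U:ℤ)) t = toP q w) ∧ K v w = true := by
  induction f with
  | zero =>
    intro s v w h hv hw h1 h2
    rw [preT, deepL_eq, deepL_eq] at h
    exact ⟨v, w, hv, hw, h1, h2, h⟩
  | succ f ih =>
    intro s v w h hv hw h1 h2
    rw [preT, force_eq, deepL_eq, force_eq, force_eq, Bool.and_eq_true, Nat.beq_eq] at h
    have e := toP_stp (q := q) ((4 * s + 3 + 2 * U * (q - 1)) % q)
          (((q - 1) * (2 * s * (2 * s + 1 + 2 * U * (q - 1)))) % q) 0 z v w 0 hv hw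
    have key := ih (s + 1) _ v h.2 (stp_length _ _ _ _ _ _ _) hv ?_ ?_
    · obtain ⟨v', w', k1, k2, k3, k4, k5⟩ := key
      refine ⟨v', w', k1, k2, ?_, ?_, k5⟩
      · rw [← k3]; congr 1; omega
      · intro t ht; exact k4 t (by omega)
    · have hq1 : ((q - 1 : ℕ) : ZMod q) = -1 := by
        rw [Nat.cast_sub hq.out.one_le]; simp
      rw [h.1, hz] at e
      simp only [ZMod.natCast_mod] at e
      push_cast at e
      rw [hq1] at e
      simp only [C_0, mul_zero, add_zero, zero_mul, zero_add] at e
      rw [e, ← h1]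
      rcases s with _ | t
      · rw [Gq_zero, zero_add, Gq_one]
        unfold cc
        push_cast
        simp only [mul_zero, zero_mul, C_0, add_zero, mul_one, zero_add]
        congr 2; ring
      · rw [← h2 t rfl, Gq_rec]
        have hA : ((4 * (t + 1 : ℕ) + 3 + 2 * U * (-1) : ZMod q)) = ((4 * ((t:ℤ) + 2) - 1 + 2 * (-(U:ℤ)) : ℤ) : ZMod q) := by
          push_cast; ring
        have hB : (-1 * (2 * (t + 1 : ℕ) * (2 * (t + 1 : ℕ) + 1 + 2 * U * (-1))) : ZMod q)
            = - ((2 * ((t:ℤ) + 1) * cc (-(U:ℤ)) (t + 1) : ℤ) : ZMod q) := by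
          unfold cc; push_cast; ring
        rw [hA, hB, C_neg]; ring
    · intro t ht
      have : t = s := by omega
      subst this; exact h1

theorem exS_spec {U s : ℕ} (k : ℕ) (h : exS U q s k = true) : ∃ l < k, l ≤ s ∧ q ∣ ca U (s - l) := by
  induction k with
  | zero => simp [exS] at h
  | succ k ih =>
    rw [exS, Bool.or_eq_true, Bool.and_eq_true, Nat.ble_eq, Nat.beq_eq] at h
    rcases h with h | h
    · exact ⟨k, by omega, h.1, Nat.dvd_of_mod_eq_zero h.2⟩
    · obtain ⟨l, h1, h2⟩ := ih h
      exact ⟨l, by omega, h2⟩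

theorem fz_spec {U k : ℕ} (f : ℕ) : ∀ s, fz U q k f ≤ s → s < f → exS U q s k = true := by
  induction f with
  | zero => intros; omega
  | succ f ih =>
    intro s h1 h2
    rw [fz] at h1
    by_cases hc : exS U q f k = true
    · rw [hc, cond_true] at h1
      rcases Nat.lt_or_ge s f with h3 | h3
      · exact ih s h1 h3
      · have : s = f := by omega
        subst this; exact hc
    · rw [Bool.not_eq_true] at hc
      rw [hc, cond_false] at h1; omega

theorem Fac.tst (hodd : q % 2 = 1) {U n m : ℕ} {g h : ℤ[X]} (F : Fac (-(U:ℤ)) n (m + 1) g h) (d : ℕ) (ok : ℕ → Bool)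
    (hd : (q:ℤ) ∣ g.coeff 0 + d) (hg : ¬ (q:ℤ) ∣ g.coeff 0) (H : tst U m q d ok = true) : ok (n % q) = true := by
  set gb := g.map (Int.castRingHom (ZMod q)) with hgbdef
  have hmon : gb.Monic := F.mg.map _
  have hdeg : gb.natDegree = m + 1 := by rw [hgbdef, F.mg.natDegree_map, F.deg]
  have hc0 : gb.coeff 0 = ((g.coeff 0 : ℤ) : ZMod q) := by rw [hgbdef, coeff_map]; rfl
  have hc : gb.coeff 0 ≠ 0 := by
    rw [hc0, Ne, ZMod.intCast_zmod_eq_zero_iff_dvd]; exact hg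
  have hcd : (X ^ (m + 1) - gb).coeff 0 = (d : ZMod q) := by
    have h1 : ((g.coeff 0 + d : ℤ) : ZMod q) = 0 := by rw [ZMod.intCast_zmod_eq_zero_iff_dvd]; exact hd
    push_cast at h1
    rw [coeff_sub, hc0, coeff_X_pow, if_neg (by omega)]
    linear_combination -h1
  have hdivX : (X ^ (m + 1) - gb).divX.degree < ((m : ℕ) : WithBot ℕ) := by
    rw [degree_lt_iff_coeff_zero]
    intro i hi
    rw [coeff_divX, coeff_sub, coeff_X_pow]
    rcases Nat.lt_or_ge m i with h1 | h1
    · rw [if_neg (by omega), coeff_eq_zero_of_natDegree_lt (by omega), sub_zero]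
    · have : i = m := by omega
      subst this
      rw [if_pos rfl, ← hdeg, hmon.coeff_natDegree, sub_self]
  obtain ⟨t, ht1, ht2, ht3⟩ := exists_list m _ hdivX
  have hng : toP q (d :: t) = X ^ (d :: t).length - gb := by
    rw [toP, ht3, ← hcd, List.length_cons, ht1, add_comm]
    exact X_mul_divX_add _
  rw [_root_.tst, force_eq] at H
  obtain ⟨v, w, hv, hw, h1, h2, H⟩ := preT_spec U (0 :: List.replicate m 0) _ (by rw [toP, toP_replicate]; simp) m 0 _ _ H rfl rfl
    (by rw [Gq_zero, toP, toP_replicate]; simp) (by intro t ht; omega)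
  rw [List.length_cons, List.length_replicate] at hv hw
  rw [zero_add] at h1 h2
  have hlt : n % q < q := Nat.mod_lt _ hq.out.pos
  have hdvd : gb ∣ Gq q (-(U:ℤ)) (n % q) := by
    apply Gq_mod hodd _ gb hc (n / q)
    rw [Nat.mod_add_div']
    refine ⟨h.map (Int.castRingHom (ZMod q)), ?_⟩
    rw [Gq, ← F.eq, Polynomial.map_mul]
  rcases Nat.lt_or_ge (n % q) m with hs | hs
  · exfalso
    have hm2 : (Gq q (-(U:ℤ)) (n % q)).Monic := (GG_monic _ _).map _
    have h3 := natDegree_le_of_dvd hdvd hm2.ne_zero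
    rw [hdeg, Gq, (GG_monic _ _).natDegree_map, GG_natDegree] at h3
    omega
  rcases Nat.lt_or_ge (n % q) (fz U q (m + 1) q) with hs2 | hs2
  · have hr := allT_spec m H t ht1 ht2
    refine runT_spec U (d :: t) gb ?_ hng ok _ m _ _ hr ?_ ?_ ?_ ?_ (n % q) hs (by omega) hdvd
    · rw [degree_eq_natDegree hmon.ne_zero, hdeg, List.length_cons, ht1]
    · simp [ht1, hv]
    · simp [ht1, hw]
    · rw [h1, sub_self]; exact dvd_zero _
    · intro t ht; rw [h2 t ht, sub_self]; exact dvd_zero _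
  · exfalso
    obtain ⟨l, hl1, hl2, hl3⟩ := exS_spec _ (fz_spec _ _ hs2 hlt)
    apply hg
    refine F.dvd_g0 hodd (l := l) hl1 (Or.inr ?_)
    rw [← ca_eq, ← Int.natCast_dvd] at hl3
    have hnl : ((n - l : ℕ) : ℤ) = ((n % q - l : ℕ) : ℤ) + q * ((n / q : ℕ) : ℤ) := by
      have := Nat.mod_add_div n q
      have h9 : n - l = (n % q - l) + q * (n / q) := by omega
      rw [h9]; push_cast; rfl
    unfold cc at hl3 ⊢
    rw [hnl]
    have : 2 * (((n % q - l : ℕ) : ℤ) + q * ((n / q : ℕ) : ℤ)) + 2 * (-(U:ℤ)) + 1 =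
      (2 * ((n % q - l : ℕ) : ℤ) + 2 * (-(U:ℤ)) + 1) + q * (2 * ((n / q : ℕ) : ℤ)) := by ring
    rw [this]
    exact dvd_add hl3 (dvd_mul_right _ _)

end modq2

/-- candidates for the absolute value of the constant coefficient with at least `m` prime factors -/
def cands : List (ℕ × ℕ × ℕ × ℕ) → ℕ → List ℕ
  | [], m => bif Nat.beq m 0 then [1] else []
  | t :: L, m => cands L m ++ (List.range t.2.1).flatMap fun i => (cands L (m - 1)).map fun y => t.1 ^ (i + 1) * y

theorem mem_cands (L : List (ℕ × ℕ × ℕ × ℕ)) (hL : (L.map Prod.fst).Nodup) (hp : ∀ t ∈ L, t.1.Prime) : ∀ x m : ℕ, x ≠ 0 →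
    (∀ p, p.Prime → p ∣ x → p ∈ L.map Prod.fst) → (∀ t ∈ L, padicValNat t.1 x ≤ t.2.1) →
    m ≤ (L.map Prod.fst).countP (fun p => decide (p ∣ x)) → x ∈ cands L m := by
  induction L with
  | nil =>
    intro x m hx h1 _ h3
    have hx1 : x = 1 := by
      by_contra hne
      obtain ⟨p, hp1, hp2⟩ := Nat.exists_prime_and_dvd hne
      simpa using h1 p hp1 hp2
    have hm : m = 0 := by simpa using h3
    subst hx1 hm
    simp [cands]
  | cons t L ih =>
    intro x m hx h1 h2 h3
    rw [List.map_cons, List.nodup_cons] at hL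
    have hpt : t.1.Prime := hp t List.mem_cons_self
    have ih' := ih hL.2 (fun s hs => hp s (List.mem_cons_of_mem _ hs))
    rw [cands, List.mem_append]
    rw [List.map_cons, List.countP_cons] at h3
    have : Fact t.1.Prime := ⟨hpt⟩
    by_cases hd : t.1 ∣ x
    · right
      rw [List.mem_flatMap]
      have hv1 : 1 ≤ padicValNat t.1 x := one_le_padicValNat_of_dvd hx hd
      obtain ⟨y, hy⟩ : t.1 ^ padicValNat t.1 x ∣ x := pow_padicValNat_dvd
      have hy0 : y ≠ 0 := by rintro rfl; simp at hy; exact hx hy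
      have hpow0 : t.1 ^ padicValNat t.1 x ≠ 0 := pow_ne_zero _ hpt.ne_zero
      have hyd : ¬ t.1 ∣ y := by
        intro hdy
        apply pow_succ_padicValNat_not_dvd (p := t.1) hx
        rw [pow_succ]
        exact (mul_dvd_mul_left _ hdy).trans (dvd_of_eq hy.symm)
      have hyx : y ∣ x := ⟨_, by rw [mul_comm]; exact hy⟩
      refine ⟨padicValNat t.1 x - 1, ?_, ?_⟩
      · rw [List.mem_range]
        have := h2 t List.mem_cons_self
        omega
      · rw [List.mem_map]
        refine ⟨y, ?_, ?_⟩
        · apply ih' y (m - 1) hy0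
          · intro p hpp hpd
            have := h1 p hpp (hpd.trans hyx)
            rw [List.map_cons, List.mem_cons] at this
            rcases this with h | h
            · subst h; exact absurd hpd hyd
            · exact h
          · intro s hs
            have hsp := hp s (List.mem_cons_of_mem _ hs)
            have : Fact s.1.Prime := ⟨hsp⟩
            refine le_trans ?_ (h2 s (List.mem_cons_of_mem _ hs))
            obtain ⟨z, hz⟩ := hyx
            have hz0 : z ≠ 0 := by rintro rfl; simp at hz; exact hx hz
            rw [hz, padicValNat.mul hy0 hz0]; omega
          · have he : (L.map Prod.fst).countP (fun p => decide (p ∣ x)) ≤ (L.map Prod.fst).countP (fun p => decide (p ∣ y)) := by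
              apply List.countP_mono_left
              intro p hpm hpx
              rw [decide_eq_true_eq] at hpx ⊢
              obtain ⟨s, hs, rfl⟩ := List.mem_map.1 hpm
              have hsp := hp s (List.mem_cons_of_mem _ hs)
              rw [hy] at hpx
              rcases hsp.dvd_mul.1 hpx with h | h
              · exfalso
                have := (Nat.prime_dvd_prime_iff_eq hsp hpt).1 (hsp.dvd_of_dvd_pow h)
                exact hL.1 (this ▸ hpm)
              · exact h
            have : (if decide (t.1 ∣ x) = true then 1 else 0) ≤ 1 := by split <;> omega
            omega
        · rw [Nat.sub_add_cancel hv1]; exact hy.symm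
    · left
      apply ih' x m hx
      · intro p hpp hpd
        have := h1 p hpp hpd
        rw [List.map_cons, List.mem_cons] at this
        rcases this with h | h
        · subst h; exact absurd hpd hd
        · exact h
      · intro s hs; exact h2 s (List.mem_cons_of_mem _ hs)
      · simpa [hd] using h3

theorem prs_prime {p : ℕ} (h : p ∈ prs) : p.Prime ∧ p % 2 = 1 := by
  simp only [prs, List.mem_cons, List.not_mem_nil, or_false] at h
  rcases h with rfl | rfl | rfl | rfl | rfl | rfl | rfl | rfl | rfl | rfl <;> norm_num

def memb (p : ℕ) : List ℕ → Bool
  | [] => false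
  | a :: l => Nat.beq p a || memb p l

theorem memb_spec {p : ℕ} {l : List ℕ} (h : memb p l = true) : p ∈ l := by
  induction l with
  | nil => simp [memb] at h
  | cons a l ih =>
    rw [memb, Bool.or_eq_true, Nat.beq_eq] at h
    rcases h with h | h
    · rw [h]; exact List.mem_cons_self
    · exact List.mem_cons_of_mem _ (ih h)

/-- validity of the exponent bounds -/
def bndOK (U k : ℕ) (bs : List (ℕ × ℕ × ℕ × ℕ)) : Bool :=
  bs.all (fun t => memb t.1 prs && Nat.blt (t.2.2.1 * k) (t.2.2.2 * (t.2.1 + 1)) &&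
    linOK U t.1 t.2.2.1 t.2.2.2 (t.2.2.2 * (t.2.1 + 1)) (t.2.2.1 * k)) && decide (bs.map Prod.fst = Bof U k) &&
    decide ((bs.map Prod.fst).Nodup)

/-- some prime in the list certifies -/
def anyq (U k x : ℕ) (sgn : Bool) (ok : ℕ → ℕ → Bool) : List ℕ → Bool
  | [] => false
  | q :: l => (memb q prs && Nat.blt 0 (x % q) &&
      (force ((bif sgn then (q - 1) * x else x) % q) fun d => tst U (k - 1) q d (ok q))) || anyq U k x sgn ok l

def certOK (U k m : ℕ) (bs : List (ℕ × ℕ × ℕ × ℕ)) (qs : List ℕ) (sP sN : ℕ) (ok : ℕ → ℕ → Bool) : Bool :=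
  bndOK U k bs && (cands bs m).all fun x => force x fun x =>
    (Nat.beq x sP || anyq U k x true ok qs) && (Nat.beq x sN || anyq U k x false ok qs)

theorem Fac.anyq {U n k : ℕ} {g h : ℤ[X]} (F : Fac (-(U:ℤ)) n k g h) (hk : 1 ≤ k) (sgn : Bool) (ok : ℕ → ℕ → Bool)
    (hs : (sgn = true ∧ g.coeff 0 = (g.coeff 0).natAbs) ∨ (sgn = false ∧ g.coeff 0 = -((g.coeff 0).natAbs:ℤ)))
    (qs : List ℕ) (H : anyq U k (g.coeff 0).natAbs sgn ok qs = true) : ∃ q ∈ qs, ok q (n % q) = true := by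
  induction qs with
  | nil => simp [_root_.anyq] at H
  | cons q l ih =>
    rw [_root_.anyq, Bool.or_eq_true, Bool.and_eq_true, Bool.and_eq_true, Nat.blt_eq, force_eq] at H
    rcases H with ⟨⟨h1, h2⟩, h3⟩ | H
    · refine ⟨q, List.mem_cons_self, ?_⟩
      obtain ⟨hp, hodd⟩ := prs_prime (memb_spec h1)
      have : Fact q.Prime := ⟨hp⟩
      obtain ⟨m, rfl⟩ : ∃ m, k = m + 1 := ⟨k - 1, by omega⟩
      refine F.tst hodd _ (ok q) ?_ ?_ h3
      · generalize (g.coeff 0).natAbs = x at *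
        have hq1 : ((q - 1 : ℕ) : ZMod q) = -1 := by
          rw [Nat.cast_sub hp.one_le]; simp
        rw [← ZMod.intCast_zmod_eq_zero_iff_dvd]
        rcases hs with ⟨rfl, e⟩ | ⟨rfl, e⟩
        · rw [cond_true, e]; push_cast; rw [hq1]; ring
        · rw [cond_false, e]; push_cast; ring
      · rw [Int.natCast_dvd]
        intro hd
        rw [Nat.mod_eq_zero_of_dvd hd] at h2; omega
    · obtain ⟨q', h1, h2⟩ := ih H
      exact ⟨q', List.mem_cons_of_mem _ h1, h2⟩

theorem Fac.cert {U n k m : ℕ} {g h : ℤ[X]} (F : Fac (-(U:ℤ)) n k g h) (hU1 : 2 ≤ U) (hU : U ≤ 18) (hk : 1 ≤ k) (hk2 : k ≤ 16)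
    {bs : List (ℕ × ℕ × ℕ × ℕ)} {qs : List ℕ} {sP sN : ℕ} {ok : ℕ → ℕ → Bool}
    (hm : m ≤ (Bof U k).countP (fun p => decide (p ∣ (g.coeff 0).natAbs)))
    (H : certOK U k m bs qs sP sN ok = true) :
    g.coeff 0 = sP ∨ g.coeff 0 = -(sN:ℤ) ∨ ∃ q ∈ qs, ok q (n % q) = true := by
  rw [certOK, Bool.and_eq_true, bndOK, Bool.and_eq_true, Bool.and_eq_true, decide_eq_true_eq, decide_eq_true_eq] at H
  obtain ⟨⟨⟨h1, h2⟩, h3⟩, h4⟩ := H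
  rw [List.all_eq_true] at h1 h4
  have h5 : ∀ t ∈ bs, (t.1.Prime ∧ t.1 % 2 = 1) ∧ padicValNat t.1 (g.coeff 0).natAbs ≤ t.2.1 := by
    intro t ht
    have := h1 t ht
    rw [Bool.and_eq_true, Bool.and_eq_true, Nat.blt_eq] at this
    obtain ⟨hp, hodd⟩ := prs_prime (memb_spec this.1.1)
    have hf : Fact t.1.Prime := ⟨hp⟩
    exact ⟨⟨hp, hodd⟩, F.exp_le hodd (by omega) (by omega) _ _ _ this.1.2 this.2⟩
  have hmem := mem_cands bs h3 (fun t ht => (h5 t ht).1.1) (g.coeff 0).natAbs m (by simpa using F.g0) (by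
      intro p hp hd
      have : Fact p.Prime := ⟨hp⟩
      rw [h2]
      exact F.mem_Bof hU1 hU hk hk2 (Int.natCast_dvd.2 hd)) (fun t ht => (h5 t ht).2) (by rw [h2]; exact hm)
  have h6 := h4 _ hmem
  rw [force_eq, Bool.and_eq_true, Bool.or_eq_true, Bool.or_eq_true, Nat.beq_eq, Nat.beq_eq] at h6
  rcases Int.natAbs_eq (g.coeff 0) with e | e
  · rcases h6.1 with h7 | h7
    · left; rw [e, h7]
    · right; right
      exact F.anyq hk true ok (Or.inl ⟨rfl, e⟩) qs h7
  · rcases h6.2 with h7 | h7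
    · right; left; rw [e, h7]
    · right; right
      exact F.anyq hk false ok (Or.inr ⟨rfl, e⟩) qs h7

def nok (_ _ : ℕ) : Bool := false

/-- bounds for `k = 1` -/
def bs1 : List (List (ℕ × ℕ × ℕ × ℕ)) := [[], [(3,1,1,1)], [(5,1,1,1)], [(7,1,1,1)], [(3,2,1,1)], [(3,1,1,1),(11,1,1,1)],
  [(13,1,1,1)], [(3,1,1,1),(5,1,1,1)], [(17,1,1,1)], [(19,1,1,1)], [(3,1,1,1),(7,1,1,1)], [(23,1,1,1)], [(5,2,1,1)],
  [(3,3,1,1),(5,1,1,1)], [(3,1,3,2),(29,1,1,1)], [(3,1,1,1),(31,1,1,1)], [(3,1,1,1),(11,1,1,1)]]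

theorem cert1 : ((List.range 17).all fun u => certOK (u + 2) 1 0 (bs1.getD u []) [3,5,7,11,13,17,19,23,29] 0 (2 * u + 1) nok) = true := by
  decide +kernel

/-- bounds for `k = 2` with the special constant terms -/
def bs2 : List (ℕ × ℕ × List (ℕ × ℕ × ℕ × ℕ)) := [
  (5, 0, [(3,1,2,3),(5,1,1,2),(7,1,1,2)]), (8, 0, [(3,1,2,3),(11,1,1,2),(13,1,1,2)]),
  (9, 195, [(3,1,2,3),(5,1,1,2),(13,1,1,2)]), (10, 255, [(3,1,2,3),(5,1,1,2),(17,1,1,2)]),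
  (11, 0, [(3,1,2,3),(17,1,1,2),(19,1,1,2)]), (12, 399, [(3,1,2,3),(7,1,1,2),(19,1,1,2)]),
  (13, 483, [(3,1,2,3),(7,1,1,2),(23,1,1,2)]), (14, 0, [(3,1,2,3),(5,2,1,2),(23,1,1,2)]),
  (16, 0, [(3,3,1,1),(5,1,1,2),(29,1,1,2)]), (17, 0, [(3,2,1,1),(5,1,1,2),(29,1,1,2),(31,1,1,2)]),
  (18, 1023, [(3,2,1,1),(11,1,1,2),(31,1,1,2)])]

theorem cert2 : (bs2.all fun t => certOK t.1 2 3 t.2.2 [3,5,7,11,13,17,19] t.2.1 0 nok) = true := by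
  decide +kernel

theorem cert3 : certOK 18 3 5 [(3,3,1,1),(5,1,1,2),(11,1,1,3),(29,1,1,2),(31,1,1,2)] [7,13,17] 0 0 nok = true := by
  decide +kernel

theorem cert4 : certOK 13 4 6 [(3,2,2,3),(5,1,1,3),(7,1,1,3),(17,1,1,3),(19,1,1,3),(23,1,1,4)] [11] 0 0 nok = true := by
  decide +kernel

def nok2 (n q s : ℕ) : Bool := bif Nat.beq (n % q) s then false else true

theorem certx : (certOK 15 2 0 [(3,3,2,3),(5,2,1,1)] [7,11,13] 0 0 (nok2 16)
    && certOK 16 2 0 [(3,3,1,1),(5,1,1,2),(29,1,1,2)] [7,11,13] 0 0 (nok2 16)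
    && certOK 17 2 0 [(3,2,1,1),(5,1,1,2),(29,1,1,2),(31,1,1,2)] [7,11,13] 0 0 (nok2 16)
    && certOK 17 2 0 [(3,2,1,1),(5,1,1,2),(29,1,1,2),(31,1,1,2)] [7,11,13] 0 0 (nok2 4)) = true := by
  decide +kernel

theorem e3 : ((List.range 17).all fun u => (Nat.beq u 16 && Nat.beq 3 3) || (Nat.beq u 11 && Nat.beq 3 4) || erdOK (u+2) 3 (Bof (u+2) 3)) = true := by decide +kernel
theorem e4 : ((List.range 17).all fun u => (Nat.beq u 16 && Nat.beq 4 3) || (Nat.beq u 11 && Nat.beq 4 4) || erdOK (u+2) 4 (Bof (u+2) 4)) = true := by decide +kernel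
theorem e5 : ((List.range 17).all fun u => (Nat.beq u 16 && Nat.beq 5 3) || (Nat.beq u 11 && Nat.beq 5 4) || erdOK (u+2) 5 (Bof (u+2) 5)) = true := by decide +kernel
theorem e6 : ((List.range 17).all fun u => (Nat.beq u 16 && Nat.beq 6 3) || (Nat.beq u 11 && Nat.beq 6 4) || erdOK (u+2) 6 (Bof (u+2) 6)) = true := by decide +kernel
theorem e7 : ((List.range 17).all fun u => (Nat.beq u 16 && Nat.beq 7 3) || (Nat.beq u 11 && Nat.beq 7 4) || erdOK (u+2) 7 (Bof (u+2) 7)) = true := by decide +kernel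
theorem e8 : ((List.range 17).all fun u => (Nat.beq u 16 && Nat.beq 8 3) || (Nat.beq u 11 && Nat.beq 8 4) || erdOK (u+2) 8 (Bof (u+2) 8)) = true := by decide +kernel
theorem e9 : ((List.range 17).all fun u => (Nat.beq u 16 && Nat.beq 9 3) || (Nat.beq u 11 && Nat.beq 9 4) || erdOK (u+2) 9 (Bof (u+2) 9)) = true := by decide +kernel
theorem e11 : ((List.range 17).all fun u => (Nat.beq u 16 && Nat.beq 11 3) || (Nat.beq u 11 && Nat.beq 11 4) || erdOK (u+2) 11 (Bof (u+2) 11)) = true := by decide +kernel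
theorem e12 : ((List.range 17).all fun u => (Nat.beq u 16 && Nat.beq 12 3) || (Nat.beq u 11 && Nat.beq 12 4) || erdOK (u+2) 12 (Bof (u+2) 12)) = true := by decide +kernel
theorem e13 : ((List.range 17).all fun u => (Nat.beq u 16 && Nat.beq 13 3) || (Nat.beq u 11 && Nat.beq 13 4) || erdOK (u+2) 13 (Bof (u+2) 13)) = true := by decide +kernel
theorem e14 : ((List.range 17).all fun u => (Nat.beq u 16 && Nat.beq 14 3) || (Nat.beq u 11 && Nat.beq 14 4) || erdOK (u+2) 14 (Bof (u+2) 14)) = true := by decide +kernel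
theorem e15 : ((List.range 17).all fun u => (Nat.beq u 16 && Nat.beq 15 3) || (Nat.beq u 11 && Nat.beq 15 4) || erdOK (u+2) 15 (Bof (u+2) 15)) = true := by decide +kernel
theorem e2 : ((List.range 17).all fun u => ((Bof (u+2) 2).sublists.filter fun l => Nat.ble l.length 2).all fun l => erdOK (u+2) 2 l) = true := by decide +kernel
theorem e3' : ((Bof 18 3).sublists.filter fun l => Nat.ble l.length 4).all (fun l => erdOK 18 3 l) = true := by decide +kernel
theorem e4' : ((Bof 13 4).sublists.filter fun l => Nat.ble l.length 5).all (fun l => erdOK 13 4 l) = true := by decide +kernel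
theorem e10 : ((List.range 17).all fun u => (Nat.beq u 16 && Nat.beq 10 3) || (Nat.beq u 11 && Nat.beq 10 4) || erdOK (u+2) 10 (Bof (u+2) 10)) = true := by decide +kernel
theorem e16 : ((List.range 17).all fun u => (Nat.beq u 16 && Nat.beq 16 3) || (Nat.beq u 11 && Nat.beq 16 4) || erdOK (u+2) 16 (Bof (u+2) 16)) = true := by decide +kernel

theorem Bof_sub (U k : ℕ) : (Bof U k).Sublist prs := by
  have h : prs = (List.range 10).map fun i => prs.getD i 0 := by decide +kernel
  conv_rhs => rw [h]
  unfold Bof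
  exact List.filter_sublist.map _

theorem prs_nodup : (2 :: prs).Nodup := by decide +kernel

theorem sub_nodup {S : List ℕ} (h : S.Sublist prs) : (2 :: S).Nodup := prs_nodup.sublist (h.cons_cons 2)

theorem sub_prime {S : List ℕ} (h : S.Sublist prs) : ∀ p ∈ 2 :: S, p.Prime := by
  intro p hp
  rcases List.mem_cons.1 hp with rfl | hp
  · exact Nat.prime_two
  · exact (prs_prime (h.subset hp)).1

theorem Fac.erd_full {U n k : ℕ} {g h : ℤ[X]} (F : Fac (-(U:ℤ)) n k g h) (hU1 : 2 ≤ U) (hU : U ≤ 18) (hk : 1 ≤ k)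
    (hk2 : k ≤ 16) (hn : 2 * k ≤ n) (H : erdOK U k (Bof U k) = true) : exc U n k = true := by
  apply F.erd_contra (by omega) (by omega) hk (by omega) hn (Bof U k) (sub_nodup (Bof_sub U k)) (sub_prime (Bof_sub U k)) _ H
  intro p hp hd
  haveI := Fact.mk hp
  exact F.mem_Bof hU1 hU hk hk2 hd

theorem Fac.erd_part {U n k m : ℕ} {g h : ℤ[X]} (F : Fac (-(U:ℤ)) n k g h) (hU1 : 2 ≤ U) (hU : U ≤ 18) (hk : 1 ≤ k)
    (hk2 : k ≤ 16) (hn : 2 * k ≤ n)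
    (H : ((Bof U k).sublists.filter fun l => Nat.ble l.length m).all (fun l => erdOK U k l) = true) :
    exc U n k = true ∨ m + 1 ≤ (Bof U k).countP (fun p => decide (p ∣ (g.coeff 0).natAbs)) := by
  by_cases hc : m + 1 ≤ (Bof U k).countP (fun p => decide (p ∣ (g.coeff 0).natAbs))
  · exact Or.inr hc
  · left
    set S := (Bof U k).filter (fun p => decide (p ∣ (g.coeff 0).natAbs)) with hS
    have hsub : S.Sublist (Bof U k) := List.filter_sublist
    have hl2 : (Bof U k).countP (fun p => decide (p ∣ (g.coeff 0).natAbs)) = S.length := List.countP_eq_length_filter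
    have hlen : S.length ≤ m := by rw [hl2] at hc; omega
    rw [List.all_eq_true] at H
    have h1 := H S (List.mem_filter.2 ⟨List.mem_sublists.2 hsub, by simpa using hlen⟩)
    have hs2 := hsub.trans (Bof_sub U k)
    apply F.erd_contra (by omega) (by omega) hk (by omega) hn S (sub_nodup hs2) (sub_prime hs2) _ h1
    intro p hp hd
    haveI := Fact.mk hp
    rw [hS, List.mem_filter]
    exact ⟨F.mem_Bof hU1 hU hk hk2 hd, by simpa using Int.natCast_dvd.1 hd⟩

theorem Fac.cert_nok {U n k m : ℕ} {g h : ℤ[X]} (F : Fac (-(U:ℤ)) n k g h) (hU1 : 2 ≤ U) (hU : U ≤ 18) (hk : 1 ≤ k) (hk2 : k ≤ 16)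
    {bs : List (ℕ × ℕ × ℕ × ℕ)} {qs : List ℕ} {sP sN : ℕ} {ok : ℕ → ℕ → Bool}
    (hm : m ≤ (Bof U k).countP (fun p => decide (p ∣ (g.coeff 0).natAbs)))
    (hok : ∀ q, ok q (n % q) = false)
    (H : certOK U k m bs qs sP sN ok = true) : (g.coeff 0 = sP ∧ sP ≠ 0) ∨ (g.coeff 0 = -(sN:ℤ) ∧ sN ≠ 0) := by
  have h0 := F.g0
  rcases F.cert hU1 hU hk hk2 hm H with h1 | h1 | ⟨q, _, h1⟩
  · left; refine ⟨h1, ?_⟩; rintro rfl; exact h0 (by simpa using h1)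
  · right; refine ⟨h1, ?_⟩; rintro rfl; exact h0 (by simpa using h1)
  · rw [hok] at h1; cases h1

theorem exc_k {U n k : ℕ} (hk : k ≠ 2) : exc U n k = false := by
  rw [exc, beq_f hk]; rfl

theorem Fac.mid {U n k : ℕ} {g h : ℤ[X]} (F : Fac (-(U:ℤ)) n k g h) (hU1 : 2 ≤ U) (hU : U ≤ 18) (hk : 3 ≤ k)
    (hk2 : k ≤ 16) (hn : 2 * k ≤ n) : False := by
  have hex : exc U n k = false := exc_k (by omega)
  by_cases hA : U = 18 ∧ k = 3
  · obtain ⟨rfl, rfl⟩ := hA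
    rcases F.erd_part hU1 hU (by omega) hk2 hn e3' with h1 | h1
    · rw [hex] at h1; cases h1
    · rcases F.cert_nok hU1 hU (by omega) hk2 h1 (fun _ => rfl) cert3 with h2 | h2 <;> exact h2.2 rfl
  by_cases hB : U = 13 ∧ k = 4
  · obtain ⟨rfl, rfl⟩ := hB
    rcases F.erd_part hU1 hU (by omega) hk2 hn e4' with h1 | h1
    · rw [hex] at h1; cases h1
    · rcases F.cert_nok hU1 hU (by omega) hk2 h1 (fun _ => rfl) cert4 with h2 | h2 <;> exact h2.2 rfl
  have hE : erdOK U k (Bof U k) = true := by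
    have key : ((List.range 17).all fun u => (Nat.beq u 16 && Nat.beq k 3) || (Nat.beq u 11 && Nat.beq k 4) ||
        erdOK (u+2) k (Bof (u+2) k)) = true := by
      interval_cases k
      exacts [e3, e4, e5, e6, e7, e8, e9, e10, e11, e12, e13, e14, e15, e16]
    obtain ⟨u, rfl⟩ : ∃ u, U = u + 2 := ⟨U - 2, by omega⟩
    have h1 := List.all_eq_true.1 key u (List.mem_range.2 (by omega))
    rw [Bool.or_eq_true, Bool.or_eq_true, Bool.and_eq_true, Bool.and_eq_true, Nat.beq_eq, Nat.beq_eq, Nat.beq_eq, Nat.beq_eq] at h1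
    rcases h1 with (h1 | h1) | h1
    · omega
    · omega
    · exact h1
  have := F.erd_full hU1 hU (by omega) hk2 hn hE
  rw [hex] at this; cases this

theorem short2 : ([2,3,4,6,7,15].all fun U => Nat.ble (Bof U 2).length 2) = true := by decide +kernel

theorem Fac.two {U n : ℕ} {g h : ℤ[X]} (F : Fac (-(U:ℤ)) n 2 g h) (hU1 : 2 ≤ U) (hU : U ≤ 18) (hn : 4 ≤ n) :
    (U = 9 ∧ g.coeff 0 = 195) ∨ (U = 10 ∧ g.coeff 0 = 255) ∨ (U = 12 ∧ g.coeff 0 = 399) ∨ (U = 13 ∧ g.coeff 0 = 483) ∨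
      (U = 18 ∧ g.coeff 0 = 1023) := by
  have hE : ((Bof U 2).sublists.filter fun l => Nat.ble l.length 2).all (fun l => erdOK U 2 l) = true := by
    obtain ⟨u, rfl⟩ : ∃ u, U = u + 2 := ⟨U - 2, by omega⟩
    exact List.all_eq_true.1 e2 u (List.mem_range.2 (by omega))
  rcases F.erd_part hU1 hU (by omega) (by omega) (by omega) hE with h1 | h1
  · exfalso
    have hcx := certx
    rw [Bool.and_eq_true, Bool.and_eq_true, Bool.and_eq_true] at hcx
    obtain ⟨⟨⟨c1, c2⟩, c3⟩, c4⟩ := hcx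
    have hok : ∀ n q, nok2 n q (n % q) = false := by
      intro n q; rw [nok2, beq_t rfl]; rfl
    simp only [exc, Bool.and_eq_true, Bool.or_eq_true, Nat.beq_eq] at h1
    obtain ⟨-, ⟨rfl, (rfl | rfl) | rfl⟩ | ⟨rfl, rfl⟩⟩ := h1
    · rcases F.cert_nok hU1 hU (by omega) (by omega) (Nat.zero_le _) (hok 16) c1 with h2 | h2 <;> exact h2.2 rfl
    · rcases F.cert_nok hU1 hU (by omega) (by omega) (Nat.zero_le _) (hok 16) c2 with h2 | h2 <;> exact h2.2 rfl
    · rcases F.cert_nok hU1 hU (by omega) (by omega) (Nat.zero_le _) (hok 16) c3 with h2 | h2 <;> exact h2.2 rfl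
    · rcases F.cert_nok hU1 hU (by omega) (by omega) (Nat.zero_le _) (hok 4) c4 with h2 | h2 <;> exact h2.2 rfl
  · have hc2 := List.all_eq_true.1 cert2
    have hno : U ∉ [2,3,4,6,7,15] := by
      intro hm
      have h2 := List.all_eq_true.1 short2 U hm
      rw [Nat.ble_eq] at h2
      have := List.countP_le_length (p := fun p => decide (p ∣ (g.coeff 0).natAbs)) (l := Bof U 2)
      omega
    have key : ∀ t ∈ bs2, t.1 = U → g.coeff 0 = t.2.1 ∧ t.2.1 ≠ 0 := by
      rintro t ht rfl
      rcases F.cert_nok hU1 hU (by omega) (by omega) h1 (fun _ => rfl) (hc2 t ht) with h2 | h2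
      · exact h2
      · exact absurd rfl h2.2
    simp only [bs2, List.forall_mem_cons] at key
    obtain ⟨k1, k2, k3, k4, k5, k6, k7, k8, k9, k10, k11, -⟩ := key
    simp at hno
    interval_cases U
    all_goals first
      | exact absurd rfl (k1 rfl).2
      | exact absurd rfl (k2 rfl).2
      | exact absurd rfl (k5 rfl).2
      | exact absurd rfl (k8 rfl).2
      | exact absurd rfl (k9 rfl).2
      | exact absurd rfl (k10 rfl).2
      | (have := (k3 rfl).1; norm_num at this ⊢; exact this)
      | (have := (k4 rfl).1; norm_num at this ⊢; exact this)
      | (have := (k6 rfl).1; norm_num at this ⊢; exact this)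
      | (have := (k7 rfl).1; norm_num at this ⊢; exact this)
      | (have := (k11 rfl).1; norm_num at this ⊢; exact this)
      | (exfalso; omega)

theorem GG_eval_rec (u : ℤ) (n : ℕ) (r : ℤ) : (GG u (n+2)).eval r =
    (4 * ((n:ℤ) + 2) - 1 + 2 * u + r) * (GG u (n+1)).eval r - 2 * ((n:ℤ)+1) * cc u (n+1) * (GG u n).eval r := by
  rw [GG_rec]
  simp only [eval_sub, eval_mul, eval_add, eval_C, eval_X]

theorem y_pos (U : ℕ) (hU : 2 ≤ U) (n : ℕ) :
    0 ≤ (GG (-(U:ℤ)) (n+1)).eval (2*(U:ℤ)-3) ∧ 0 < (GG (-(U:ℤ)) (n+2)).eval (2*(U:ℤ)-3) ∧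
      cc (-(U:ℤ)) (n+2) * (GG (-(U:ℤ)) (n+1)).eval (2*(U:ℤ)-3) ≤ (GG (-(U:ℤ)) (n+2)).eval (2*(U:ℤ)-3) := by
  have h1 : (GG (-(U:ℤ)) 1).eval (2*(U:ℤ)-3) = 0 := by
    rw [GG_one]; simp [cc]; ring
  induction n with
  | zero =>
    have h2 := GG_eval_rec (-(U:ℤ)) 0 (2*(U:ℤ)-3)
    simp only [zero_add] at *
    rw [h1, GG_zero, eval_one] at h2
    rw [h1, h2]
    unfold cc
    push_cast
    have hU2 : (2:ℤ) ≤ U := by exact_mod_cast hU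
    refine ⟨by norm_num, ?_, ?_⟩ <;> nlinarith
  | succ n ih =>
    obtain ⟨i1, i2, i3⟩ := ih
    have h2 := GG_eval_rec (-(U:ℤ)) (n+1) (2*(U:ℤ)-3)
    have e : n + 1 + 1 = n + 2 := rfl
    have e2 : n + 1 + 2 = n + 3 := rfl
    rw [e, e2] at h2 ⊢
    set a := (GG (-(U:ℤ)) (n+1)).eval (2*(U:ℤ)-3)
    set b := (GG (-(U:ℤ)) (n+2)).eval (2*(U:ℤ)-3)
    set c := cc (-(U:ℤ)) (n+2) with hc
    have hb : 2 * ((n:ℤ) + 2) * b ≤ (GG (-(U:ℤ)) (n+3)).eval (2*(U:ℤ)-3) := by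
      rw [h2]; push_cast
      nlinarith [mul_le_mul_of_nonneg_left i3 (show (0:ℤ) ≤ 2 * ((n:ℤ)+2) by positivity)]
    refine ⟨i2.le, lt_of_lt_of_le (by positivity) hb, le_trans ?_ hb⟩
    apply mul_le_mul_of_nonneg_right _ i2.le
    unfold cc; push_cast
    have : (2:ℤ) ≤ U := by exact_mod_cast hU
    linarith

theorem Fac.one {U n : ℕ} {g h : ℤ[X]} (F : Fac (-(U:ℤ)) n 1 g h) (hU1 : 2 ≤ U) (hU : U ≤ 18) (hn : 2 ≤ n) : False := by
  obtain ⟨u, hu⟩ : ∃ u, U = u + 2 := ⟨U - 2, by omega⟩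
  have hc := List.all_eq_true.1 cert1 u (List.mem_range.2 (by omega))
  rw [← hu] at hc
  have hg0 : g.coeff 0 = -(2*(U:ℤ)-3) := by
    rcases F.cert_nok hU1 hU le_rfl (by omega) (Nat.zero_le _) (fun _ => rfl) hc with h2 | h2
    · exact absurd rfl h2.2
    · rw [h2.1, hu]; push_cast; ring
  have hg : g.eval (2*(U:ℤ)-3) = 0 := by
    have hl : g.coeff 1 = 1 := by
      have := F.mg.coeff_natDegree
      rwa [F.deg] at this
    rw [Polynomial.eval_eq_sum_range, F.deg, Finset.sum_range_succ, Finset.sum_range_one, hl, hg0]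
    ring
  obtain ⟨m, rfl⟩ : ∃ m, n = m + 2 := ⟨n - 2, by omega⟩
  have := (y_pos U hU1 m).2.1
  rw [← F.eq, eval_mul, hg, zero_mul] at this
  exact lt_irrefl _ this

theorem Fac.big {U n k : ℕ} {g h : ℤ[X]} (F : Fac (-(U:ℤ)) n k g h) (hU1 : 2 ≤ U) (hU : U ≤ 18) (hk : 17 ≤ k)
    (hn : 2 * k ≤ n) : False := by
  obtain ⟨c, hc⟩ : ∃ c : ℕ, c + 2 * k + 2 * U = 2 * n + 3 := ⟨2 * n + 3 - 2 * k - 2 * U, by omega⟩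
  by_cases hx : k = 17 ∧ c ≤ 3
  · obtain ⟨rfl, hx⟩ := hx
    have hs := surv17
    rw [Bool.and_eq_true, Bool.and_eq_true] at hs
    obtain ⟨⟨s1, s2⟩, s3⟩ := hs
    have : (U = 18 ∧ n = 34) ∨ (U = 18 ∧ n = 35) ∨ (U = 17 ∧ n = 34) := by omega
    rcases this with ⟨rfl, rfl⟩ | ⟨rfl, rfl⟩ | ⟨rfl, rfl⟩
    · exact F.surv_contra s1
    · exact F.surv_contra s2
    · exact F.surv_contra s3
  · apply win_all k c hk (by omega) (by omega) hx
    intro i hi p hp hd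
    haveI := Fact.mk hp
    have hodd : p % 2 = 1 := by
      rcases hp.eq_two_or_odd with h2 | h2
      · subst h2; omega
      · exact h2
    by_contra hlt
    have hg : (p:ℤ) ∣ g.coeff 0 := by
      apply F.dvd_g0 hodd (l := k - 1 - i) (by omega)
      right
      have : cc (-(U:ℤ)) (n - (k - 1 - i)) = ((c + 2 * i : ℕ) : ℤ) := by
        unfold cc; push_cast; omega
      rw [this]
      exact_mod_cast hd
    exact F.large_prime hodd (by omega) (by omega) (by omega) (by omega) hg

/-- the arithmetic end of the exceptional `k = 2` cases -/
theorem smooth_contra {n p0 q h q1 h1 : ℕ} (hq : (1 : ZMod q) ≠ -1) (hq1 : (1 : ZMod q1) ≠ -1)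
    (h2 : (2 : ZMod q) ^ h = -1) (h3 : (3 : ZMod q) ^ h = 1) (hp0 : (p0 : ZMod q1) ^ h1 = -1)
    (hp2 : p0 % 2 = 1) (hp3 : p0 % 3 ≠ 0) (hn : 4 ≤ n)
    (hnq : (n : ZMod q) = 2) (hnq1 : (n : ZMod q1) = 2)
    (hs : ∀ p, p.Prime → p ∣ n → p = 2 ∨ p = 3) (hs1 : ∀ p, p.Prime → p ∣ n - 1 → p = 2 ∨ p = 3 ∨ p = p0) : False := by
  have hy : ∀ y, n - 1 = p0 ^ y → Even y := by
    intro y hy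
    by_contra ho
    rw [Nat.not_even_iff_odd] at ho
    have e : ((n - 1 : ℕ) : ZMod q1) = 1 := by
      rw [Nat.cast_sub (by omega), hnq1]; norm_num
    rw [hy, Nat.cast_pow] at e
    apply hq1
    calc (1 : ZMod q1) = ((p0 : ZMod q1) ^ y) ^ h1 := by rw [e, one_pow]
      _ = ((p0 : ZMod q1) ^ h1) ^ y := by rw [← pow_mul, ← pow_mul, mul_comm]
      _ = -1 := by rw [hp0, ho.neg_one_pow]
  rcases Nat.even_or_odd n with he | ho
  · have ho1 : ¬ 2 ∣ n - 1 := by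
      rw [Nat.even_iff] at he; omega
    have hpp : ¬ 3 ∣ n - 1 → ∃ z, n - 1 = z ^ 2 ∧ z % 2 = 1 ∧ z % 3 ≠ 0 := by
      intro h30
      have hpw : n - 1 = p0 ^ (n - 1).primeFactorsList.length := by
        apply Nat.eq_prime_pow_of_unique_prime_dvd (by omega)
        intro d hd hdd
        rcases hs1 d hd hdd with rfl | rfl | rfl
        · exact absurd hdd ho1
        · exact absurd hdd h30
        · rfl
      obtain ⟨z, hz⟩ := hy _ hpw
      rw [hz] at hpw
      refine ⟨p0 ^ z, by rw [hpw]; ring, ?_, ?_⟩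
      · rw [Nat.pow_mod, hp2]; simp
      · intro h0
        exact hp3 (Nat.mod_eq_zero_of_dvd (Nat.prime_three.dvd_of_dvd_pow (Nat.dvd_of_mod_eq_zero h0)))
    by_cases h30 : 3 ∣ n
    · obtain ⟨z, hz, z2, z3⟩ := hpp (by omega)
      have : (z ^ 2) % 3 = 1 := by
        have : z % 3 = 1 ∨ z % 3 = 2 := by omega
        rcases this with h | h <;> simp [Nat.pow_mod, h]
      omega
    · have hpw : n = 2 ^ n.primeFactorsList.length := by
        apply Nat.eq_prime_pow_of_unique_prime_dvd (by omega)
        intro d hd hdd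
        rcases hs d hd hdd with rfl | rfl
        · rfl
        · exact absurd hdd h30
      set a := n.primeFactorsList.length
      have hao : Odd a := by
        by_contra hh
        rw [Nat.not_odd_iff_even] at hh
        have e := hnq
        rw [hpw, Nat.cast_pow, Nat.cast_ofNat] at e
        apply hq
        calc (1 : ZMod q) = ((2 : ZMod q) ^ h) ^ a := by rw [h2, hh.neg_one_pow]
          _ = ((2 : ZMod q) ^ a) ^ h := by rw [← pow_mul, ← pow_mul, mul_comm]
          _ = -1 := by rw [e, h2]
      obtain ⟨b, hb⟩ := hao
      have hn3 : n % 3 = 2 := by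
        rw [hpw, hb, pow_succ, pow_mul, Nat.mul_mod, Nat.pow_mod]
        norm_num
      have hn4 : n % 4 = 0 := by
        rcases b with _ | b
        · rw [hb] at hpw; norm_num at hpw; omega
        · rw [hpw, hb, show 2 * (b + 1) + 1 = 2 + (2 * b + 1) by ring, pow_add]; norm_num
      obtain ⟨z, hz, z2, z3⟩ := hpp (by omega)
      have : (z ^ 2) % 4 = 1 := by
        have : z % 4 = 1 ∨ z % 4 = 3 := by omega
        rcases this with h | h <;> simp [Nat.pow_mod, h]
      omega
  · have hpw : n = 3 ^ n.primeFactorsList.length := by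
      apply Nat.eq_prime_pow_of_unique_prime_dvd (by omega)
      intro d hd hdd
      rcases hs d hd hdd with rfl | rfl
      · rw [Nat.odd_iff] at ho; omega
      · rfl
    set a := n.primeFactorsList.length
    have e := hnq
    rw [hpw, Nat.cast_pow, Nat.cast_ofNat] at e
    apply hq
    calc (1 : ZMod q) = ((3 : ZMod q) ^ h) ^ a := by rw [h3, one_pow]
      _ = ((3 : ZMod q) ^ a) ^ h := by rw [← pow_mul, ← pow_mul, mul_comm]
      _ = -1 := by rw [e, h2]

def spOK (U p v1 : ℕ) : Bool :=
  linOK U p 1 3 20 0 && ((List.range 41).all fun j => Nat.blt j 3 || Nat.blt (2 * vSc U p j) j) &&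
    Nat.ble (vSc U p 1) v1 && Nat.ble (vSc U p 2) 1

theorem Fac.sp {U n p v1 : ℕ} [hp : Fact p.Prime] {g h : ℤ[X]} (F : Fac (-(U:ℤ)) n 2 g h) (hodd : p % 2 = 1)
    (hU1 : 1 ≤ U) (hU : U ≤ 50) (hn : 4 ≤ n) (H : spOK U p v1 = true) (hv : p ∣ n ∧ v1 ≤ 1 ∨ p ∣ n - 1 ∧ v1 = 0) :
    ¬ (p:ℤ) ∣ g.coeff 0 := by
  simp only [spOK, Bool.and_eq_true, Nat.ble_eq, List.all_eq_true, Bool.or_eq_true, Nat.blt_eq, List.mem_range] at H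
  obtain ⟨⟨⟨H1, H2⟩, H3⟩, H4⟩ := H
  apply F.not_dvd' (by omega)
  intro j hj hjn
  have hvs : ∀ j ≤ 1000, vSc U p j = vS (-(U:ℤ)) p j := fun j hj => vSc_eq U j (by omega) hj
  rw [hvs 1 (by omega)] at H3
  rw [hvs 2 (by omega)] at H4
  have hpos : ∀ m : ℕ, m ≠ 0 → p ∣ m → 1 ≤ padicValNat p m := fun m h0 hd => one_le_padicValNat_of_dvd h0 hd
  rcases Nat.lt_or_ge j 3 with h3 | h3
  · have : j = 1 ∨ j = 2 := by omega
    rcases this with rfl | rfl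
    · rw [Nat.choose_one_right]
      rcases hv with ⟨h1, h2⟩ | ⟨h1, h2⟩
      · have := hpos n (by omega) h1; omega
      · omega
    · have hc : 1 ≤ padicValNat p (n.choose 2) := by
        apply hpos _ (Nat.choose_pos (by omega)).ne'
        have hd : p ∣ 2 * n.choose 2 := by
          rw [Nat.choose_two_right, Nat.mul_div_cancel' (Nat.even_mul_pred_self n).two_dvd]
          rcases hv with ⟨h1, _⟩ | ⟨h1, _⟩
          · exact h1.mul_right _
          · exact h1.mul_left _
        rcases hp.out.dvd_mul.1 hd with h1 | h1
        · rw [Nat.prime_dvd_prime_iff_eq hp.out Nat.prime_two] at h1; omega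
        · exact h1
      omega
  · rcases Nat.lt_or_ge j 41 with h4 | h4
    · have := H2 j h4
      rw [hvs j (by omega)] at this
      omega
    · have := linOK_spec hodd U 1 3 20 0 hU1 hU H1 j hj
      omega

def modOK (U q c : ℕ) : Bool := tst U 1 q ((q - 1) * c % q) (fun s => Nat.beq s 2)

theorem Fac.mod2 {q : ℕ} [hq : Fact q.Prime] {U n c : ℕ} {g h : ℤ[X]} (F : Fac (-(U:ℤ)) n 2 g h) (hodd : q % 2 = 1)
    (hc : g.coeff 0 = c) (hcq : ¬ q ∣ c) (H : modOK U q c = true) : (n : ZMod q) = 2 := by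
  have h1 := F.tst hodd ((q - 1) * c % q) (fun s => Nat.beq s 2) (by
    rw [hc]
    have hq1 : 1 ≤ q := hq.out.one_lt.le
    have : q ∣ c + (q - 1) * c % q := by
      rw [Nat.dvd_iff_mod_eq_zero, Nat.add_mod_mod]
      have : c + (q - 1) * c = q * c := by
        obtain ⟨r, rfl⟩ : ∃ r, q = r + 1 := ⟨q - 1, by omega⟩
        rw [Nat.add_sub_cancel]; ring
      rw [this, Nat.mul_mod_right]
    exact_mod_cast this) (by rw [hc]; exact_mod_cast hcq) H
  have h2 : n % q = 2 := Nat.eq_of_beq_eq_true h1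
  rw [← ZMod.natCast_mod, h2]; rfl

theorem Fac.two_contra {U n c p0 p2 q h' q1 h1 : ℕ} [Fact p0.Prime] [Fact p2.Prime] [Fact q.Prime] [Fact q1.Prime]
    {g h : ℤ[X]} (F : Fac (-(U:ℤ)) n 2 g h) (hU1 : 1 ≤ U) (hU : U ≤ 50) (hn : 4 ≤ n)
    (hc : g.coeff 0 = c) (hcf : c = 3 * p0 * p2) (hp0o : p0 % 2 = 1) (hp2o : p2 % 2 = 1) (hp03 : p0 % 3 ≠ 0)
    (hqo : q % 2 = 1) (hq1o : q1 % 2 = 1) (hcq : ¬ q ∣ c) (hcq1 : ¬ q1 ∣ c)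
    (t : modOK U q c = true)
    (t1 : modOK U q1 c = true)
    (s0 : spOK U p0 1 = true) (s2 : spOK U p2 0 = true)
    (hq : (1 : ZMod q) ≠ -1) (hq1 : (1 : ZMod q1) ≠ -1)
    (h2 : (2 : ZMod q) ^ h' = -1) (h3 : (3 : ZMod q) ^ h' = 1) (hp0 : (p0 : ZMod q1) ^ h1 = -1) : False := by
  have hd0 : (p0:ℤ) ∣ g.coeff 0 := by
    rw [hc, hcf]; exact_mod_cast Dvd.intro_left (3 * p2) (by ring)
  have hd2 : (p2:ℤ) ∣ g.coeff 0 := by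
    rw [hc, hcf]; exact_mod_cast Dvd.intro_left (3 * p0) (by ring)
  have a0 : ¬ p0 ∣ n := fun h => F.sp hp0o hU1 hU hn s0 (Or.inl ⟨h, le_rfl⟩) hd0
  have a2 : ¬ p2 ∣ n := fun h => F.sp hp2o hU1 hU hn s2 (Or.inl ⟨h, by omega⟩) hd2
  have a3 : ¬ p2 ∣ n - 1 := fun h => F.sp hp2o hU1 hU hn s2 (Or.inr ⟨h, rfl⟩) hd2
  have key : ∀ p, p.Prime → ∀ l < 2, p ∣ n - l → p = 2 ∨ p = 3 ∨ p = p0 ∨ p = p2 := by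
    intro p hp l hl hd
    rcases hp.eq_two_or_odd with h2 | ho
    · exact Or.inl h2
    right
    haveI := Fact.mk hp
    have hg := F.dvd_g0 ho hl (Or.inl hd)
    rw [hc, Int.natCast_dvd_natCast, hcf, hp.dvd_mul, hp.dvd_mul, Nat.prime_dvd_prime_iff_eq hp Nat.prime_three,
      Nat.prime_dvd_prime_iff_eq hp Fact.out, Nat.prime_dvd_prime_iff_eq hp Fact.out] at hg
    tauto
  apply smooth_contra hq hq1 h2 h3 hp0 hp0o hp03 hn (F.mod2 hqo hc hcq t) (F.mod2 hq1o hc hcq1 t1)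
  · intro p hp hd
    rcases key p hp 0 (by omega) hd with h | h | rfl | rfl
    · exact Or.inl h
    · exact Or.inr h
    · exact absurd hd a0
    · exact absurd hd a2
  · intro p hp hd
    rcases key p hp 1 (by omega) hd with h | h | h | rfl
    · exact Or.inl h
    · exact Or.inr (Or.inl h)
    · exact Or.inr (Or.inr h)
    · exact absurd hd a3

instance fact_prime_7 : Fact (Nat.Prime 7) := ⟨by norm_num⟩
instance fact_prime_11 : Fact (Nat.Prime 11) := ⟨by norm_num⟩
instance fact_prime_13 : Fact (Nat.Prime 13) := ⟨by norm_num⟩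
instance fact_prime_17 : Fact (Nat.Prime 17) := ⟨by norm_num⟩
instance fact_prime_19 : Fact (Nat.Prime 19) := ⟨by norm_num⟩
instance fact_prime_23 : Fact (Nat.Prime 23) := ⟨by norm_num⟩
instance fact_prime_31 : Fact (Nat.Prime 31) := ⟨by norm_num⟩
instance fact_prime_5 : Fact (Nat.Prime 5) := ⟨by norm_num⟩

theorem Fac.two_false {U n : ℕ} {g h : ℤ[X]} (F : Fac (-(U:ℤ)) n 2 g h) (hU1 : 2 ≤ U) (hU : U ≤ 18) (hn : 4 ≤ n) : False := by
  rcases F.two hU1 hU hn with ⟨rfl, hc⟩ | ⟨rfl, hc⟩ | ⟨rfl, hc⟩ | ⟨rfl, hc⟩ | ⟨rfl, hc⟩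
  · exact F.two_contra (c := 195) (p0 := 5) (p2 := 13) (q := 11) (h' := 5) (q1 := 7) (h1 := 3) (by omega) (by omega) hn hc
      (by norm_num) (by norm_num) (by norm_num) (by norm_num) (by norm_num) (by norm_num) (by norm_num) (by norm_num)
      (by decide +kernel) (by decide +kernel) (by decide +kernel) (by decide +kernel) (by decide) (by decide) (by decide) (by decide) (by decide)
  · exact F.two_contra (c := 255) (p0 := 17) (p2 := 5) (q := 11) (h' := 5) (q1 := 11) (h1 := 5) (by omega) (by omega) hn hc
      (by norm_num) (by norm_num) (by norm_num) (by norm_num) (by norm_num) (by norm_num) (by norm_num) (by norm_num)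
      (by decide +kernel) (by decide +kernel) (by decide +kernel) (by decide +kernel) (by decide) (by decide) (by decide) (by decide) (by decide)
  · exact F.two_contra (c := 399) (p0 := 7) (p2 := 19) (q := 11) (h' := 5) (q1 := 11) (h1 := 5) (by omega) (by omega) hn hc
      (by norm_num) (by norm_num) (by norm_num) (by norm_num) (by norm_num) (by norm_num) (by norm_num) (by norm_num)
      (by decide +kernel) (by decide +kernel) (by decide +kernel) (by decide +kernel) (by decide) (by decide) (by decide) (by decide) (by decide)
  · exact F.two_contra (c := 483) (p0 := 23) (p2 := 7) (q := 11) (h' := 5) (q1 := 5) (h1 := 2) (by omega) (by omega) hn hc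
      (by norm_num) (by norm_num) (by norm_num) (by norm_num) (by norm_num) (by norm_num) (by norm_num) (by norm_num)
      (by decide +kernel) (by decide +kernel) (by decide +kernel) (by decide +kernel) (by decide) (by decide) (by decide) (by decide) (by decide)
  · exact F.two_contra (c := 1023) (p0 := 11) (p2 := 31) (q := 13) (h' := 6) (q1 := 13) (h1 := 6) (by omega) (by omega) hn hc
      (by norm_num) (by norm_num) (by norm_num) (by norm_num) (by norm_num) (by norm_num) (by norm_num) (by norm_num)
      (by decide +kernel) (by decide +kernel) (by decide +kernel) (by decide +kernel) (by decide) (by decide) (by decide) (by decide) (by decide)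

theorem Fac.false {U n k : ℕ} {g h : ℤ[X]} (F : Fac (-(U:ℤ)) n k g h) (hU1 : 2 ≤ U) (hU : U ≤ 18) (hk : 1 ≤ k)
    (hn : 2 * k ≤ n) : False := by
  have : k = 1 ∨ k = 2 ∨ (3 ≤ k ∧ k ≤ 16) ∨ 17 ≤ k := by omega
  rcases this with rfl | rfl | ⟨h1, h2⟩ | h1
  · exact F.one hU1 hU (by omega)
  · exact F.two_false hU1 hU (by omega)
  · exact F.mid hU1 hU h1 h2 hn
  · exact F.big hU1 hU h1 hn

theorem laguerre_irr (u : ℤ) (hu1 : -18 ≤ u) (hu2 : u ≤ -2) (n : ℕ) (hn : 1 ≤ n) :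
    Irreducible (laguerre n u) := by
  obtain ⟨U, rfl⟩ : ∃ U : ℕ, u = -(U:ℤ) := ⟨u.natAbs, by omega⟩
  apply laguerre_irreducible_of
  apply GG_irreducible_of n hn
  intro k g h hk hkn F
  exact F.false (by omega) (by omega) hk hkn

/-- For every integer `-18 ≤ u ≤ -2` and every `n ≥ 1`, the generalised Laguerre polynomial
`L_n^{(u+1/2)}(x)` is irreducible over `ℚ`. -/
theorem laguerre_irreducible (u : ℤ) (hu1 : -18 ≤ u) (hu2 : u ≤ -2) (n : ℕ) (hn : 1 ≤ n) :
    Irreducible (laguerre n u) :=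
  laguerre_irr u hu1 hu2 n hn
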